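/- arXiv:2109.09848 — 3 statements merged into one kernel-verified Lean document; each statement's English description precedes it below -/
import Mathlib

section
/- Let K be any imaginary quadratic number field with odd class number. Then the counting function a_K(n) (the number of quadratic extensions L/K inside a fixed algebraic closure with absolute discriminant at most n) satisfies a_K(n) = C·n + o(n) as n → ∞, where C = 𝔡_K^{-5/2} · π · h_K/(w_K · ζ_K(2)) · ∏_{𝔭 | 2} g_𝔭(1)/(1 + N(𝔭)^{-1}); here w_K is the number of roots of unity in K, the product is over the prime ideals 𝔭 of 𝓞_K above 2, and g_𝔭(s) = 1 + 2^{-2s} + 2·2^{-3s} if 2 is split in K, g_𝔭(s) = 1 + 3·4^{-2s} + 4·4^{-3s} if 2 is inert in K, and g_𝔭(s) = 1 + 2^{-2s} + 2·2^{-4s} + 4·2^{-5s} if 2 is ramified in K. -/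
open NumberField Filter

/-- The value of the Dedekind zeta function of `K` at `2`, defined as the series
`∑ N(I)^{-2}` over nonzero ideals `I` of the ring of integers of `K`. -/
noncomputable def dedekindZetaTwo (K : Type*) [Field K] [NumberField K] : ℝ :=
  ∑' I : {I : Ideal (𝓞 K) // I ≠ ⊥}, ((Ideal.absNorm I.1 : ℝ)) ^ (-2 : ℤ)

/-- The number of roots of unity contained in `K`. -/
noncomputable def rootsOfUnityCount (K : Type*) [Field K] : ℕ :=
  Nat.card {x : K // ∃ n : ℕ, 0 < n ∧ x ^ n = 1}

open scoped Classical in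
/-- The local factor `g_𝔭(s)` at a prime of `K` above 2:
`1 + 3·4^{-2s} + 4·4^{-3s}` if 2 is inert in `K`,
`1 + 2^{-2s} + 2·2^{-4s} + 4·2^{-5s}` if 2 is ramified in `K`, and
`1 + 2^{-2s} + 2·2^{-3s}` if 2 is split in `K`. -/
noncomputable def gTwo (K : Type*) [Field K] [NumberField K] (s : ℝ) : ℝ :=
  if (Ideal.span {(2 : 𝓞 K)}).IsPrime then
    1 + 3 * (4 : ℝ) ^ (-(2 * s)) + 4 * (4 : ℝ) ^ (-(3 * s))
  else if ∃ 𝔮 : Ideal (𝓞 K), 𝔮 ^ 2 = Ideal.span {(2 : 𝓞 K)} then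
    1 + (2 : ℝ) ^ (-(2 * s)) + 2 * (2 : ℝ) ^ (-(4 * s)) + 4 * (2 : ℝ) ^ (-(5 * s))
  else 1 + (2 : ℝ) ^ (-(2 * s)) + 2 * (2 : ℝ) ^ (-(3 * s))

/-- `quadCount K n` is the number of quadratic extensions `L` of `K` inside a fixed
algebraic closure of `K` with absolute discriminant at most `n`. -/
noncomputable def quadCount (K : Type*) [Field K] [NumberField K] (n : ℕ) : ℕ :=
  Nat.card {L : IntermediateField K (AlgebraicClosure K) //
    Module.finrank K L = 2 ∧ ∃ h : NumberField L, |@NumberField.discr L _ h| ≤ (n : ℤ)}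

/-!
A quadratic extension of `K` is `L = K(√D)`, and its discriminant is governed by the fractional
ideal `J(D)` of those `y` for which `(x + y√D) / 2` is integral for some `x`: it has absolute value
`𝔡_L = 𝔡_K² · N(D) · N(J(D))²`. Choose representatives `𝔞` of the ideal classes that contain an
element `1 + 2k`. Given `L` and a nonzero ideal `𝔣`, rescaling `D` by a square yields, for exactly
one of the `𝔞`, elements `d` with `L = K(√d)` and `𝔣 · J(d) = 𝔞⁻¹`, unique up to squares of units.
The `d` that arise from `𝔞` are the nonsquares in `𝔞²` that are congruent to a square modulo `4`,
and `𝔡_L · N(𝔣)² · N(𝔞)² = 𝔡_K² · N(d)`.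

Such `d` form a finite union of cosets of the lattice `4𝔞²`, so counting lattice points in discs
shows that the number of pairs with `𝔡_L · N(𝔣)² ≤ X` is asymptotic to a constant times `X`. This
number is also `∑_𝔣 a_K(X / N(𝔣)²)`, whence Möbius inversion over the ideals `𝔣` divides the
constant by `ζ_K(2)`. Finally `g_𝔭(1) = 1 + N(𝔭)⁻¹` in all three cases, so that the product over the
primes above `2` equals `1`.
-/

open NumberField.InfinitePlace NumberField.mixedEmbedding MeasureTheory Topology
open scoped nonZeroDivisors Real

section NormDensity

variable {K : Type*} [Field K] [NumberField K]

/-- The absolute norm `|N_{K/ℚ}(x)|` as a real number. -/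
noncomputable def absFieldNorm (x : K) : ℝ := |(Algebra.norm ℚ x : ℝ)|

/-- The set `S` of algebraic integers contains `δ s + o(s)` elements of absolute norm at most
`s`. -/
def HasNormDensity (S : Set (𝓞 K)) (δ : ℝ) : Prop :=
  Tendsto (fun s : ℝ ↦ ({x : 𝓞 K | x ∈ S ∧ absFieldNorm (x : K) ≤ s}.ncard : ℝ) / s)
    atTop (𝓝 δ)

theorem absFieldNorm_mul (x y : K) : absFieldNorm (x * y) = absFieldNorm x * absFieldNorm y := by
  rw [absFieldNorm, map_mul, Rat.cast_mul, abs_mul, absFieldNorm, absFieldNorm]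

theorem norm_mixedEmbedding_eq_absFieldNorm (x : K) :
    mixedEmbedding.norm (mixedEmbedding K x) = absFieldNorm x := by
  rw [norm_eq_norm, absFieldNorm, Rat.cast_abs]

open scoped Classical in
/-- The image of the ideal `J` under the Minkowski embedding, as a lattice in Euclidean space. -/
noncomputable abbrev euclideanIdealLattice (J : (Ideal (𝓞 K))⁰) :
    Submodule ℤ (euclidean.mixedSpace K) :=
  ZLattice.comap ℝ (idealLattice K (FractionalIdeal.mk0 K J)) (euclidean.toMixed K).toLinearMap

theorem image_ideal_eq_inter_euclideanIdealLattice (J : (Ideal (𝓞 K))⁰) (s : ℝ) :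
    (fun x : 𝓞 K ↦ (euclidean.toMixed K).symm (mixedEmbedding K (x : K))) ''
        {x : 𝓞 K | x ∈ (J : Ideal (𝓞 K)) ∧ absFieldNorm (x : K) ≤ s} =
      {x | x ∈ Set.univ ∧ mixedEmbedding.norm (euclidean.toMixed K x) ≤ s} ∩
        (euclideanIdealLattice J : Set (euclidean.mixedSpace K)) := by
  ext y
  simp only [ZLattice.coe_comap, Set.mem_image, Set.mem_inter_iff, Set.mem_ofPred_eq,
    Set.mem_univ, true_and, Set.mem_preimage, SetLike.mem_coe, mem_idealLattice,
    FractionalIdeal.coe_mk0]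
  constructor
  · rintro ⟨x, ⟨hxJ, hxs⟩, rfl⟩
    refine ⟨?_, x, FractionalIdeal.mem_coeIdeal_of_mem _ hxJ, ?_⟩
    · rwa [ContinuousLinearEquiv.apply_symm_apply, norm_mixedEmbedding_eq_absFieldNorm]
    · exact ((euclidean.toMixed K).apply_symm_apply _).symm
  · rintro ⟨hys, z, hz, hzy⟩
    obtain ⟨x, hxJ, rfl⟩ := (FractionalIdeal.mem_coeIdeal _).1 hz
    have hxy : mixedEmbedding K (algebraMap (𝓞 K) K x) = euclidean.toMixed K y := hzy
    refine ⟨x, ⟨hxJ, ?_⟩, (ContinuousLinearEquiv.symm_apply_eq _).2 hxy⟩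
    rwa [← norm_mixedEmbedding_eq_absFieldNorm, hxy]

theorem card_inter_euclideanIdealLattice (J : (Ideal (𝓞 K))⁰) (s : ℝ) :
    Nat.card ({x | x ∈ Set.univ ∧ mixedEmbedding.norm (euclidean.toMixed K x) ≤ s} ∩
        (euclideanIdealLattice J : Set (euclidean.mixedSpace K)) :
          Set (euclidean.mixedSpace K)) =
      {x : 𝓞 K | x ∈ (J : Ideal (𝓞 K)) ∧ absFieldNorm (x : K) ≤ s}.ncard := by
  rw [← image_ideal_eq_inter_euclideanIdealLattice, Nat.card_coe_set_eq]
  exact Set.ncard_image_of_injective _ <| (euclidean.toMixed K).symm.injective.comp <|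
    (mixedEmbedding_injective K).comp RingOfIntegers.coe_injective

open scoped Classical in
theorem covolume_euclideanIdealLattice (J : (Ideal (𝓞 K))⁰) :
    ZLattice.covolume (euclideanIdealLattice J) =
      Ideal.absNorm (J : Ideal (𝓞 K)) * 2⁻¹ ^ nrComplexPlaces K * √|discr K| := by
  rw [ZLattice.covolume_comap _ _ _ (euclidean.volumePreserving_toMixed K),
    covolume_idealLattice, FractionalIdeal.coe_mk0, FractionalIdeal.coeIdeal_absNorm,
    Rat.cast_natCast]

open scoped Classical in
theorem volume_real_closedBall_mixedSpace [IsTotallyComplex K] :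
    volume.real (Metric.closedBall (0 : mixedSpace K) 1) = π ^ nrComplexPlaces K := by
  have ball_eq : Metric.ball (0 : mixedSpace K) 1 = convexBodyLT K fun _ ↦ 1 := by
    rw [convexBodyLT, ← Prod.mk_zero_zero, ← ball_prod_same, ball_pi _ one_pos,
      ball_pi _ one_pos]
    rfl
  rw [measureReal_def, Measure.addHaar_closedBall_eq_addHaar_ball, ball_eq,
    convexBodyLT_volume, convexBodyLTFactor, IsTotallyComplex.nrRealPlaces_eq_zero]
  simp

open scoped Classical in
theorem norm_eq_normAtPlace [Subsingleton (InfinitePlace K)] (w : InfinitePlace K)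
    (x : mixedSpace K) : ‖x‖ = normAtPlace w x := by
  rw [norm_eq_sup'_normAtPlace]
  refine le_antisymm (Finset.sup'_le _ _ fun v _ ↦ ?_)
    (Finset.le_sup' (fun w ↦ normAtPlace w x) (Finset.mem_univ w))
  rw [Subsingleton.elim v w]

theorem HasNormDensity.tendsto_sqrt_add_sq {S : Set (𝓞 K)} {δ : ℝ} (hS : HasNormDensity S δ)
    (e : ℝ) :
    Tendsto (fun s : ℝ ↦
      ({x : 𝓞 K | x ∈ S ∧ absFieldNorm (x : K) ≤ (√s + e) ^ 2}.ncard : ℝ) / s) atTop (𝓝 δ) := by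
  have radius : Tendsto (fun s : ℝ ↦ √s + e) atTop atTop :=
    tendsto_atTop_add_const_right _ _ Real.tendsto_sqrt_atTop
  have ratio : Tendsto (fun s : ℝ ↦ (1 + e / √s) ^ 2) atTop (𝓝 1) := by
    simpa using ((tendsto_const_nhds (x := e)).div_atTop Real.tendsto_sqrt_atTop
      |>.const_add 1).pow 2
  rw [← mul_one δ]
  refine ((hS.comp ((tendsto_pow_atTop two_ne_zero).comp radius)).mul ratio).congr' ?_
  filter_upwards [radius.eventually_gt_atTop 0, eventually_gt_atTop 0] with s hpos hs
  have := Real.sqrt_pos.2 hs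
  have one_add_eq : 1 + e / √s = (√s + e) / √s := by field_simp
  rw [Function.comp_apply, Function.comp_apply, one_add_eq, div_pow, Real.sq_sqrt hs.le]
  field_simp

variable [IsTotallyComplex K] [Algebra.IsQuadraticExtension ℚ K]

theorem nrComplexPlaces_eq_one : nrComplexPlaces K = 1 := by
  have := IsTotallyComplex.finrank K
  have := Algebra.IsQuadraticExtension.finrank_eq_two ℚ K
  omega

instance subsingleton_infinitePlace : Subsingleton (InfinitePlace K) := by
  rw [← Fintype.card_le_one_iff_subsingleton, card_eq_nrRealPlaces_add_nrComplexPlaces,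
    nrComplexPlaces_eq_one, IsTotallyComplex.nrRealPlaces_eq_zero]

theorem absFieldNorm_eq_sq (w : InfinitePlace K) (x : K) : absFieldNorm x = w x ^ 2 := by
  rw [absFieldNorm, ← Rat.cast_abs, ← InfinitePlace.prod_eq_abs_norm,
    Fintype.prod_subsingleton _ w, IsTotallyComplex.mult_eq]

theorem finite_absFieldNorm_le (S : Set (𝓞 K)) (s : ℝ) :
    {x : 𝓞 K | x ∈ S ∧ absFieldNorm (x : K) ≤ s}.Finite := by
  refine ((Embeddings.finite_of_norm_le K ℂ √s).preimage
    RingOfIntegers.coe_injective.injOn).subset fun x hx ↦ ⟨x.2, fun φ ↦ ?_⟩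
  rw [← InfinitePlace.apply φ]
  exact Real.le_sqrt_of_sq_le ((absFieldNorm_eq_sq (mk φ) (x : K)).symm.le.trans hx.2)

open scoped Classical in
theorem setOf_mixedEmbedding_norm_le_one :
    {x : euclidean.mixedSpace K |
        x ∈ Set.univ ∧ mixedEmbedding.norm (euclidean.toMixed K x) ≤ 1} =
      euclidean.toMixed K ⁻¹' Metric.closedBall 0 1 := by
  obtain ⟨w⟩ : Nonempty (InfinitePlace K) := inferInstance
  ext x
  simp only [Set.mem_univ, true_and, Set.mem_ofPred_eq, Set.mem_preimage,
    mem_closedBall_zero_iff]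
  rw [norm_eq_normAtPlace w, mixedEmbedding.norm_apply, Fintype.prod_subsingleton _ w,
    IsTotallyComplex.mult_eq, sq_le_one_iff₀ (normAtPlace_nonneg w _)]

theorem hasNormDensity_ideal {J : Ideal (𝓞 K)} (hJ : J ≠ ⊥) :
    HasNormDensity (J : Set (𝓞 K)) (2 * π / (Ideal.absNorm J * √|discr K|)) := by
  classical
  have unitBall := setOf_mixedEmbedding_norm_le_one (K := K)
  have card_div := ZLattice.covolume.tendsto_card_le_div'
    (euclideanIdealLattice ⟨J, mem_nonZeroDivisors_of_ne_zero hJ⟩)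
    (F := fun x ↦ mixedEmbedding.norm (euclidean.toMixed K x)) (X := Set.univ)
    (fun _ _ _ _ ↦ Set.mem_univ _)
    (fun x r hr ↦ by rw [map_smul, mixedEmbedding.norm_smul, euclidean.finrank, abs_of_nonneg hr])
    (by
      rw [unitBall]
      exact (euclidean.toMixed K).antilipschitz.isBounded_preimage Metric.isBounded_closedBall)
    (by
      rw [unitBall]
      exact (euclidean.toMixed K).continuous.measurable measurableSet_closedBall)
    (by
      rw [unitBall, ← (euclidean.toMixed K).coe_toHomeomorph, ← Homeomorph.preimage_frontier,
        (euclidean.toMixed K).coe_toHomeomorph,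
        (euclidean.volumePreserving_toMixed K).measure_preimage
          measurableSet_frontier.nullMeasurableSet]
      exact (convex_closedBall _ _).addHaar_frontier _)
  have volume_unitBall : volume.real (euclidean.toMixed K ⁻¹' Metric.closedBall 0 1) = π := by
    rw [(euclidean.volumePreserving_toMixed K).measureReal_preimage
      measurableSet_closedBall.nullMeasurableSet, volume_real_closedBall_mixedSpace,
      nrComplexPlaces_eq_one, pow_one]
  rw [unitBall, volume_unitBall, covolume_euclideanIdealLattice, nrComplexPlaces_eq_one] at card_div
  simp only [card_inter_euclideanIdealLattice] at card_div
  have constant_eq :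
      2 * π / (Ideal.absNorm J * √|discr K|) =
        π / (Ideal.absNorm J * 2⁻¹ ^ 1 * √|(discr K : ℝ)|) := by ring
  exact constant_eq ▸ card_div

theorem ncard_sub_mem_le_ncard_add_sq (S : Set (𝓞 K)) (v : 𝓞 K) (w : InfinitePlace K) (s : ℝ) :
    {x : 𝓞 K | x - v ∈ S ∧ absFieldNorm (x : K) ≤ s}.ncard ≤
      {x : 𝓞 K | x ∈ S ∧ absFieldNorm (x : K) ≤ (√s + w (v : K)) ^ 2}.ncard := by
  refine Set.ncard_le_ncard_of_injOn (· - v) (fun x ⟨hxS, hxs⟩ ↦ ⟨hxS, ?_⟩)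
    sub_left_injective.injOn (finite_absFieldNorm_le _ _)
  rw [absFieldNorm_eq_sq w] at hxs ⊢
  have triangle : w ((x - v : 𝓞 K) : K) ≤ w (x : K) + w (v : K) := map_sub_le_add w.1 _ _
  refine pow_le_pow_left₀ (apply_nonneg w _) (triangle.trans ?_) 2
  exact add_le_add_left (Real.le_sqrt_of_sq_le hxs) _

theorem HasNormDensity.translate {S : Set (𝓞 K)} {δ : ℝ} (hS : HasNormDensity S δ) (v : 𝓞 K) :
    HasNormDensity {x | x - v ∈ S} δ := by
  obtain ⟨w⟩ : Nonempty (InfinitePlace K) := inferInstance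
  refine tendsto_of_tendsto_of_tendsto_of_le_of_le' (hS.tendsto_sqrt_add_sq (-w (v : K)))
    (hS.tendsto_sqrt_add_sq (w (v : K))) ?_ ?_
  · filter_upwards [eventually_gt_atTop 0, Real.tendsto_sqrt_atTop.eventually_ge_atTop (w (v : K))]
      with s hs hvs
    have := ncard_sub_mem_le_ncard_add_sq {x | x - v ∈ S} (-v) w ((√s + -w (v : K)) ^ 2)
    rw [Real.sqrt_sq (by linarith), show w ((-v : 𝓞 K) : K) = w (v : K) from map_neg_eq_map w.1 _,
      neg_add_cancel_right, Real.sq_sqrt hs.le] at this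
    simp only [sub_neg_eq_add, Set.mem_ofPred_eq, add_sub_cancel_right] at this
    exact div_le_div_of_nonneg_right (Nat.cast_le.2 this) hs.le
  · filter_upwards [eventually_gt_atTop 0] with s hs
    exact div_le_div_of_nonneg_right
      (Nat.cast_le.2 (ncard_sub_mem_le_ncard_add_sq S v w s)) hs.le

theorem HasNormDensity.iUnion {ι : Type*} [Fintype ι] {S : ι → Set (𝓞 K)} {δ : ι → ℝ}
    (hS : ∀ i, HasNormDensity (S i) (δ i)) (disj : Pairwise (Function.onFun Disjoint S)) :
    HasNormDensity (⋃ i, S i) (∑ i, δ i) := by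
  refine (tendsto_finsetSum Finset.univ fun i _ ↦ hS i).congr fun s ↦ ?_
  have sublevel_iUnion : {x : 𝓞 K | x ∈ ⋃ i, S i ∧ absFieldNorm (x : K) ≤ s} =
      ⋃ i, {x : 𝓞 K | x ∈ S i ∧ absFieldNorm (x : K) ≤ s} := by
    ext x
    simp
  rw [← Finset.sum_div, ← Nat.cast_sum, sublevel_iUnion, Set.ncard_iUnion_of_finite,
    finsum_eq_sum_of_fintype]
  · exact fun i ↦ finite_absFieldNorm_le (S i) s
  · exact fun i j hij ↦ (disj hij).mono (fun _ hx ↦ hx.1) fun _ hx ↦ hx.1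

theorem HasNormDensity.diff_of_zero {S T : Set (𝓞 K)} {δ : ℝ} (hS : HasNormDensity S δ)
    (hT : HasNormDensity T 0) : HasNormDensity (S \ T) δ := by
  refine tendsto_of_tendsto_of_tendsto_of_le_of_le' (by simpa using hS.sub hT) hS ?_ ?_
  all_goals filter_upwards [eventually_gt_atTop 0] with s hs
  · rw [← sub_div]
    refine div_le_div_of_nonneg_right ?_ hs.le
    rw [sub_le_iff_le_add, ← Nat.cast_add, Nat.cast_le]
    refine (Set.ncard_le_ncard (fun x hx ↦ ?_)
      ((finite_absFieldNorm_le _ s).union (finite_absFieldNorm_le _ s))).trans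
      (Set.ncard_union_le _ _)
    by_cases hxT : x ∈ T
    · exact Or.inr ⟨hxT, hx.2⟩
    · exact Or.inl ⟨⟨hx.1, hxT⟩, hx.2⟩
  · refine div_le_div_of_nonneg_right (Nat.cast_le.2 ?_) hs.le
    exact Set.ncard_le_ncard (fun x hx ↦ ⟨hx.1.1, hx.2⟩) (finite_absFieldNorm_le S s)

theorem hasNormDensity_setOf_isSquare : HasNormDensity {x : 𝓞 K | IsSquare x} 0 := by
  have sqrt_count := ((hasNormDensity_ideal (K := K) top_ne_bot).comp Real.tendsto_sqrt_atTop).mul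
    (tendsto_inv_atTop_zero.comp Real.tendsto_sqrt_atTop)
  rw [mul_zero] at sqrt_count
  refine squeeze_zero' ?_ ?_ sqrt_count
  all_goals filter_upwards [eventually_gt_atTop 0] with s hs
  · positivity
  simp only [Function.comp]
  rw [← div_eq_mul_inv, div_div, Real.mul_self_sqrt hs.le]
  refine div_le_div_of_nonneg_right (Nat.cast_le.2 ?_) hs.le
  have sublevel_finite := finite_absFieldNorm_le (K := K) ((⊤ : Ideal (𝓞 K)) : Set (𝓞 K)) √s
  refine (Set.ncard_le_ncard ?_ (sublevel_finite.image (fun r ↦ r * r))).trans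
    (Set.ncard_image_le sublevel_finite)
  rintro _ ⟨⟨r, rfl⟩, hrs⟩
  refine ⟨r, ⟨Submodule.mem_top, Real.le_sqrt_of_sq_le ?_⟩, rfl⟩
  rwa [sq, ← absFieldNorm_mul, ← map_mul]

end NormDensity

section SquaresModFour

variable {R : Type*} [CommRing R]

/-- The elements of `𝔞 ^ 2` that are congruent to a square modulo `4`. -/
def squaresModFour (𝔞 : Ideal R) : Set R := {D | D ∈ 𝔞 ^ 2 ∧ ∃ x, 4 ∣ D - x ^ 2}

theorem exists_algebraMap_eq_of_quadratic [IsIntegrallyClosed R] {K : Type*} [Field K]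
    [Algebra R K] [IsFractionRing R K] {x : K} {b c : R}
    (h : x ^ 2 + algebraMap R K b * x + algebraMap R K c = 0) : ∃ z, algebraMap R K z = x := by
  refine IsIntegrallyClosed.isIntegral_iff.1
    ⟨.X ^ 2 + .C b * .X + .C c, by monicity!, ?_⟩
  simpa using h

theorem two_dvd_sub_of_four_dvd_sq_sub_sq [IsDomain R] [IsIntegrallyClosed R] {x y : R}
    (h : 4 ∣ x ^ 2 - y ^ 2) : 2 ∣ x - y := by
  obtain ⟨t, ht⟩ := h
  by_cases h2 : (2 : R) = 0
  · have : (x - y) ^ 2 = 0 := by linear_combination ht + (2 * t - x * y + y ^ 2) * h2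
    rw [pow_eq_zero_iff two_ne_zero |>.1 this]
    exact dvd_zero 2
  have h2' : (2 : FractionRing R) ≠ 0 := by
    rw [← map_ofNat (algebraMap R (FractionRing R)) 2]
    exact IsFractionRing.to_map_ne_zero_of_mem_nonZeroDivisors (mem_nonZeroDivisors_of_ne_zero h2)
  obtain ⟨z, hz⟩ := exists_algebraMap_eq_of_quadratic (R := R) (K := FractionRing R)
    (x := (algebraMap R _ x - algebraMap R _ y) / 2) (b := y) (c := -t) (by
      have := congrArg (algebraMap R (FractionRing R)) ht
      simp only [map_sub, map_pow, map_mul, map_ofNat, map_neg] at this ⊢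
      field_simp
      linear_combination this)
  refine ⟨z, IsFractionRing.injective R (FractionRing R) ?_⟩
  rw [map_sub, map_mul, hz, map_ofNat]
  field_simp

-- `(1 + 2k)² ≡ 1 mod 4`, so the residue of a square modulo `4` can be moved into `𝔞²`.
theorem mem_sq_and_four_dvd_iff {𝔞 : Ideal R} {k : R} (hk : 1 + 2 * k ∈ 𝔞) (D x : R) :
    D ∈ 𝔞 ^ 2 ∧ 4 ∣ D - x ^ 2 ↔ D - ((1 + 2 * k) * x) ^ 2 ∈ Ideal.span {4} * 𝔞 ^ 2 := by
  have hk2 : (1 + 2 * k) ^ 2 ∈ 𝔞 ^ 2 := Ideal.pow_mem_pow hk 2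
  rw [Ideal.mem_span_singleton_mul]
  constructor
  · rintro ⟨hD, t, ht⟩
    set u := t - (k ^ 2 + k) * x ^ 2 with hu
    have four_mul_u : 4 * u = D - (1 + 2 * k) ^ 2 * x ^ 2 := by linear_combination 4 * hu - ht
    have four_mul_u_mem : 4 * u ∈ 𝔞 ^ 2 :=
      four_mul_u ▸ sub_mem hD (Ideal.mul_mem_right _ _ hk2)
    refine ⟨u, ?_, by rw [mul_pow, four_mul_u]⟩
    have u_eq : u = u * (1 + 2 * k) ^ 2 - (k ^ 2 + k) * (4 * u) := by ring
    rw [u_eq]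
    exact sub_mem (Ideal.mul_mem_left _ _ hk2) (Ideal.mul_mem_left _ _ four_mul_u_mem)
  · rintro ⟨z, hz, hzD⟩
    have D_eq : D = 4 * z + x ^ 2 * (1 + 2 * k) ^ 2 := by linear_combination -hzD
    refine ⟨?_, z + (k ^ 2 + k) * x ^ 2, by linear_combination D_eq⟩
    rw [D_eq]
    exact add_mem (Ideal.mul_mem_left _ _ hz) (Ideal.mul_mem_left _ _ hk2)

theorem squaresModFour_eq_iUnion {𝔞 : Ideal R} {k : R} (hk : 1 + 2 * k ∈ 𝔞) :
    squaresModFour 𝔞 = ⋃ ξ : R ⧸ Ideal.span {(2 : R)},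
      {D | D - ((1 + 2 * k) * ξ.out) ^ 2 ∈ Ideal.span {4} * 𝔞 ^ 2} := by
  ext D
  simp only [squaresModFour, Set.mem_ofPred_eq, Set.mem_iUnion, ← mem_sq_and_four_dvd_iff hk,
    exists_and_left, and_congr_right_iff]
  refine fun _ ↦ ⟨fun ⟨x, t, ht⟩ ↦ ⟨Ideal.Quotient.mk _ x, ?_⟩, fun ⟨ξ, hξ⟩ ↦ ⟨_, hξ⟩⟩
  obtain ⟨c, hc⟩ : 2 ∣ Quotient.out (Ideal.Quotient.mk (Ideal.span {(2 : R)}) x) - x := by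
    rw [← Ideal.mem_span_singleton, ← Ideal.Quotient.eq]
    exact Quotient.out_eq _
  rw [eq_add_of_sub_eq hc]
  exact ⟨t - c * x - c ^ 2, by linear_combination ht⟩

theorem pairwise_disjoint_squaresModFour_cosets [IsDomain R] [IsIntegrallyClosed R]
    {𝔞 : Ideal R} {k : R} (hk : 1 + 2 * k ∈ 𝔞) :
    Pairwise (Function.onFun Disjoint fun ξ : R ⧸ Ideal.span {(2 : R)} ↦
      {D | D - ((1 + 2 * k) * ξ.out) ^ 2 ∈ Ideal.span {4} * 𝔞 ^ 2}) := by
  intro ξ η hne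
  refine Set.disjoint_left.2 fun D hξ hη ↦ hne ?_
  obtain ⟨-, hξ⟩ := (mem_sq_and_four_dvd_iff hk D ξ.out).2 hξ
  obtain ⟨-, hη⟩ := (mem_sq_and_four_dvd_iff hk D η.out).2 hη
  have four_dvd : 4 ∣ ξ.out ^ 2 - η.out ^ 2 := by simpa using dvd_sub hη hξ
  have two_dvd := two_dvd_sub_of_four_dvd_sq_sub_sq four_dvd
  rw [← Ideal.mem_span_singleton, ← Ideal.Quotient.eq] at two_dvd
  rw [← Quotient.out_eq ξ, ← Quotient.out_eq η]
  exact two_dvd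

end SquaresModFour

section SquaresModFourDensity

variable {K : Type*} [Field K] [NumberField K] [Algebra.IsQuadraticExtension ℚ K]

theorem absNorm_span_natCast_eq_sq (n : ℕ) : Ideal.absNorm (Ideal.span {(n : 𝓞 K)}) = n ^ 2 := by
  rw [Ideal.absNorm_span_natCast, RingOfIntegers.rank, Algebra.IsQuadraticExtension.finrank_eq_two]

variable [IsTotallyComplex K]

theorem hasNormDensity_squaresModFour {𝔞 : Ideal (𝓞 K)} (h𝔞 : 𝔞 ≠ ⊥) {k : 𝓞 K}
    (hk : 1 + 2 * k ∈ 𝔞) :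
    HasNormDensity (squaresModFour 𝔞) (π / (2 * (Ideal.absNorm 𝔞 : ℝ) ^ 2 * √|discr K|)) := by
  have absNorm_four : Ideal.absNorm (Ideal.span {(4 : 𝓞 K)}) = 16 := absNorm_span_natCast_eq_sq 4
  have card_quotient : Nat.card (𝓞 K ⧸ Ideal.span {(2 : 𝓞 K)}) = 4 := absNorm_span_natCast_eq_sq 2
  have : Finite (𝓞 K ⧸ Ideal.span {(2 : 𝓞 K)}) := Nat.finite_of_card_ne_zero (by omega)
  have := Fintype.ofFinite (𝓞 K ⧸ Ideal.span {(2 : 𝓞 K)})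
  have four_mul_ne_bot : Ideal.span {(4 : 𝓞 K)} * 𝔞 ^ 2 ≠ ⊥ :=
    mul_ne_zero (by simp) (pow_ne_zero 2 h𝔞)
  have coset_density := HasNormDensity.iUnion
    (fun ξ : 𝓞 K ⧸ Ideal.span {(2 : 𝓞 K)} ↦
      (hasNormDensity_ideal four_mul_ne_bot).translate (((1 + 2 * k) * ξ.out) ^ 2))
    (pairwise_disjoint_squaresModFour_cosets hk)
  simp only [SetLike.mem_coe, ← squaresModFour_eq_iUnion hk, Finset.sum_const, Finset.card_univ,
    ← Nat.card_eq_fintype_card, card_quotient, map_mul, map_pow, absNorm_four] at coset_density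
  convert! coset_density using 1
  push_cast
  ring

theorem hasNormDensity_squaresModFour_diff_squares {𝔞 : Ideal (𝓞 K)} (h𝔞 : 𝔞 ≠ ⊥) {k : 𝓞 K}
    (hk : 1 + 2 * k ∈ 𝔞) :
    HasNormDensity (squaresModFour 𝔞 \ {D | IsSquare D})
      (π / (2 * (Ideal.absNorm 𝔞 : ℝ) ^ 2 * √|discr K|)) :=
  (hasNormDensity_squaresModFour h𝔞 hk).diff_of_zero hasNormDensity_setOf_isSquare

end SquaresModFourDensity

section SqrtCoeff

variable (R : Type*) {K : Type*} [CommRing R] [IsIntegrallyClosed R] [Field K] [Algebra R K]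
  [IsFractionRing R K] [NeZero (2 : K)]

/-- The `R`-module `J(D)` of those `y : K` for which `(x + y√D) / 2` is integral over `R` for some
`x : K`. Integrality is expressed by the trace `x` and the norm `(x ^ 2 - y ^ 2 * D) / 4` lying in
`R`, so that no square root of `D` has to be chosen. -/
def sqrtCoeffs (D : K) : Submodule R K where
  carrier := {y | ∃ x t : R, algebraMap R K x ^ 2 - y ^ 2 * D = 4 * algebraMap R K t}
  zero_mem' := ⟨0, 0, by simp⟩
  smul_mem' r y := by
    rintro ⟨x, t, h⟩
    refine ⟨r * x, r ^ 2 * t, ?_⟩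
    rw [Algebra.smul_def, map_mul, map_mul, map_pow]
    linear_combination algebraMap R K r ^ 2 * h
  add_mem' {y₁ y₂} := by
    rintro ⟨x₁, t₁, h₁⟩ ⟨x₂, t₂, h₂⟩
    obtain ⟨s, hs⟩ := exists_algebraMap_eq_of_quadratic (R := R)
      (x := (algebraMap R K x₁ * algebraMap R K x₂ - y₁ * y₂ * D) / 2)
      (b := -(x₁ * x₂)) (c := t₁ * x₂ ^ 2 + t₂ * x₁ ^ 2 - 4 * t₁ * t₂) (by
        simp only [map_add, map_sub, map_neg, map_mul, map_pow, map_ofNat]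
        have := two_ne_zero (α := K)
        field_simp
        linear_combination (-(y₂ ^ 2 * D)) * h₁ +
          (4 * algebraMap R K t₁ - algebraMap R K x₁ ^ 2) * h₂)
    refine ⟨x₁ + x₂, t₁ + t₂ + s, ?_⟩
    have hs' : 2 * algebraMap R K s = algebraMap R K x₁ * algebraMap R K x₂ - y₁ * y₂ * D := by
      rw [hs, mul_div_cancel₀ _ two_ne_zero]
    simp only [map_add]
    linear_combination h₁ + h₂ - 2 * hs'

variable {R}

theorem mem_sqrtCoeffs {D y : K} :
    y ∈ sqrtCoeffs R D ↔ ∃ x t : R, algebraMap R K x ^ 2 - y ^ 2 * D = 4 * algebraMap R K t :=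
  Iff.rfl

theorem mem_sqrtCoeffs_sq_mul {D t y : K} :
    y ∈ sqrtCoeffs R (t ^ 2 * D) ↔ t * y ∈ sqrtCoeffs R D := by
  simp only [mem_sqrtCoeffs, mul_pow, mul_left_comm, mul_assoc]

variable [IsDomain R]

theorem isFractional_sqrtCoeffs {D : K} (hD : D ≠ 0) : IsFractional R⁰ (sqrtCoeffs R D) := by
  obtain ⟨e, c, hc, rfl⟩ := IsFractionRing.div_surjective R D
  have he : e ≠ 0 := by
    rintro rfl
    simp at hD
  have hc' : algebraMap R K c ≠ 0 := IsFractionRing.to_map_ne_zero_of_mem_nonZeroDivisors hc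
  refine ⟨e, mem_nonZeroDivisors_of_ne_zero he, fun y ⟨x, t, h⟩ ↦ ?_⟩
  obtain ⟨z, hz⟩ := exists_algebraMap_eq_of_quadratic (R := R) (x := e • y) (b := 0)
    (c := -(e * c * (x ^ 2 - 4 * t))) (by
      rw [Algebra.smul_def]
      simp only [map_zero, map_neg, map_mul, map_sub, map_pow, map_ofNat]
      field_simp at h ⊢
      linear_combination -algebraMap R K e * h)
  exact ⟨z, hz⟩

theorem exists_ne_zero_mem_sqrtCoeffs (D : K) : ∃ y ≠ 0, y ∈ sqrtCoeffs R D := by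
  obtain ⟨e, c, hc, rfl⟩ := IsFractionRing.div_surjective R D
  have hc' : algebraMap R K c ≠ 0 := IsFractionRing.to_map_ne_zero_of_mem_nonZeroDivisors hc
  refine ⟨2 * algebraMap R K c, mul_ne_zero two_ne_zero hc', 0, -(c * e), ?_⟩
  simp only [map_zero, map_neg, map_mul]
  field_simp
  ring

variable (R)

open scoped Classical in
/-- The module `J(D)` as a fractional ideal of `R`, with junk value `0` at `D = 0`. -/
noncomputable def sqrtCoeffIdeal (D : K) : FractionalIdeal R⁰ K :=
  ⟨if D = 0 then ((0 : FractionalIdeal R⁰ K) : Submodule R K) else sqrtCoeffs R D, by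
    split_ifs with hD
    · exact (0 : FractionalIdeal R⁰ K).isFractional
    · exact isFractional_sqrtCoeffs hD⟩

variable {R}

theorem coe_sqrtCoeffIdeal {D : K} (hD : D ≠ 0) :
    (sqrtCoeffIdeal R D : Submodule R K) = sqrtCoeffs R D :=
  if_neg hD

theorem mem_sqrtCoeffIdeal {D y : K} (hD : D ≠ 0) :
    y ∈ sqrtCoeffIdeal R D ↔ y ∈ sqrtCoeffs R D := by
  rw [← coe_sqrtCoeffIdeal hD, FractionalIdeal.mem_coe]

theorem sqrtCoeffIdeal_zero : sqrtCoeffIdeal R (0 : K) = 0 :=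
  FractionalIdeal.coeToSubmodule_injective (if_pos rfl)

theorem sqrtCoeffIdeal_ne_zero {D : K} (hD : D ≠ 0) : sqrtCoeffIdeal R D ≠ 0 := by
  obtain ⟨y, hy, hyD⟩ := exists_ne_zero_mem_sqrtCoeffs (R := R) D
  intro h
  exact hy (by simpa [h] using (mem_sqrtCoeffIdeal hD).2 hyD)

theorem spanSingleton_mul_sqrtCoeffIdeal {t : K} (ht : t ≠ 0) (D : K) :
    FractionalIdeal.spanSingleton R⁰ t * sqrtCoeffIdeal R (t ^ 2 * D) = sqrtCoeffIdeal R D := by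
  obtain rfl | hD := eq_or_ne D 0
  · simp only [mul_zero, sqrtCoeffIdeal_zero]
  ext y
  simp only [FractionalIdeal.mem_singleton_mul, mem_sqrtCoeffIdeal hD,
    mem_sqrtCoeffIdeal (mul_ne_zero (pow_ne_zero 2 ht) hD), mem_sqrtCoeffs_sq_mul]
  refine ⟨fun ⟨_, hz, h⟩ ↦ h ▸ hz, fun hy ↦ ⟨t⁻¹ * y, ?_, ?_⟩⟩ <;>
    simp [mul_inv_cancel_left₀ ht, hy]

end SqrtCoeff

section IdealClassRepresentatives

theorem spanSingleton_eq_one_iff_exists_unit {R K : Type*} [CommRing R] [Field K]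
    [Algebra R K] [IsFractionRing R K] {s : K} :
    FractionalIdeal.spanSingleton R⁰ s = 1 ↔ ∃ u : Rˣ, algebraMap R K u = s := by
  constructor
  · intro h
    obtain ⟨u, rfl⟩ := (FractionalIdeal.mem_one_iff R⁰).1
      (h ▸ FractionalIdeal.mem_spanSingleton_self R⁰ s)
    rw [← FractionalIdeal.coeIdeal_span_singleton, FractionalIdeal.coeIdeal_eq_one,
      Ideal.one_eq_top, Ideal.span_singleton_eq_top] at h
    exact ⟨h.unit, rfl⟩
  · rintro ⟨u, rfl⟩
    rw [← FractionalIdeal.coeIdeal_span_singleton, FractionalIdeal.coeIdeal_eq_one,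
      Ideal.one_eq_top, Ideal.span_singleton_eq_top]
    exact u.isUnit

variable {R : Type*} [CommRing R] [IsDedekindDomain R]

theorem exists_mk0_eq_and_isCoprime {𝔟 : Ideal R} (h𝔟 : 𝔟 ≠ ⊥) (c : ClassGroup R) :
    ∃ 𝔞 : (Ideal R)⁰, ClassGroup.mk0 𝔞 = c ∧ IsCoprime 𝔟 (𝔞 : Ideal R) := by
  obtain ⟨I, hI⟩ := ClassGroup.mk0_surjective c⁻¹
  have hI0 : (I : Ideal R) ≠ 0 := nonZeroDivisors.coe_ne_zero I
  obtain ⟨x, hx⟩ := IsDedekindDomain.exists_sup_span_eq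
    (I := (I : Ideal R) * 𝔟) (J := I) Ideal.mul_le_left (mul_ne_zero hI0 h𝔟)
  obtain ⟨𝔞, h𝔞⟩ := Ideal.dvd_iff_le.2 (le_sup_right.trans hx.le)
  have coprime : IsCoprime 𝔟 𝔞 := by
    rw [h𝔞, ← Ideal.add_eq_sup, ← mul_add] at hx
    exact Ideal.isCoprime_iff_add.2 (mul_left_cancel₀ hI0 (by rw [hx, mul_one]))
  obtain rfl | h𝔞0 := eq_or_ne 𝔞 0
  · obtain ⟨J, hJ⟩ := ClassGroup.mk0_surjective c
    rw [isCoprime_zero_right, Ideal.isUnit_iff, ← Ideal.one_eq_top] at coprime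
    exact ⟨J, hJ, by rw [coprime]; exact isCoprime_one_left⟩
  refine ⟨⟨𝔞, mem_nonZeroDivisors_of_ne_zero h𝔞0⟩, ?_, coprime⟩
  rw [← inv_inv c, ← hI, eq_inv_iff_mul_eq_one, ← map_mul, mul_comm, ClassGroup.mk0_eq_one_iff]
  exact ⟨x, h𝔞.symm⟩

theorem exists_mk0_eq_and_one_add_two_mul_mem (h2 : (2 : R) ≠ 0) (c : ClassGroup R) :
    ∃ 𝔞 : (Ideal R)⁰, ClassGroup.mk0 𝔞 = c ∧ ∃ k : R, 1 + 2 * k ∈ (𝔞 : Ideal R) := by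
  obtain ⟨𝔞, h𝔞, coprime⟩ :=
    exists_mk0_eq_and_isCoprime (mt Ideal.span_singleton_eq_bot.1 h2) c
  obtain ⟨i, hi, j, hj, hij⟩ := Ideal.isCoprime_iff_exists.1 coprime
  obtain ⟨k, rfl⟩ := Ideal.mem_span_singleton.1 hi
  exact ⟨𝔞, h𝔞, -k, by convert! hj using 1; linear_combination -hij⟩

variable {K : Type*} [Field K] [Algebra R K] [IsFractionRing R K]
  {a : ClassGroup R → (Ideal R)⁰}

theorem exists_eq_spanSingleton_mul_inv (ha : ∀ c, ClassGroup.mk0 (a c) = c)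
    {I : FractionalIdeal R⁰ K} (hI : I ≠ 0) :
    ∃ c, ∃ t ≠ 0, I = FractionalIdeal.spanSingleton R⁰ t *
      ((a c : Ideal R) : FractionalIdeal R⁰ K)⁻¹ := by
  set c := (ClassGroup.mk K (Units.mk0 I hI))⁻¹ with hc
  have ha0 : ((a c : Ideal R) : FractionalIdeal R⁰ K) ≠ 0 :=
    FractionalIdeal.coeIdeal_ne_zero.2 (nonZeroDivisors.coe_ne_zero _)
  have principal : ClassGroup.mk K (Units.mk0 I hI * FractionalIdeal.mk0 K (a c)) = 1 := by
    rw [map_mul, ClassGroup.mk_mk0, ha, hc, mul_inv_cancel]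
  rw [ClassGroup.mk_eq_one_iff, FractionalIdeal.isPrincipal_iff] at principal
  obtain ⟨t, ht⟩ := principal
  rw [Units.val_mul, FractionalIdeal.coe_mk0, Units.val_mk0] at ht
  refine ⟨c, t, ?_, (eq_mul_inv_iff_mul_eq₀ ha0).2 ht⟩
  rintro rfl
  rw [FractionalIdeal.spanSingleton_zero] at ht
  exact mul_ne_zero hI ha0 ht

theorem eq_and_exists_unit_of_spanSingleton_mul_eq (ha : ∀ c, ClassGroup.mk0 (a c) = c)
    {s : K} {c c' : ClassGroup R}
    (h : FractionalIdeal.spanSingleton R⁰ s * ((a c : Ideal R) : FractionalIdeal R⁰ K) =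
      (a c' : Ideal R)) :
    c' = c ∧ ∃ u : Rˣ, algebraMap R K u = s := by
  have ha0 : ((a c : Ideal R) : FractionalIdeal R⁰ K) ≠ 0 :=
    FractionalIdeal.coeIdeal_ne_zero.2 (nonZeroDivisors.coe_ne_zero _)
  obtain rfl : c' = c := by
    rw [← ha c, ← ha c', ← ClassGroup.mk_mk0 K, ← ClassGroup.mk_mk0 K, ← div_eq_one,
      ← map_div, ClassGroup.mk_eq_one_iff, FractionalIdeal.isPrincipal_iff]
    refine ⟨s, ?_⟩
    rw [Units.val_div_eq_div_val, FractionalIdeal.coe_mk0, FractionalIdeal.coe_mk0, ← h,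
      mul_div_cancel_right₀ _ ha0]
  exact ⟨rfl, spanSingleton_eq_one_iff_exists_unit.1 ((mul_eq_right₀ ha0).1 h)⟩

end IdealClassRepresentatives

section SqrtCoeffIdeal

variable {R K : Type*} [CommRing R] [IsDedekindDomain R] [Field K] [Algebra R K]
  [IsFractionRing R K] [NeZero (2 : K)]

theorem sqrtCoeffIdeal_unit_sq_mul (u : Rˣ) (D : K) :
    sqrtCoeffIdeal R (algebraMap R K u ^ 2 * D) = sqrtCoeffIdeal R D := by
  have hu : algebraMap R K u ≠ 0 := (u.isUnit.map (algebraMap R K)).ne_zero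
  rw [← spanSingleton_mul_sqrtCoeffIdeal hu D, spanSingleton_eq_one_iff_exists_unit.2 ⟨u, rfl⟩,
    one_mul]

theorem mem_sq_of_inv_le_sqrtCoeffIdeal {𝔞 : Ideal R} (h𝔞 : 𝔞 ≠ ⊥) {d : R} (hd : d ≠ 0)
    (h : (𝔞 : FractionalIdeal R⁰ K)⁻¹ ≤ sqrtCoeffIdeal R (algebraMap R K d)) : d ∈ 𝔞 ^ 2 := by
  have hA : (𝔞 : FractionalIdeal R⁰ K) ≠ 0 := FractionalIdeal.coeIdeal_ne_zero.2 h𝔞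
  have hd' : algebraMap R K d ≠ 0 := by simpa using hd
  have sq_mul_integral : ∀ y ∈ (𝔞 : FractionalIdeal R⁰ K)⁻¹,
      ∃ b, algebraMap R K b = y ^ 2 * algebraMap R K d := by
    intro y hy
    obtain ⟨x, t, hxt⟩ := (mem_sqrtCoeffIdeal hd').1 (h hy)
    refine ⟨x ^ 2 - 4 * t, ?_⟩
    simp only [map_sub, map_pow, map_mul, map_ofNat]
    linear_combination hxt
  have mul_mul_integral : ∀ y ∈ (𝔞 : FractionalIdeal R⁰ K)⁻¹, ∀ z ∈ (𝔞 : FractionalIdeal R⁰ K)⁻¹,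
      algebraMap R K d * (y * z) ∈ (1 : FractionalIdeal R⁰ K) := by
    intro y hy z hz
    obtain ⟨b, hb⟩ := sq_mul_integral y hy
    obtain ⟨c, hc⟩ := sq_mul_integral z hz
    refine (FractionalIdeal.mem_one_iff R⁰).2
      (exists_algebraMap_eq_of_quadratic (b := 0) (c := -(b * c)) ?_)
    rw [map_neg, map_mul, map_zero, hb, hc]
    ring
  have mem_sq : algebraMap R K d ∈ ((𝔞 ^ 2 : Ideal R) : FractionalIdeal R⁰ K) := by
    rw [FractionalIdeal.coeIdeal_pow, sq, ← inv_inv ((𝔞 : FractionalIdeal R⁰ K) * _), mul_inv,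
      FractionalIdeal.mem_inv_iff (mul_ne_zero (inv_ne_zero hA) (inv_ne_zero hA))]
    intro y hy
    exact FractionalIdeal.mul_induction_on hy mul_mul_integral
      fun y z hy hz ↦ mul_add (algebraMap R K d) y z ▸ (1 : FractionalIdeal R⁰ K).val.add_mem hy hz
  obtain ⟨d', hd'𝔞, hdd'⟩ := (FractionalIdeal.mem_coeIdeal R⁰).1 mem_sq
  rwa [← IsFractionRing.injective R K hdd']

theorem inv_le_sqrtCoeffIdeal {𝔞 : Ideal R} (h𝔞 : 𝔞 ≠ ⊥) {k : R} (hk : 1 + 2 * k ∈ 𝔞) {d : R}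
    (hd : d ≠ 0) (hd' : d ∈ squaresModFour 𝔞) :
    (𝔞 : FractionalIdeal R⁰ K)⁻¹ ≤ sqrtCoeffIdeal R (algebraMap R K d) := by
  obtain ⟨hd2, x, s, hs⟩ := hd'
  have hA : (𝔞 : FractionalIdeal R⁰ K) ≠ 0 := FractionalIdeal.coeIdeal_ne_zero.2 h𝔞
  intro y hy
  obtain ⟨e, he⟩ : ∃ e, algebraMap R K e = y * algebraMap R K (1 + 2 * k) :=
    (FractionalIdeal.mem_one_iff R⁰).1 ((FractionalIdeal.mem_inv_iff hA).1 hy _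
      (FractionalIdeal.mem_coeIdeal_of_mem R⁰ hk))
  obtain ⟨b, hb⟩ : ∃ b, algebraMap R K b = y * y * algebraMap R K d := by
    have inv_mul_inv_mul : (𝔞 : FractionalIdeal R⁰ K)⁻¹ * (𝔞 : FractionalIdeal R⁰ K)⁻¹ *
        ((𝔞 ^ 2 : Ideal R) : FractionalIdeal R⁰ K) = 1 := by
      rw [FractionalIdeal.coeIdeal_pow]
      field_simp
    rw [← FractionalIdeal.mem_one_iff R⁰, ← inv_mul_inv_mul]
    exact FractionalIdeal.mul_mem_mul (FractionalIdeal.mul_mem_mul hy hy)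
      (FractionalIdeal.mem_coeIdeal_of_mem _ hd2)
  refine (mem_sqrtCoeffIdeal (by simpa using hd)).2 ⟨x * e, (k ^ 2 + k) * b - e ^ 2 * s, ?_⟩
  have hs' := congrArg (algebraMap R K) hs
  simp only [map_sub, map_add, map_mul, map_pow, map_one, map_ofNat] at hs' he ⊢
  rw [hb, he]
  linear_combination -(2 * algebraMap R K k + 1) ^ 2 * y ^ 2 * hs'

theorem inv_le_sqrtCoeffIdeal_iff {𝔞 : Ideal R} (h𝔞 : 𝔞 ≠ ⊥) {k : R} (hk : 1 + 2 * k ∈ 𝔞) {D : K}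
    (hD : D ≠ 0) :
    (𝔞 : FractionalIdeal R⁰ K)⁻¹ ≤ sqrtCoeffIdeal R D ↔
      ∃ d ∈ squaresModFour 𝔞, algebraMap R K d = D := by
  constructor
  · intro h
    have one_mem : (1 : K) ∈ (𝔞 : FractionalIdeal R⁰ K)⁻¹ := by
      rw [FractionalIdeal.mem_inv_iff (FractionalIdeal.coeIdeal_ne_zero.2 h𝔞)]
      intro y hy
      rw [one_mul]
      exact FractionalIdeal.coeIdeal_le_one hy
    obtain ⟨x, t, hxt⟩ := (mem_sqrtCoeffIdeal hD).1 (h one_mem)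
    obtain rfl : algebraMap R K (x ^ 2 - 4 * t) = D := by
      simp only [map_sub, map_pow, map_mul, map_ofNat]
      linear_combination hxt
    have hd : x ^ 2 - 4 * t ≠ 0 := by
      rintro h
      simp [h] at hD
    exact ⟨_, ⟨mem_sq_of_inv_le_sqrtCoeffIdeal h𝔞 hd h, x, -t, by ring⟩, rfl⟩
  · rintro ⟨d, hd, rfl⟩
    exact inv_le_sqrtCoeffIdeal h𝔞 hk (by simpa using hD) hd

end SqrtCoeffIdeal

section QuadraticExtension

variable {K L : Type*} [Field K] [Field L] [Algebra K L] {D : K} {θ : L}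

theorem linearIndependent_one_sqrt (hθ : θ ^ 2 = algebraMap K L D) (hD : ¬IsSquare D) :
    LinearIndependent K ![1, θ] := by
  rw [LinearIndependent.pair_iff' one_ne_zero]
  rintro a rfl
  refine hD ⟨a, FaithfulSMul.algebraMap_injective K L ?_⟩
  rw [← hθ, Algebra.smul_def, mul_one, map_mul, sq]

variable [Algebra.IsQuadraticExtension K L]

/-- The basis `(1, θ)` of a quadratic extension generated by a square root `θ` of `D`. -/
noncomputable def sqrtBasis (hθ : θ ^ 2 = algebraMap K L D) (hD : ¬IsSquare D) :
    Module.Basis (Fin 2) K L :=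
  basisOfLinearIndependentOfCardEqFinrank (linearIndependent_one_sqrt hθ hD)
    (by rw [Algebra.IsQuadraticExtension.finrank_eq_two, Fintype.card_fin])

theorem coe_sqrtBasis (hθ : θ ^ 2 = algebraMap K L D) (hD : ¬IsSquare D) :
    ⇑(sqrtBasis hθ hD) = ![1, θ] :=
  coe_basisOfLinearIndependentOfCardEqFinrank _ _

theorem exists_eq_add_mul_sqrt (hθ : θ ^ 2 = algebraMap K L D) (hD : ¬IsSquare D) (w : L) :
    ∃ a b : K, w = algebraMap K L a + algebraMap K L b * θ := by
  refine ⟨(sqrtBasis hθ hD).repr w 0, (sqrtBasis hθ hD).repr w 1, ?_⟩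
  conv_lhs => rw [← (sqrtBasis hθ hD).sum_repr w]
  simp [Fin.sum_univ_two, coe_sqrtBasis, Algebra.smul_def]

theorem leftMulMatrix_sqrtBasis (hθ : θ ^ 2 = algebraMap K L D) (hD : ¬IsSquare D) (a b : K) :
    Algebra.leftMulMatrix (sqrtBasis hθ hD) (algebraMap K L a + algebraMap K L b * θ) =
      !![a, b * D; b, a] := by
  set B := sqrtBasis hθ hD
  have hB : ⇑B = ![1, θ] := coe_sqrtBasis hθ hD
  have mul_one_eq : (algebraMap K L a + algebraMap K L b * θ) * B 0 = a • B 0 + b • B 1 := by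
    simp [hB, Algebra.smul_def]
  have mul_sqrt_eq :
      (algebraMap K L a + algebraMap K L b * θ) * B 1 = (b * D) • B 0 + a • B 1 := by
    simp only [hB, Algebra.smul_def, Matrix.cons_val_zero, Matrix.cons_val_one, map_mul]
    linear_combination algebraMap K L b * hθ
  ext i j
  rw [Algebra.leftMulMatrix_eq_repr_mul]
  fin_cases j
  · rw [show B ⟨0, _⟩ = B 0 from rfl, mul_one_eq]
    fin_cases i <;> simp
  · rw [show B ⟨1, _⟩ = B 1 from rfl, mul_sqrt_eq]
    fin_cases i <;> simp

theorem trace_add_mul_sqrt (hθ : θ ^ 2 = algebraMap K L D) (hD : ¬IsSquare D) (a b : K) :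
    Algebra.trace K L (algebraMap K L a + algebraMap K L b * θ) = 2 * a := by
  rw [Algebra.trace_eq_matrix_trace (sqrtBasis hθ hD), leftMulMatrix_sqrtBasis, two_mul]
  simp

theorem norm_add_mul_sqrt (hθ : θ ^ 2 = algebraMap K L D) (hD : ¬IsSquare D) (a b : K) :
    Algebra.norm K (algebraMap K L a + algebraMap K L b * θ) = a ^ 2 - b ^ 2 * D := by
  rw [Algebra.norm_eq_matrix_det (sqrtBasis hθ hD), leftMulMatrix_sqrtBasis, Matrix.det_fin_two_of]
  ring

theorem mem_sqrtCoeffs_iff_isIntegral {R : Type*} [CommRing R] [IsIntegrallyClosed R]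
    [Algebra R K] [IsFractionRing R K] [Algebra R L] [IsScalarTower R K L] [NeZero (2 : K)]
    (hθ : θ ^ 2 = algebraMap K L D) (hD : ¬IsSquare D) {y : K} :
    y ∈ sqrtCoeffs R D ↔
      ∃ x : K, IsIntegral R ((algebraMap K L x + algebraMap K L y * θ) / 2) := by
  have two_ne_zero_K : (2 : K) ≠ 0 := two_ne_zero
  have two_ne_zero_L : (2 : L) ≠ 0 := by
    rw [← map_ofNat (algebraMap K L)]
    simpa using two_ne_zero_K
  constructor
  · rintro ⟨x, t, h⟩
    refine ⟨algebraMap R K x, .X ^ 2 - .C x * .X + .C t, by monicity!, ?_⟩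
    have h' := congrArg (algebraMap K L) h
    simp only [map_sub, map_mul, map_pow, map_ofNat, ← hθ, ← IsScalarTower.algebraMap_apply] at h'
    simp only [Polynomial.eval₂_add, Polynomial.eval₂_sub, Polynomial.eval₂_mul,
      Polynomial.eval₂_pow, Polynomial.eval₂_X, Polynomial.eval₂_C,
      ← IsScalarTower.algebraMap_apply]
    field_simp
    linear_combination -h'
  · rintro ⟨x, hx⟩
    have w_eq : (algebraMap K L x + algebraMap K L y * θ) / 2 =
        algebraMap K L (x / 2) + algebraMap K L (y / 2) * θ := by
      simp only [map_div₀, map_ofNat]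
      ring
    rw [w_eq] at hx
    have trace_integral := Algebra.isIntegral_trace (L := K) hx
    have norm_integral := Algebra.isIntegral_norm K hx
    rw [trace_add_mul_sqrt hθ hD, mul_div_cancel₀ _ two_ne_zero] at trace_integral
    rw [norm_add_mul_sqrt hθ hD] at norm_integral
    obtain ⟨x, rfl⟩ := IsIntegrallyClosed.isIntegral_iff.1 trace_integral
    obtain ⟨t, ht⟩ := IsIntegrallyClosed.isIntegral_iff.1 norm_integral
    refine ⟨x, t, ?_⟩
    rw [ht]
    field_simp
    ring

end QuadraticExtension

section RelativeDiscriminant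

open Module Matrix

variable {F K L ι : Type*} [Field F] [Field K] [Field L] [Algebra F K] [Algebra K L] [Algebra F L]
  [IsScalarTower F K L] [Fintype ι] [DecidableEq ι] {D : K} {θ : L}

/-- The family consisting of the `e i` and the `(x j + y j * θ) / 2` in a quadratic extension
generated by `θ`; integral bases of `L` are sought in this form. -/
def halfSqrtFamily (θ : L) (e x y : ι → K) : ι ⊕ ι → L :=
  Sum.elim (fun i ↦ algebraMap K L (e i))
    fun j ↦ (algebraMap K L (x j) + algebraMap K L (y j) * θ) / 2

theorem vecMul_sumElim_mul_sqrt (θ : L) (e : Basis ι F K) (x y : ι → K) :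
    vecMul (Sum.elim (fun i ↦ algebraMap K L (e i)) fun i ↦ algebraMap K L (e i) * θ)
        ((fromBlocks 1 ((2⁻¹ : F) • e.toMatrix x) 0 ((2⁻¹ : F) • e.toMatrix y)).map
          (algebraMap F L)) =
      halfSqrtFamily θ e x y := by
  have sum_repr (u : K) :
      ∑ i, algebraMap K L (e i) * algebraMap F L (e.repr u i) = algebraMap K L u := by
    conv_rhs => rw [← e.sum_repr u, map_sum]
    simp only [Algebra.smul_def, map_mul, ← IsScalarTower.algebraMap_apply, mul_comm]
  ext (j | j)
  · simp [vecMul, dotProduct, halfSqrtFamily, one_apply, apply_ite]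
  · have sum_half (u : K) (α : L) : ∑ i, algebraMap K L (e i) * α *
        (algebraMap F L 2⁻¹ * algebraMap F L (e.repr u i)) = algebraMap K L u * α / 2 := by
      rw [← sum_repr u, Finset.sum_mul, Finset.sum_div]
      refine Finset.sum_congr rfl fun i _ ↦ ?_
      rw [map_inv₀, map_ofNat]
      ring
    have sum_half_one := sum_half (x j) 1
    simp only [mul_one] at sum_half_one
    simp only [vecMul, dotProduct, Fintype.sum_sum_type, Sum.elim_inl, Sum.elim_inr, map_apply,
      fromBlocks_apply₁₂, fromBlocks_apply₂₂, Matrix.smul_apply, smul_eq_mul, Basis.toMatrix_apply,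
      map_mul, halfSqrtFamily, sum_half, sum_half_one, add_div]

variable [Algebra.IsQuadraticExtension K L]

theorem traceMatrix_sumElim_mul_sqrt (hθ : θ ^ 2 = algebraMap K L D) (hD : ¬IsSquare D)
    (e : Basis ι F K) :
    Algebra.traceMatrix F (Sum.elim (fun i ↦ algebraMap K L (e i))
        fun i ↦ algebraMap K L (e i) * θ) =
      fromBlocks ((2 : F) • Algebra.traceMatrix F e) 0 0
        ((2 : F) • (Algebra.traceMatrix F e * Algebra.leftMulMatrix e D)) := by
  have : FiniteDimensional F K := Module.Finite.of_basis e
  have trace_eq (a b : K) :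
      Algebra.trace F L (algebraMap K L a + algebraMap K L b * θ) = 2 * Algebra.trace F K a := by
    rw [← Algebra.trace_trace (S := K), trace_add_mul_sqrt hθ hD, two_mul, two_mul, map_add]
  have trace_algebraMap (a : K) :
      Algebra.trace F L (algebraMap K L a) = 2 * Algebra.trace F K a := by
    simpa using trace_eq a 0
  have trace_mul_sqrt (b : K) : Algebra.trace F L (algebraMap K L b * θ) = 0 := by
    simpa using trace_eq 0 b
  ext (i | i) (j | j)
  · simp only [Algebra.traceMatrix_apply, Algebra.traceForm_apply, Sum.elim_inl,
      fromBlocks_apply₁₁, Matrix.smul_apply, smul_eq_mul, ← map_mul, trace_algebraMap]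
  · simp only [Algebra.traceMatrix_apply, Algebra.traceForm_apply, Sum.elim_inl, Sum.elim_inr,
      fromBlocks_apply₁₂, Matrix.zero_apply, ← mul_assoc, ← map_mul, trace_mul_sqrt]
  · simp only [Algebra.traceMatrix_apply, Algebra.traceForm_apply, Sum.elim_inl, Sum.elim_inr,
      fromBlocks_apply₂₁, Matrix.zero_apply, mul_right_comm _ θ, ← map_mul, trace_mul_sqrt]
  · have mul_mul_eq : algebraMap K L (e i) * θ * (algebraMap K L (e j) * θ) =
        algebraMap K L (e i * (D * e j)) := by
      rw [map_mul, map_mul, ← hθ]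
      ring
    simp only [Algebra.traceMatrix_apply, Algebra.traceForm_apply, Sum.elim_inr,
      fromBlocks_apply₂₂, Matrix.smul_apply, smul_eq_mul, mul_apply, mul_mul_eq, trace_algebraMap]
    conv_lhs => rw [← e.sum_repr (D * e j), Finset.mul_sum, map_sum]
    simp only [Algebra.leftMulMatrix_eq_repr_mul, mul_smul_comm, map_smul, smul_eq_mul, mul_comm]

theorem discr_sumElim_mul_sqrt (hθ : θ ^ 2 = algebraMap K L D) (hD : ¬IsSquare D)
    (e : Basis ι F K) :
    Algebra.discr F (Sum.elim (fun i ↦ algebraMap K L (e i)) fun i ↦ algebraMap K L (e i) * θ) =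
      4 ^ Fintype.card ι * Algebra.discr F e ^ 2 * Algebra.norm F D := by
  rw [Algebra.discr_def, traceMatrix_sumElim_mul_sqrt hθ hD, det_fromBlocks_zero₂₁, det_smul,
    det_smul, det_mul, ← Algebra.norm_eq_matrix_det, ← Algebra.discr_def,
    show (4 : F) = 2 * 2 by norm_num, mul_pow]
  ring

theorem discr_halfSqrtFamily [NeZero (2 : F)] (hθ : θ ^ 2 = algebraMap K L D) (hD : ¬IsSquare D)
    (e : Basis ι F K) (x y : ι → K) :
    Algebra.discr F (halfSqrtFamily θ e x y) =
      Algebra.discr F e ^ 2 * Algebra.norm F D * e.det y ^ 2 := by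
  rw [← vecMul_sumElim_mul_sqrt, Algebra.discr_of_matrix_vecMul, discr_sumElim_mul_sqrt hθ hD,
    det_fromBlocks_zero₂₁, det_one, one_mul, det_smul, ← Basis.det_apply, inv_pow]
  have := two_ne_zero (α := F)
  rw [show (4 : F) = 2 ^ 2 by norm_num, ← pow_mul, mul_comm 2, pow_mul]
  field_simp

end RelativeDiscriminant

section NumberFieldDiscriminant

open Module

variable {K L : Type*} [Field K] [Field L] [Algebra K L] {D : K} {θ : L}

theorem isIntegral_halfSqrtFamily {ι : Type*} {e x y : ι → K} (he : ∀ i, IsIntegral ℤ (e i))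
    (hxy : ∀ j, IsIntegral ℤ ((algebraMap K L (x j) + algebraMap K L (y j) * θ) / 2)) (i : ι ⊕ ι) :
    IsIntegral ℤ (halfSqrtFamily θ e x y i) := by
  cases i with
  | inl i => exact (he i).map (IsScalarTower.toAlgHom ℤ K L)
  | inr j => exact hxy j

theorem coe_discr_eq_discr_of_span {ι L : Type*} [Fintype ι] [DecidableEq ι] [Field L]
    [NumberField L] {z : ι → L}
    (hz : ∀ i, IsIntegral ℤ (z i))
    (hspan : ∀ w : L, IsIntegral ℤ w → w ∈ Submodule.span ℤ (Set.range z))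
    (hcard : Fintype.card ι = finrank ℚ L) : (discr L : ℚ) = Algebra.discr ℚ z := by
  let z' : ι → 𝓞 L := fun i ↦ ⟨z i, hz i⟩
  have span_eq_top : ⊤ ≤ Submodule.span ℤ (Set.range z') := by
    intro w _
    have := hspan w (RingOfIntegers.isIntegral_coe w)
    obtain ⟨c, hc⟩ := (Submodule.mem_span_range_iff_exists_fun ℤ).1 this
    refine (Submodule.mem_span_range_iff_exists_fun ℤ).2 ⟨c, RingOfIntegers.coe_injective ?_⟩
    simp only [map_sum, map_zsmul]
    exact hc
  let B := basisOfTopLeSpanOfCardEqFinrank z' span_eq_top (by rw [hcard, RingOfIntegers.rank])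
  have coe_B : ⇑B = z' := coe_basisOfTopLeSpanOfCardEqFinrank _ _ _
  rw [← discr_eq_discr L B, coe_B, Algebra.discr_def, Algebra.discr_def,
    ← eq_intCast (algebraMap ℤ ℚ), RingHom.map_det]
  congr 1
  ext i j
  exact Algebra.coe_trace_int (z' i * z' j)

theorem exists_basis_span_eq_fractionalIdeal (K : Type*) [Field K] [NumberField K]
    (I : (FractionalIdeal (𝓞 K)⁰ K)ˣ) :
    ∃ y : Basis (Free.ChooseBasisIndex ℤ (𝓞 K)) ℚ K,
      (∀ b : K, b ∈ Submodule.span ℤ (Set.range y) ↔ b ∈ (I : FractionalIdeal (𝓞 K)⁰ K)) ∧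
        |(integralBasis K).det y| = FractionalIdeal.absNorm (I : FractionalIdeal (𝓞 K)⁰ K) := by
  let σ := Fintype.equivOfCardEq (α := Free.ChooseBasisIndex ℤ (𝓞 K))
    (β := Free.ChooseBasisIndex ℤ I) (by
      rw [← finrank_eq_card_chooseBasisIndex, ← finrank_eq_card_chooseBasisIndex,
        fractionalIdeal_rank])
  refine ⟨(basisOfFractionalIdeal K I).reindex σ.symm, fun b ↦ ?_,
    det_basisOfFractionalIdeal_eq_absNorm K I σ⟩
  rw [Basis.range_reindex, mem_span_basisOfFractionalIdeal]
  rfl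

variable [NumberField K] [Algebra.IsQuadraticExtension K L]

theorem mem_sqrtCoeffs_ringOfIntegers_iff (hθ : θ ^ 2 = algebraMap K L D) (hD : ¬IsSquare D)
    {y : K} : y ∈ sqrtCoeffs (𝓞 K) D ↔
      ∃ x : K, IsIntegral ℤ ((algebraMap K L x + algebraMap K L y * θ) / 2) := by
  rw [mem_sqrtCoeffs_iff_isIntegral hθ hD]
  exact exists_congr fun x ↦ ⟨isIntegral_trans _, IsIntegral.tower_top⟩

theorem mem_span_halfSqrtFamily {ι : Type*} [Finite ι] (hθ : θ ^ 2 = algebraMap K L D)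
    (hD : ¬IsSquare D) {e x y : ι → K}
    (he : ∀ a : K, IsIntegral ℤ a → a ∈ Submodule.span ℤ (Set.range e))
    (hy : ∀ b ∈ sqrtCoeffs (𝓞 K) D, b ∈ Submodule.span ℤ (Set.range y))
    (hxy : ∀ j, IsIntegral ℤ ((algebraMap K L (x j) + algebraMap K L (y j) * θ) / 2))
    {w : L} (hw : IsIntegral ℤ w) :
    w ∈ Submodule.span ℤ (Set.range (halfSqrtFamily θ e x y)) := by
  have := Fintype.ofFinite ι
  have := charZero_of_injective_algebraMap (FaithfulSMul.algebraMap_injective K L)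
  obtain ⟨a, b, rfl⟩ := exists_eq_add_mul_sqrt hθ hD w
  have two_mul_b_mem : 2 * b ∈ sqrtCoeffs (𝓞 K) D := by
    refine (mem_sqrtCoeffs_ringOfIntegers_iff hθ hD).2 ⟨2 * a, ?_⟩
    convert! hw using 1
    simp only [map_mul, map_ofNat]
    ring
  obtain ⟨n, hn⟩ := (Submodule.mem_span_range_iff_exists_fun ℤ).1 (hy _ two_mul_b_mem)
  set z := halfSqrtFamily θ e x y with hz
  set r := a - ∑ j, n j • (x j / 2) with hr
  have sub_eq : algebraMap K L a + algebraMap K L b * θ - ∑ j, n j • z (Sum.inr j) =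
      algebraMap K L r := by
    have sum_eq : ∑ j, n j • z (Sum.inr j) = algebraMap K L (∑ j, n j • (x j / 2)) +
        algebraMap K L (∑ j, n j • y j) * θ / 2 := by
      simp only [map_sum, hz, halfSqrtFamily, Sum.elim_inr, Finset.sum_mul, Finset.sum_div,
        ← Finset.sum_add_distrib, zsmul_eq_mul, map_mul, map_div₀, map_intCast, map_ofNat]
      exact Finset.sum_congr rfl fun j _ ↦ by ring
    rw [sum_eq, hn, hr, map_sub, map_mul, map_ofNat]
    ring
  have r_integral : IsIntegral ℤ r := by
    rw [← isIntegral_algebraMap_iff (FaithfulSMul.algebraMap_injective K L), ← sub_eq]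
    exact hw.sub (IsIntegral.sum _ fun j _ ↦ (hxy j).smul (n j))
  have algebraMap_r_mem : algebraMap K L r ∈ Submodule.span ℤ (Set.range z) := by
    have := Submodule.mem_map_of_mem (f := (IsScalarTower.toAlgHom ℤ K L).toLinearMap)
      (he r r_integral)
    rw [Submodule.map_span, ← Set.range_comp] at this
    refine Submodule.span_mono ?_ this
    rintro _ ⟨i, rfl⟩
    exact ⟨Sum.inl i, rfl⟩
  rw [← sub_add_cancel (algebraMap K L a + _) (∑ j, n j • z (Sum.inr j)), sub_eq]
  exact add_mem algebraMap_r_mem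
    (sum_mem fun j _ ↦ Submodule.smul_mem _ _ (Submodule.subset_span ⟨_, rfl⟩))

variable [NumberField L]

theorem abs_discr_eq_absNorm_sqrtCoeffIdeal (hD : ¬IsSquare D)
    (hDL : IsSquare (algebraMap K L D)) :
    ((|discr L| : ℤ) : ℚ) = (discr K : ℚ) ^ 2 * |Algebra.norm ℚ D| *
      FractionalIdeal.absNorm (sqrtCoeffIdeal (𝓞 K) D) ^ 2 := by
  obtain ⟨θ, hθ⟩ := hDL
  rw [← sq, eq_comm] at hθ
  have hD0 : D ≠ 0 := by
    rintro rfl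
    exact hD IsSquare.zero
  obtain ⟨y, mem_span_y, det_y⟩ := exists_basis_span_eq_fractionalIdeal K
    (Units.mk0 _ (sqrtCoeffIdeal_ne_zero (R := 𝓞 K) hD0))
  simp only [Units.val_mk0, mem_sqrtCoeffIdeal hD0] at mem_span_y
  choose x hx using fun j ↦ (mem_sqrtCoeffs_ringOfIntegers_iff hθ hD).1
    ((mem_span_y _).1 (Submodule.subset_span ⟨j, rfl⟩))
  have discr_L : (discr L : ℚ) = Algebra.discr ℚ (halfSqrtFamily θ (integralBasis K) x y) := by
    refine coe_discr_eq_discr_of_span (isIntegral_halfSqrtFamily (fun i ↦ ?_) hx)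
      (fun w hw ↦ mem_span_halfSqrtFamily hθ hD (fun a ha ↦ ?_)
        (fun b hb ↦ (mem_span_y b).2 hb) hx hw) ?_
    · rw [integralBasis_apply]
      exact RingOfIntegers.isIntegral_coe _
    · rw [mem_span_integralBasis]
      exact ⟨⟨a, ha⟩, rfl⟩
    · rw [Fintype.card_sum, ← finrank_eq_card_chooseBasisIndex, RingOfIntegers.rank,
        ← finrank_mul_finrank ℚ K L,
        Algebra.IsQuadraticExtension.finrank_eq_two K L, mul_two]
  rw [Units.val_mk0] at det_y
  rw [Int.cast_abs, discr_L, discr_halfSqrtFamily hθ hD, coe_discr, ← det_y, abs_mul, abs_mul,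
    abs_sq, abs_sq, sq_abs]

theorem abs_discr_mul_sq_eq_of_mul_sqrtCoeffIdeal_eq_inv (hD : ¬IsSquare D)
    (hDL : IsSquare (algebraMap K L D)) {𝔣 𝔞 : Ideal (𝓞 K)} (h𝔞 : 𝔞 ≠ ⊥)
    (h : (𝔣 : FractionalIdeal (𝓞 K)⁰ K) * sqrtCoeffIdeal (𝓞 K) D =
      (𝔞 : FractionalIdeal (𝓞 K)⁰ K)⁻¹) :
    ((|discr L| : ℤ) : ℝ) * (Ideal.absNorm 𝔣 * Ideal.absNorm 𝔞) ^ 2 =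
      (discr K : ℝ) ^ 2 * absFieldNorm D := by
  have absNorm_eq := congrArg FractionalIdeal.absNorm h
  rw [map_mul, map_inv₀, FractionalIdeal.coeIdeal_absNorm, FractionalIdeal.coeIdeal_absNorm,
    ← mul_eq_one_iff_eq_inv₀ (by simpa [Ideal.absNorm_eq_zero_iff] using h𝔞)] at absNorm_eq
  have cast_eq : ((|discr L| : ℤ) : ℚ) * (Ideal.absNorm 𝔣 * Ideal.absNorm 𝔞) ^ 2 =
      (discr K : ℚ) ^ 2 * |Algebra.norm ℚ D| := by
    calc _ = (discr K : ℚ) ^ 2 * |Algebra.norm ℚ D| * (Ideal.absNorm 𝔣 *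
          FractionalIdeal.absNorm (sqrtCoeffIdeal (𝓞 K) D) * Ideal.absNorm 𝔞) ^ 2 := by
          rw [abs_discr_eq_absNorm_sqrtCoeffIdeal hD hDL]
          ring
      _ = _ := by rw [absNorm_eq, one_pow, mul_one]
  rw [absFieldNorm]
  exact_mod_cast cast_eq

end NumberFieldDiscriminant

section SquareRootGenerators

open Module

variable {K : Type*} [Field K]

theorem exists_not_isSquare_isSquare_algebraMap (K L : Type*) [Field K] [NeZero (2 : K)] [Field L]
    [Algebra K L] [Algebra.IsQuadraticExtension K L] :
    ∃ D : K, ¬IsSquare D ∧ IsSquare (algebraMap K L D) := by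
  have finrank_eq := Algebra.IsQuadraticExtension.finrank_eq_two K L
  obtain ⟨w, one_w⟩ := exists_linearIndependent_pair_of_one_lt_finrank (R := K) (M := L)
    (by rw [finrank_eq]; exact one_lt_two) one_ne_zero
  have w_notMem := (LinearIndependent.pair_iff' one_ne_zero).1 one_w
  let B := basisOfLinearIndependentOfCardEqFinrank one_w (by rw [finrank_eq, Fintype.card_fin])
  have w_sq := B.sum_repr (w ^ 2)
  simp only [Fin.sum_univ_two, B, coe_basisOfLinearIndependentOfCardEqFinrank,
    Matrix.cons_val_zero, Matrix.cons_val_one, Algebra.smul_def, mul_one] at w_sq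
  set a := B.repr (w ^ 2) 0
  set b := B.repr (w ^ 2) 1
  have two_ne_zero_L : (2 : L) ≠ 0 := by
    rw [← map_ofNat (algebraMap K L), map_ne_zero]
    exact two_ne_zero
  have sq_eq : algebraMap K L (a + (b / 2) ^ 2) = (w - algebraMap K L (b / 2)) ^ 2 := by
    simp only [map_add, map_pow, map_div₀, map_ofNat]
    field_simp
    linear_combination 4 * w_sq
  refine ⟨a + (b / 2) ^ 2, ?_, sq_eq ▸ IsSquare.sq _⟩
  rintro ⟨s, hs⟩
  rw [hs, map_mul, ← sq, sq_eq_sq_iff_eq_or_eq_neg] at sq_eq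
  rcases sq_eq with h | h
  · exact w_notMem (s + b / 2) (by rw [Algebra.smul_def, mul_one, map_add, h, sub_add_cancel])
  · exact w_notMem (b / 2 - s) (by rw [Algebra.smul_def, mul_one, map_sub, h]; ring)

theorem exists_eq_sq_mul_of_isSquare_algebraMap {L : Type*} [NeZero (2 : K)] [Field L]
    [Algebra K L] [Algebra.IsQuadraticExtension K L] {D D' : K} (hD : ¬IsSquare D)
    (hD' : ¬IsSquare D') (hDL : IsSquare (algebraMap K L D))
    (hDL' : IsSquare (algebraMap K L D')) : ∃ t ≠ 0, D' = t ^ 2 * D := by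
  obtain ⟨θ, hθ⟩ := hDL
  obtain ⟨θ', hθ'⟩ := hDL'
  rw [← sq, eq_comm] at hθ hθ'
  obtain ⟨a, b, eq_add⟩ := exists_eq_add_mul_sqrt hθ hD θ'
  have trace_eq_zero := trace_add_mul_sqrt hθ' hD' 0 1
  rw [map_zero, map_one, one_mul, zero_add, mul_zero, eq_add, trace_add_mul_sqrt hθ hD,
    mul_eq_zero_iff_left two_ne_zero] at trace_eq_zero
  have D'_eq : D' = b ^ 2 * D := by
    refine FaithfulSMul.algebraMap_injective K L ?_
    rw [← hθ', eq_add, trace_eq_zero, map_zero, zero_add, mul_pow, hθ, map_mul, map_pow]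
  refine ⟨b, ?_, D'_eq⟩
  rintro rfl
  exact hD' (by simp [D'_eq])

variable {Ω : Type*} [Field Ω] [Algebra K Ω] {D : K}

theorem le_of_isSquare_algebraMap (hD : ¬IsSquare D) {L L' : IntermediateField K Ω}
    [Algebra.IsQuadraticExtension K L] (hDL : IsSquare (algebraMap K L D))
    (hDL' : IsSquare (algebraMap K L' D)) : L ≤ L' := by
  obtain ⟨α, hα⟩ := hDL
  obtain ⟨β, hβ⟩ := hDL'
  have mul_self_eq : (α * α : Ω) = β * β :=
    (congrArg (algebraMap L Ω) hα).symm.trans (congrArg (algebraMap L' Ω) hβ)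
  have α_mem : (α : Ω) ∈ L' := by
    rcases mul_self_eq_mul_self_iff.1 mul_self_eq with h | h
    · exact h ▸ β.2
    · exact h ▸ neg_mem β.2
  intro w hw
  obtain ⟨a, b, hab⟩ := exists_eq_add_mul_sqrt ((sq α).trans hα.symm) hD ⟨w, hw⟩
  rw [show w = algebraMap K Ω a + algebraMap K Ω b * α from congrArg (algebraMap L Ω) hab]
  exact add_mem (L'.algebraMap_mem a) (mul_mem (L'.algebraMap_mem b) α_mem)

theorem finrank_adjoin_sqrt (hD : ¬IsSquare D) {θ : Ω} (hθ : θ ^ 2 = algebraMap K Ω D) :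
    finrank K (IntermediateField.adjoin K {θ}) = 2 := by
  have minpoly_eq : minpoly K θ = .X ^ 2 - .C D := by
    refine (minpoly.eq_of_irreducible_of_monic (X_pow_sub_C_irreducible_of_prime Nat.prime_two
      fun b hb ↦ hD ⟨b, by rw [← hb, sq]⟩) ?_
      (Polynomial.monic_X_pow_sub_C _ two_ne_zero)).symm
    simp [hθ]
  rw [IntermediateField.adjoin.finrank (.of_pow two_pos (hθ ▸ isIntegral_algebraMap)), minpoly_eq,
    Polynomial.natDegree_X_pow_sub_C]

theorem exists_finrank_eq_two_and_isSquare_algebraMap (Ω : Type*) [Field Ω] [IsAlgClosed Ω]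
    [Algebra K Ω] (hD : ¬IsSquare D) :
    ∃ L : IntermediateField K Ω, finrank K L = 2 ∧ IsSquare (algebraMap K L D) := by
  obtain ⟨θ, hθ⟩ := IsAlgClosed.exists_pow_nat_eq (algebraMap K Ω D) two_pos
  refine ⟨IntermediateField.adjoin K {θ}, finrank_adjoin_sqrt hD hθ,
    ⟨θ, IntermediateField.mem_adjoin_simple_self K θ⟩, FaithfulSMul.algebraMap_injective _ Ω ?_⟩
  rw [← IsScalarTower.algebraMap_apply, ← hθ, sq, map_mul]
  rfl

end SquareRootGenerators

section Representation

open Module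

variable {R K L : Type*} [CommRing R] [IsDedekindDomain R] [Field K] [Algebra R K]
  [IsFractionRing R K] [NeZero (2 : K)] [Field L] [Algebra K L]

theorem isSquare_algebraMap_iff {R K : Type*} [CommRing R] [IsIntegrallyClosed R] [Field K]
    [Algebra R K] [IsFractionRing R K] {d : R} : IsSquare (algebraMap R K d) ↔ IsSquare d := by
  refine ⟨fun ⟨x, hx⟩ ↦ ?_, fun h ↦ h.map _⟩
  obtain ⟨y, rfl⟩ := IsIntegrallyClosed.isIntegral_iff.1
    (.of_pow two_pos (by rw [sq, ← hx]; exact isIntegral_algebraMap) : IsIntegral R x)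
  exact ⟨y, FaithfulSMul.algebraMap_injective R K (by rw [hx, map_mul])⟩

variable (K L) in
/-- Relative to the ideal `𝔞`, the element `d` represents the pair of the quadratic extension
`L = K(√d)` and the ideal `𝔣` with `𝔣 J(d) = 𝔞⁻¹`. -/
structure Represents (𝔞 : Ideal R) (d : R) (𝔣 : Ideal R) : Prop where
  not_isSquare : ¬IsSquare d
  isSquare_algebraMap : IsSquare (algebraMap K L (algebraMap R K d))
  mul_sqrtCoeffIdeal_eq_inv :
    (𝔣 : FractionalIdeal R⁰ K) * sqrtCoeffIdeal R (algebraMap R K d) =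
      (𝔞 : FractionalIdeal R⁰ K)⁻¹

namespace Represents

variable {𝔞 𝔣 : Ideal R} {d : R}

theorem not_isSquare_coe (h : Represents K L 𝔞 d 𝔣) : ¬IsSquare (algebraMap R K d) :=
  mt isSquare_algebraMap_iff.1 h.not_isSquare

theorem unit_sq_mul (h : Represents K L 𝔞 d 𝔣) (u : Rˣ) :
    Represents K L 𝔞 ((u ^ 2 : Rˣ) * d) 𝔣 where
  not_isSquare := fun ⟨x, hx⟩ ↦ h.not_isSquare ⟨(u⁻¹ : Rˣ) * x, by
    rw [mul_mul_mul_comm, ← hx, ← mul_assoc, ← Units.val_mul, ← Units.val_mul, sq]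
    simp⟩
  isSquare_algebraMap := by
    rw [map_mul, map_mul]
    refine .mul ?_ h.isSquare_algebraMap
    rw [Units.val_pow_eq_pow_val, map_pow, map_pow]
    exact .sq _
  mul_sqrtCoeffIdeal_eq_inv := by
    rw [map_mul, Units.val_pow_eq_pow_val, map_pow, sqrtCoeffIdeal_unit_sq_mul,
      h.mul_sqrtCoeffIdeal_eq_inv]

theorem ne_zero (h : Represents K L 𝔞 d 𝔣) : d ≠ 0 := by
  rintro rfl
  exact h.not_isSquare .zero

theorem sqrtCoeffIdeal_ne_zero (h : Represents K L 𝔞 d 𝔣) :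
    sqrtCoeffIdeal R (algebraMap R K d) ≠ 0 :=
  _root_.sqrtCoeffIdeal_ne_zero (by simpa using h.ne_zero)

theorem ideal_eq {𝔣' : Ideal R} {L' : Type*} [Field L'] [Algebra K L']
    (h : Represents K L 𝔞 d 𝔣) (h' : Represents K L' 𝔞 d 𝔣') : 𝔣 = 𝔣' :=
  FractionalIdeal.coeIdeal_injective (K := K) <| mul_right_cancel₀ h.sqrtCoeffIdeal_ne_zero <|
    h.mul_sqrtCoeffIdeal_eq_inv.trans h'.mul_sqrtCoeffIdeal_eq_inv.symm

theorem mem_squaresModFour (h : Represents K L 𝔞 d 𝔣) (h𝔞 : 𝔞 ≠ ⊥) {k : R}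
    (hk : 1 + 2 * k ∈ 𝔞) : d ∈ squaresModFour 𝔞 := by
  have inv_le : (𝔞 : FractionalIdeal R⁰ K)⁻¹ ≤ sqrtCoeffIdeal R (algebraMap R K d) := by
    rw [← h.mul_sqrtCoeffIdeal_eq_inv]
    exact mul_le_of_le_one_left' FractionalIdeal.coeIdeal_le_one
  obtain ⟨d', hd', eq⟩ :=
    (inv_le_sqrtCoeffIdeal_iff h𝔞 hk (by simpa using h.ne_zero)).1 inv_le
  rwa [← FaithfulSMul.algebraMap_injective R K eq]

end Represents

theorem exists_ideal_represents {𝔞 : Ideal R} (h𝔞 : 𝔞 ≠ ⊥) {k : R} (hk : 1 + 2 * k ∈ 𝔞) {d : R}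
    (hd : d ∈ squaresModFour 𝔞) (hsq : ¬IsSquare d)
    (hdL : IsSquare (algebraMap K L (algebraMap R K d))) :
    ∃ 𝔣 ≠ ⊥, Represents K L 𝔞 d 𝔣 := by
  have d_ne_zero : algebraMap R K d ≠ 0 := by
    rw [map_ne_zero_iff _ (FaithfulSMul.algebraMap_injective R K)]
    rintro rfl
    exact hsq .zero
  have J_ne_zero := sqrtCoeffIdeal_ne_zero (R := R) d_ne_zero
  have inv_le := (inv_le_sqrtCoeffIdeal_iff h𝔞 hk d_ne_zero).2 ⟨d, hd, rfl⟩
  have le_one : (𝔞 : FractionalIdeal R⁰ K)⁻¹ * (sqrtCoeffIdeal R (algebraMap R K d))⁻¹ ≤ 1 := by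
    rw [← mul_inv_cancel₀ J_ne_zero]
    gcongr
  obtain ⟨𝔣, h𝔣⟩ := FractionalIdeal.le_one_iff_exists_coeIdeal.1 le_one
  refine ⟨𝔣, ?_, hsq, hdL, by rw [h𝔣, inv_mul_cancel_right₀ J_ne_zero]⟩
  rw [← FractionalIdeal.coeIdeal_ne_zero (K := K), h𝔣]
  exact mul_ne_zero (inv_ne_zero (FractionalIdeal.coeIdeal_ne_zero.2 h𝔞)) (inv_ne_zero J_ne_zero)

variable [Algebra.IsQuadraticExtension K L] {a : ClassGroup R → (Ideal R)⁰}

theorem exists_represents (ha : ∀ c, ClassGroup.mk0 (a c) = c)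
    (hodd : ∀ c, ∃ k, 1 + 2 * k ∈ (a c : Ideal R)) {𝔣 : Ideal R} (h𝔣 : 𝔣 ≠ ⊥) :
    ∃ c d, Represents K L (a c : Ideal R) d 𝔣 := by
  obtain ⟨D, D_not_sq, D_sq⟩ := exists_not_isSquare_isSquare_algebraMap K L
  have D_ne_zero : D ≠ 0 := by
    rintro rfl
    exact D_not_sq .zero
  obtain ⟨c, t, t_ne_zero, ht⟩ := exists_eq_spanSingleton_mul_inv ha
    (mul_ne_zero (FractionalIdeal.coeIdeal_ne_zero.2 h𝔣)
      (sqrtCoeffIdeal_ne_zero (R := R) D_ne_zero))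
  have mul_eq_inv : (𝔣 : FractionalIdeal R⁰ K) * sqrtCoeffIdeal R (t ^ 2 * D) =
      ((a c : Ideal R) : FractionalIdeal R⁰ K)⁻¹ := by
    refine mul_left_cancel₀ (FractionalIdeal.spanSingleton_ne_zero_iff.2 t_ne_zero) ?_
    rw [← ht, mul_left_comm, spanSingleton_mul_sqrtCoeffIdeal t_ne_zero]
  have inv_le : ((a c : Ideal R) : FractionalIdeal R⁰ K)⁻¹ ≤ sqrtCoeffIdeal R (t ^ 2 * D) := by
    rw [← mul_eq_inv]
    exact mul_le_of_le_one_left' FractionalIdeal.coeIdeal_le_one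
  obtain ⟨k, hk⟩ := hodd c
  obtain ⟨d, -, hd⟩ := (inv_le_sqrtCoeffIdeal_iff (nonZeroDivisors.coe_ne_zero _) hk
    (mul_ne_zero (pow_ne_zero 2 t_ne_zero) D_ne_zero)).1 inv_le
  refine ⟨c, d, ?_, ?_, hd ▸ mul_eq_inv⟩
  · rw [← isSquare_algebraMap_iff (K := K), hd]
    rintro ⟨x, hx⟩
    exact D_not_sq ⟨x / t, by field_simp; linear_combination hx⟩
  · rw [hd, map_mul, map_pow]
    exact .mul (.sq _) D_sq

theorem Represents.eq_and_exists_unit (ha : ∀ c, ClassGroup.mk0 (a c) = c)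
    {c c' : ClassGroup R} {d d' : R} {𝔣 : Ideal R} (h : Represents K L (a c : Ideal R) d 𝔣)
    (h' : Represents K L (a c' : Ideal R) d' 𝔣) : c' = c ∧ ∃ u : Rˣ, d' = (u ^ 2 : Rˣ) * d := by
  obtain ⟨t, t_ne_zero, d'_eq⟩ := exists_eq_sq_mul_of_isSquare_algebraMap h.not_isSquare_coe
    h'.not_isSquare_coe h.isSquare_algebraMap h'.isSquare_algebraMap
  have inv_eq : FractionalIdeal.spanSingleton R⁰ t * ((a c' : Ideal R) : FractionalIdeal R⁰ K)⁻¹ =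
      ((a c : Ideal R) : FractionalIdeal R⁰ K)⁻¹ := by
    rw [← h.mul_sqrtCoeffIdeal_eq_inv, ← h'.mul_sqrtCoeffIdeal_eq_inv, d'_eq, mul_left_comm,
      spanSingleton_mul_sqrtCoeffIdeal t_ne_zero]
  have span_mul_eq : FractionalIdeal.spanSingleton R⁰ t *
      ((a c : Ideal R) : FractionalIdeal R⁰ K) = (a c' : Ideal R) := by
    rw [← inv_inj, mul_inv, ← inv_eq, inv_mul_cancel_left₀
      (FractionalIdeal.spanSingleton_ne_zero_iff.2 t_ne_zero)]
  obtain ⟨c_eq, u, rfl⟩ := eq_and_exists_unit_of_spanSingleton_mul_eq ha span_mul_eq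
  refine ⟨c_eq, u, FaithfulSMul.algebraMap_injective R K ?_⟩
  rw [d'_eq, map_mul, Units.val_pow_eq_pow_val, map_pow]

end Representation

section QuadraticSubextension

open Module

theorem two_mul_card_range_powMonoidHom_two (R : Type*) [CommRing R] [IsDomain R]
    (h2 : (2 : R) ≠ 0) :
    2 * Nat.card (powMonoidHom 2 : Rˣ →* Rˣ).range = Nat.card Rˣ := by
  have ker_eq : ((powMonoidHom 2 : Rˣ →* Rˣ).ker : Set Rˣ) = {1, -1} := by
    ext u
    rw [SetLike.mem_coe, MonoidHom.mem_ker, powMonoidHom_apply, Units.ext_iff,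
      Units.val_pow_eq_pow_val, Units.val_one, sq_eq_one_iff, Set.mem_insert_iff,
      Set.mem_singleton_iff, Units.ext_iff, Units.ext_iff, Units.val_neg, Units.val_one]
  have card_ker : Nat.card (powMonoidHom 2 : Rˣ →* Rˣ).ker = 2 := by
    rw [← SetLike.coe_sort_coe, Nat.card_coe_set_eq, ker_eq, Set.ncard_pair]
    intro h
    have val_eq := congrArg Units.val h
    rw [Units.val_neg, Units.val_one] at val_eq
    exact h2 (by linear_combination val_eq)
  rw [← (powMonoidHom 2 : Rˣ →* Rˣ).ker.card_mul_index, Subgroup.index_ker, card_ker]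

/-- The quadratic extensions of `K` inside `Ω`. -/
abbrev QuadraticSubextension (K Ω : Type*) [Field K] [Field Ω] [Algebra K Ω] :=
  {L : IntermediateField K Ω // finrank K L = 2}

instance QuadraticSubextension.isQuadraticExtension {K Ω : Type*} [Field K] [Field Ω] [Algebra K Ω]
    (L : QuadraticSubextension K Ω) : Algebra.IsQuadraticExtension K L.1 :=
  ⟨L.2⟩

instance QuadraticSubextension.numberField {K Ω : Type*} [Field K] [NumberField K] [Field Ω]
    [Algebra K Ω] (L : QuadraticSubextension K Ω) : NumberField L.1 :=
  .of_module_finite K L.1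

variable {R K Ω : Type*} [CommRing R] [IsDedekindDomain R] [Field K] [Algebra R K]
  [IsFractionRing R K] [NeZero (2 : K)] [Field Ω] [Algebra K Ω]

theorem Represents.quadraticSubextension_eq {L L' : QuadraticSubextension K Ω}
    {𝔞 𝔣 𝔣' : Ideal R} {d : R} (h : Represents K L.1 𝔞 d 𝔣) (h' : Represents K L'.1 𝔞 d 𝔣') :
    L = L' :=
  Subtype.ext <| le_antisymm
    (le_of_isSquare_algebraMap h.not_isSquare_coe h.isSquare_algebraMap h'.isSquare_algebraMap)
    (le_of_isSquare_algebraMap h.not_isSquare_coe h'.isSquare_algebraMap h.isSquare_algebraMap)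

variable [IsAlgClosed Ω] {a : ClassGroup R → (Ideal R)⁰}

theorem exists_quadraticSubextension_represents {𝔞 : Ideal R} (h𝔞 : 𝔞 ≠ ⊥) {k : R}
    (hk : 1 + 2 * k ∈ 𝔞) {d : R} (hd : d ∈ squaresModFour 𝔞) (hsq : ¬IsSquare d) :
    ∃ (L : QuadraticSubextension K Ω) (𝔣 : Ideal R), 𝔣 ≠ ⊥ ∧ Represents K L.1 𝔞 d 𝔣 := by
  obtain ⟨L, hL, hdL⟩ := exists_finrank_eq_two_and_isSquare_algebraMap Ω
    (mt (isSquare_algebraMap_iff (K := K)).1 hsq)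
  obtain ⟨𝔣, h⟩ := exists_ideal_represents h𝔞 hk hd hsq hdL
  exact ⟨⟨L, hL⟩, 𝔣, h⟩

theorem exists_equiv_represents (ha : ∀ c, ClassGroup.mk0 (a c) = c)
    (hodd : ∀ c, ∃ k, 1 + 2 * k ∈ (a c : Ideal R)) :
    ∃ e : (QuadraticSubextension K Ω × {𝔣 : Ideal R // 𝔣 ≠ ⊥}) ×
          (powMonoidHom 2 : Rˣ →* Rˣ).range ≃
        Σ c, (squaresModFour (a c : Ideal R) \ {d | IsSquare d} : Set R),
      ∀ q, Represents K q.1.1.1 (a (e q).1 : Ideal R) (e q).2 q.1.2.1 := by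
  have a_ne_bot (c) : (a c : Ideal R) ≠ ⊥ := nonZeroDivisors.coe_ne_zero _
  choose k hk using hodd
  choose c d h using fun p : QuadraticSubextension K Ω × {𝔣 : Ideal R // 𝔣 ≠ ⊥} ↦
    exists_represents (K := K) (L := p.1.1) ha (fun c ↦ ⟨k c, hk c⟩) p.2.2
  have represents (p) (u : (powMonoidHom 2 : Rˣ →* Rˣ).range) :
      Represents K p.1.1 (a (c p) : Ideal R) (u.1 * d p) p.2.1 := by
    obtain ⟨_, u, rfl⟩ := u
    exact (h p).unit_sq_mul u
  let f (q : (QuadraticSubextension K Ω × {𝔣 : Ideal R // 𝔣 ≠ ⊥}) ×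
      (powMonoidHom 2 : Rˣ →* Rˣ).range) :
      Σ c, (squaresModFour (a c : Ideal R) \ {d | IsSquare d} : Set R) :=
    ⟨c q.1, q.2.1 * d q.1, (represents q.1 q.2).mem_squaresModFour (a_ne_bot _) (hk _),
      (represents q.1 q.2).not_isSquare⟩
  have f_represents (q) : Represents K q.1.1.1 (a (f q).1 : Ideal R) (f q).2 q.1.2.1 :=
    represents q.1 q.2
  refine ⟨.ofBijective f ⟨fun q q' hqq' ↦ ?_, ?_⟩, f_represents⟩
  · have represents' := f_represents q'
    rw [← hqq'] at represents'
    have pair_eq : q.1 = q'.1 := Prod.ext ((f_represents q).quadraticSubextension_eq represents')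
      (Subtype.ext ((f_represents q).ideal_eq represents'))
    have mul_eq : (q.2.1 : R) * d q.1 = q'.2.1 * d q'.1 := congrArg (fun s ↦ (s.2 : R)) hqq'
    rw [← pair_eq] at mul_eq
    exact Prod.ext pair_eq
      (Subtype.ext (Units.ext (mul_right_cancel₀ (h q.1).ne_zero mul_eq)))
  · rintro ⟨c₀, d₀, d₀_mem, d₀_not_sq⟩
    obtain ⟨L, 𝔣, h𝔣, h₀⟩ := exists_quadraticSubextension_represents (K := K) (Ω := Ω)
      (a_ne_bot c₀) (hk c₀) d₀_mem d₀_not_sq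
    obtain ⟨rfl, u, rfl⟩ := (h (L, ⟨𝔣, h𝔣⟩)).eq_and_exists_unit ha h₀
    exact ⟨((L, ⟨𝔣, h𝔣⟩), ⟨u ^ 2, u, rfl⟩), rfl⟩

end QuadraticSubextension

section Units

variable (K : Type*) [Field K]

theorem torsionOrder_eq_rootsOfUnityCount : Units.torsionOrder K = rootsOfUnityCount K := by
  refine Nat.card_congr (.ofBijective (fun u ↦ ⟨((u : (𝓞 K)ˣ) : K), ?_⟩) ⟨?_, ?_⟩)
  · obtain ⟨n, hn, hu⟩ := isOfFinOrder_iff_pow_eq_one.1 u.2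
    exact ⟨n, hn, by rw [← Units.coe_pow, hu, Units.coe_one]⟩
  · exact fun u v huv ↦ Subtype.ext (Units.coe_injective K
      (by simpa only [Subtype.mk.injEq] using huv))
  · rintro ⟨x, n, hn, hx⟩
    obtain ⟨y, rfl⟩ : ∃ y : 𝓞 K, (y : K) = x :=
      ⟨⟨x, .of_pow hn (hx ▸ isIntegral_one)⟩, rfl⟩
    have pow_eq_one : y ^ n = 1 := RingOfIntegers.coe_injective (by rw [map_pow, hx, map_one])
    refine ⟨⟨_root_.Units.ofPowEqOne y n pow_eq_one hn.ne', ?_⟩, rfl⟩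
    exact isOfFinOrder_iff_pow_eq_one.2 ⟨n, hn, _root_.Units.pow_ofPowEqOne pow_eq_one hn.ne'⟩

variable [NumberField K] [IsTotallyComplex K] [Algebra.IsQuadraticExtension ℚ K]

theorem torsion_eq_top : Units.torsion K = ⊤ := by
  refine eq_top_iff.2 fun u _ ↦ (Units.mem_torsion K).2 fun w ↦ ?_
  have norm_eq : absFieldNorm (u : K) = 1 := by
    rw [absFieldNorm, ← Rat.cast_abs, Units.norm, Rat.cast_one]
  rw [absFieldNorm_eq_sq w] at norm_eq
  exact (pow_eq_one_iff_of_nonneg (apply_nonneg w _) two_ne_zero).1 norm_eq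

instance finite_units_ringOfIntegers : Finite (𝓞 K)ˣ :=
  .of_equiv (Units.torsion K) ((Equiv.subtypeEquivRight fun u ↦ by simp [torsion_eq_top]).trans
    (Equiv.Set.univ _))

theorem card_units_eq_rootsOfUnityCount : Nat.card (𝓞 K)ˣ = rootsOfUnityCount K := by
  rw [← torsionOrder_eq_rootsOfUnityCount, Units.torsionOrder, torsion_eq_top, Subgroup.card_top]

end Units

section PairCount

variable {K : Type*} [Field K] [NumberField K]

/-- The pairs `(t, 𝔣)` of an object `t` of size `δ t` and a nonzero ideal `𝔣` with
`δ t * N(𝔣)² ≤ X`. If `δ` is the absolute discriminant of a quadratic extension of `K`, this is the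
absolute discriminant of the order of conductor `𝔣`. -/
def sizedPairs (K : Type*) [Field K] [NumberField K] {T : Type*} (δ : T → ℝ) (X : ℝ) :
    Set (T × {𝔣 : Ideal (𝓞 K) // 𝔣 ≠ ⊥}) :=
  {p | δ p.1 * (Ideal.absNorm p.2.1 : ℝ) ^ 2 ≤ X}

variable {Ω : Type*} [Field Ω] [Algebra K Ω]

/-- The absolute discriminant of a quadratic extension, as a real number. -/
noncomputable def QuadraticSubextension.absDiscr (L : QuadraticSubextension K Ω) : ℝ :=
  ((|discr L.1| : ℤ) : ℝ)

theorem QuadraticSubextension.one_le_absDiscr (L : QuadraticSubextension K Ω) :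
    1 ≤ L.absDiscr :=
  Int.cast_one_le_of_pos (abs_pos.2 (discr_ne_zero L.1))

theorem absNorm_pos_of_ne_bot {𝔞 : Ideal (𝓞 K)} (h𝔞 : 𝔞 ≠ ⊥) : (0 : ℝ) < Ideal.absNorm 𝔞 :=
  Nat.cast_pos.2 (Ideal.absNorm_ne_zero_iff_mem_nonZeroDivisors.2
    (mem_nonZeroDivisors_iff_ne_zero.2 h𝔞)).bot_lt

/-- The constant `N(𝔞)² / 𝔡_K²` relating `absFieldNorm d` to `|discr L| * N(𝔣)²` when
`Represents K L 𝔞 d 𝔣`. -/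
noncomputable def normDiscrRatio (𝔞 : Ideal (𝓞 K)) : ℝ :=
  (Ideal.absNorm 𝔞 : ℝ) ^ 2 / (discr K : ℝ) ^ 2

theorem normDiscrRatio_pos {𝔞 : Ideal (𝓞 K)} (h𝔞 : 𝔞 ≠ ⊥) : 0 < normDiscrRatio 𝔞 :=
  have := discr_ne_zero K
  div_pos (pow_pos (absNorm_pos_of_ne_bot h𝔞) 2) (by positivity)

theorem Represents.absDiscr_mul_sq_le_iff {L : QuadraticSubextension K Ω} {𝔞 𝔣 : Ideal (𝓞 K)}
    {d : 𝓞 K} (h : Represents K L.1 𝔞 d 𝔣) (h𝔞 : 𝔞 ≠ ⊥) {X : ℝ} :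
    L.absDiscr * (Ideal.absNorm 𝔣 : ℝ) ^ 2 ≤ X ↔
      absFieldNorm (d : K) ≤ X * normDiscrRatio 𝔞 := by
  have norm_pos := absNorm_pos_of_ne_bot h𝔞
  have discr_sq_pos : 0 < (discr K : ℝ) ^ 2 := by
    have := discr_ne_zero K
    positivity
  have key := abs_discr_mul_sq_eq_of_mul_sqrtCoeffIdeal_eq_inv (L := L.1) h.not_isSquare_coe
    h.isSquare_algebraMap h𝔞 h.mul_sqrtCoeffIdeal_eq_inv
  rw [normDiscrRatio, ← mul_div_assoc, le_div_iff₀ discr_sq_pos, mul_comm (absFieldNorm _), ← key,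
    mul_pow, ← mul_assoc, mul_le_mul_iff_left₀ (pow_pos norm_pos 2)]
  rfl

end PairCount

section PairDensity

/-- Imposing a condition on the elements of a family of sets `S c`, inside the disjoint union of
the family or inside each of its members. -/
def subtypeSigmaCoeEquiv {ι α : Type*} (S : ι → Set α) (P : ι → α → Prop) :
    {s : Σ i, S i // P s.1 s.2} ≃ Σ i, {x | x ∈ S i ∧ P i x} where
  toFun s := ⟨s.1.1, s.1.2, s.1.2.2, s.2⟩
  invFun s := ⟨⟨s.1, s.2, s.2.2.1⟩, s.2.2.2⟩

theorem HasNormDensity.tendsto_mul_const {K : Type*} [Field K] [NumberField K] {S : Set (𝓞 K)}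
    {δ r : ℝ} (hS : HasNormDensity S δ) (hr : 0 < r) :
    Tendsto (fun X ↦ ({x : 𝓞 K | x ∈ S ∧ absFieldNorm (x : K) ≤ X * r}.ncard : ℝ) / X) atTop
      (𝓝 (δ * r)) := by
  refine ((hS.comp (tendsto_id.atTop_mul_const hr)).mul_const r).congr fun X ↦ ?_
  rw [Function.comp_apply, id, div_mul_eq_mul_div, mul_div_mul_right _ _ hr.ne']

variable {K Ω : Type*} [Field K] [NumberField K] [Field Ω] [Algebra K Ω] [IsAlgClosed Ω]
  {a : ClassGroup (𝓞 K) → (Ideal (𝓞 K))⁰}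

theorem nonempty_sizedPairs_prod_equiv (ha : ∀ c, ClassGroup.mk0 (a c) = c)
    (hodd : ∀ c, ∃ k, 1 + 2 * k ∈ (a c : Ideal (𝓞 K))) (X : ℝ) :
    Nonempty (sizedPairs K (QuadraticSubextension.absDiscr (K := K) (Ω := Ω)) X ×
        (powMonoidHom 2 : (𝓞 K)ˣ →* (𝓞 K)ˣ).range ≃
      Σ c, {d : 𝓞 K | d ∈ squaresModFour (a c : Ideal (𝓞 K)) \ {d | IsSquare d} ∧
        absFieldNorm (d : K) ≤ X * normDiscrRatio (a c : Ideal (𝓞 K))}) := by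
  obtain ⟨e, he⟩ := exists_equiv_represents (K := K) (Ω := Ω) ha hodd
  let S (c) := squaresModFour (a c : Ideal (𝓞 K)) \ {d | IsSquare d}
  let P (c) (d : 𝓞 K) := absFieldNorm (d : K) ≤ X * normDiscrRatio (a c : Ideal (𝓞 K))
  have mem_iff (q) : q.1 ∈ sizedPairs K QuadraticSubextension.absDiscr X ↔ P (e q).1 (e q).2 :=
    (he q).absDiscr_mul_sq_le_iff (nonZeroDivisors.coe_ne_zero _)
  exact ⟨Equiv.prodSubtypeFstEquivSubtypeProd.symm.trans
    ((e.subtypeEquiv mem_iff).trans (subtypeSigmaCoeEquiv S P))⟩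

variable [IsTotallyComplex K] [Algebra.IsQuadraticExtension ℚ K]

theorem finite_sizedPairs_and_ncard_mul_eq (ha : ∀ c, ClassGroup.mk0 (a c) = c)
    (hodd : ∀ c, ∃ k, 1 + 2 * k ∈ (a c : Ideal (𝓞 K))) (X : ℝ) :
    (sizedPairs K (QuadraticSubextension.absDiscr (K := K) (Ω := Ω)) X).Finite ∧
      (sizedPairs K (QuadraticSubextension.absDiscr (K := K) (Ω := Ω)) X).ncard *
          Nat.card (powMonoidHom 2 : (𝓞 K)ˣ →* (𝓞 K)ˣ).range =
        ∑ c, {d : 𝓞 K | d ∈ squaresModFour (a c : Ideal (𝓞 K)) \ {d | IsSquare d} ∧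
          absFieldNorm (d : K) ≤ X * normDiscrRatio (a c : Ideal (𝓞 K))}.ncard := by
  obtain ⟨e⟩ := nonempty_sizedPairs_prod_equiv (Ω := Ω) ha hodd X
  have finite_lattice_points (c) : Finite {d : 𝓞 K |
      d ∈ squaresModFour (a c : Ideal (𝓞 K)) \ {d | IsSquare d} ∧
        absFieldNorm (d : K) ≤ X * normDiscrRatio (a c : Ideal (𝓞 K))} :=
    finite_absFieldNorm_le _ _
  constructor
  · have := Finite.of_equiv _ e.symm
    exact Finite.prod_left (powMonoidHom 2 : (𝓞 K)ˣ →* (𝓞 K)ˣ).range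
  · rw [← Nat.card_coe_set_eq, ← Nat.card_prod, Nat.card_congr e, Nat.card_sigma]
    rfl

variable (K Ω)

theorem finite_sizedPairs (X : ℝ) :
    (sizedPairs K (QuadraticSubextension.absDiscr (K := K) (Ω := Ω)) X).Finite := by
  choose a ha hodd using exists_mk0_eq_and_one_add_two_mul_mem (two_ne_zero (α := 𝓞 K))
  exact (finite_sizedPairs_and_ncard_mul_eq ha hodd X).1

theorem tendsto_ncard_sizedPairs_div :
    Tendsto (fun X : ℝ ↦
        ((sizedPairs K (QuadraticSubextension.absDiscr (K := K) (Ω := Ω)) X).ncard : ℝ) / X) atTop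
      (𝓝 (classNumber K * π / (rootsOfUnityCount K * ((discr K : ℝ) ^ 2 * √|discr K|)))) := by
  choose a ha hodd using exists_mk0_eq_and_one_add_two_mul_mem (two_ne_zero (α := 𝓞 K))
  have a_ne_bot (c) : (a c : Ideal (𝓞 K)) ≠ ⊥ := nonZeroDivisors.coe_ne_zero _
  have tendsto_class (c) := (hasNormDensity_squaresModFour_diff_squares (a_ne_bot c)
    (hodd c).choose_spec).tendsto_mul_const (normDiscrRatio_pos (a_ne_bot c))
  have unit_squares_pos : (0 : ℝ) < Nat.card (powMonoidHom 2 : (𝓞 K)ˣ →* (𝓞 K)ˣ).range :=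
    Nat.cast_pos.2 Nat.card_pos
  have discr_ne : (discr K : ℝ) ≠ 0 := Int.cast_ne_zero.2 (discr_ne_zero K)
  convert! (tendsto_finsetSum Finset.univ fun c _ ↦ tendsto_class c).div_const
    (Nat.card (powMonoidHom 2 : (𝓞 K)ˣ →* (𝓞 K)ˣ).range : ℝ) using 2 with X
  · rw [← Finset.sum_div, div_right_comm, ← Nat.cast_sum,
      ← (finite_sizedPairs_and_ncard_mul_eq (Ω := Ω) ha hodd X).2, Nat.cast_mul,
      mul_div_cancel_right₀ _ unit_squares_pos.ne']
  · have class_term (c) : π / (2 * (Ideal.absNorm (a c : Ideal (𝓞 K)) : ℝ) ^ 2 * √|discr K|) *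
        normDiscrRatio (a c : Ideal (𝓞 K)) = π / (2 * ((discr K : ℝ) ^ 2 * √|discr K|)) := by
      have := absNorm_pos_of_ne_bot (a_ne_bot c)
      rw [normDiscrRatio]
      field_simp
    rw [Finset.sum_congr rfl fun c _ ↦ class_term c, Finset.sum_const, Finset.card_univ,
      nsmul_eq_mul, ← card_units_eq_rootsOfUnityCount, ← two_mul_card_range_powMonoidHom_two _
        (two_ne_zero (α := 𝓞 K)), Nat.cast_mul, Nat.cast_ofNat,
      classNumber]
    field_simp

end PairDensity

section Summability

variable (K : Type*) [Field K] [NumberField K]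

theorem tendsto_sum_card_absNorm_eq_div :
    Tendsto (fun n : ℕ ↦ (∑ k ∈ Finset.Icc 1 n,
      (Nat.card {I : Ideal (𝓞 K) // Ideal.absNorm I = k} : ℝ)) / n) atTop
      (𝓝 (dedekindZeta_residue K)) := by
  refine ((Ideal.tendsto_norm_le_div_atTop₀ K).comp tendsto_natCast_atTop_atTop).congr fun n ↦ ?_
  have card_zero : Nat.card {I : Ideal (𝓞 K) // Ideal.absNorm I = 0} = 1 := by
    simp [Ideal.absNorm_eq_zero_iff]
  have card_le : Nat.card {I : Ideal (𝓞 K) // Ideal.absNorm I ≤ n} =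
      ∑ k ∈ Finset.Icc 0 n, Nat.card {I : Ideal (𝓞 K) // Ideal.absNorm I = k} := by
    rw [← Finset.card_preimage_eq_sum_card_image_eq fun k _ ↦ Ideal.finite_setOfPred_absNorm_eq k]
    simp [Set.coe_eq_subtype]
  rw [Ideal.card_norm_le_eq_card_norm_le_add_one, ← Finset.sum_Ioc_add_eq_sum_Icc n.zero_le,
    card_zero, Nat.add_right_cancel_iff] at card_le
  rw [Function.comp_apply]
  simp only [Nat.cast_le, ← Nat.cast_sum, card_le]
  rfl

theorem summable_absNorm_rpow {s : ℝ} (hs : 1 < s) :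
    Summable fun I : Ideal (𝓞 K) ↦ (Ideal.absNorm I : ℝ) ^ (-s) := by
  have finite_fiber (n : ℕ) : Finite {I : Ideal (𝓞 K) // Ideal.absNorm I = n} :=
    Ideal.finite_setOfPred_absNorm_eq n
  have summable_LSeries : LSeriesSummable
      (fun n ↦ ((Nat.card {I : Ideal (𝓞 K) // Ideal.absNorm I = n} : ℝ) : ℂ)) s :=
    LSeriesSummable_of_sum_norm_bigO_and_nonneg (r := 1)
      (Asymptotics.isBigO_atTop_natCast_rpow_of_tendsto_div_rpow (𝕜 := ℝ)
        (by simpa using tendsto_sum_card_absNorm_eq_div K))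
      (fun _ ↦ Nat.cast_nonneg _) zero_le_one (by simpa using hs)
  rw [← (Equiv.sigmaFiberEquiv Ideal.absNorm).summable_iff]
  refine (summable_sigma_of_nonneg fun _ ↦ Real.rpow_nonneg (Nat.cast_nonneg _) _).2
    ⟨fun n ↦ .of_finite, summable_LSeries.norm.congr fun n ↦ ?_⟩
  have fiber_term (I : {I : Ideal (𝓞 K) // Ideal.absNorm I = n}) :
      (Ideal.absNorm I.1 : ℝ) ^ (-s) = (n : ℝ) ^ (-s) := by rw [I.2]
  simp only [Equiv.sigmaFiberEquiv_apply, fiber_term, tsum_const, nsmul_eq_mul,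
    LSeries.norm_term_eq]
  rcases eq_or_ne n 0 with rfl | hn
  · simp [Real.zero_rpow (by linarith : -s ≠ 0)]
  · simp [hn, Real.rpow_neg, div_eq_mul_inv]

end Summability

section PrimesProd

open IsDedekindDomain

variable {R : Type*} [CommRing R] [IsDedekindDomain R]

/-- The product of a finite set of maximal ideals. These products are the squarefree ideals, which
carry the Möbius function `(-1) ^ S.card`. -/
noncomputable def primesProd (S : Finset (HeightOneSpectrum R)) : Ideal R :=
  ∏ v ∈ S, v.asIdeal

theorem primesProd_ne_bot (S : Finset (HeightOneSpectrum R)) : primesProd S ≠ ⊥ :=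
  Finset.prod_ne_zero_iff.2 fun v _ ↦ v.ne_bot

theorem primesProd_dvd_iff {S : Finset (HeightOneSpectrum R)} {I : Ideal R} :
    primesProd S ∣ I ↔ ∀ v ∈ S, v.asIdeal ∣ I := by
  classical
  refine ⟨fun h v hv ↦ (Finset.dvd_prod_of_mem _ hv).trans h, fun h ↦ ?_⟩
  have prod_eq : primesProd S = ∏ 𝔭 ∈ S.image HeightOneSpectrum.asIdeal, 𝔭 :=
    (Finset.prod_image (f := id) fun v _ w _ hvw ↦ HeightOneSpectrum.ext hvw).symm
  rw [prod_eq]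
  refine Finset.prod_primes_dvd I (fun 𝔭 h𝔭 ↦ ?_) fun 𝔭 h𝔭 ↦ ?_ <;>
    obtain ⟨v, hv, rfl⟩ := Finset.mem_image.1 h𝔭
  exacts [v.prime, h v hv]

theorem asIdeal_dvd_primesProd_iff {S : Finset (HeightOneSpectrum R)} {v : HeightOneSpectrum R} :
    v.asIdeal ∣ primesProd S ↔ v ∈ S := by
  refine ⟨fun h ↦ ?_, Finset.dvd_prod_of_mem _⟩
  obtain ⟨w, hw, hvw⟩ := (v.prime.dvd_finsetProd_iff _).1 h
  have eq : v = w := HeightOneSpectrum.ext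
    (associated_iff_eq.1 ((v.prime.dvd_prime_iff_associated w.prime).1 hvw))
  rwa [eq]

theorem primesProd_injective : Function.Injective (primesProd (R := R)) := fun S T h ↦ by
  ext v
  rw [← asIdeal_dvd_primesProd_iff, h, asIdeal_dvd_primesProd_iff]

open scoped Classical in
theorem hasSum_neg_one_pow_card_primesProd_dvd {I : Ideal R} (hI : I ≠ ⊥) :
    HasSum (fun S : Finset (HeightOneSpectrum R) ↦
      (-1 : ℝ) ^ S.card * if primesProd S ∣ I then 1 else 0) (if I = ⊤ then 1 else 0) := by
  have finite_divisors : {v : HeightOneSpectrum R | v.asIdeal ∣ I}.Finite := Ideal.finite_factors hI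
  have dvd_iff (S : Finset (HeightOneSpectrum R)) :
      primesProd S ∣ I ↔ S ∈ finite_divisors.toFinset.powerset := by
    rw [primesProd_dvd_iff, Finset.mem_powerset]
    simp only [Finset.subset_iff, Set.Finite.mem_toFinset, Set.mem_ofPred_eq]
  have eq_top_iff : I = ⊤ ↔ finite_divisors.toFinset = ∅ := by
    rw [Set.Finite.toFinset_eq_empty, Set.eq_empty_iff_forall_notMem]
    refine ⟨fun h v hv ↦ v.prime.not_isUnit (isUnit_of_dvd_one (by simpa [h] using hv)),
      fun h ↦ ?_⟩
    by_contra hI_top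
    obtain ⟨𝔭, h𝔭, hI_le⟩ := Ideal.exists_le_maximal I hI_top
    exact h ⟨𝔭, h𝔭.isPrime, ne_bot_of_le_ne_bot hI hI_le⟩ (Ideal.dvd_iff_le.2 hI_le)
  have sum_eq : ∑ S ∈ finite_divisors.toFinset.powerset,
      ((-1 : ℝ) ^ S.card * if primesProd S ∣ I then 1 else 0) = if I = ⊤ then 1 else 0 := by
    rw [Finset.sum_congr rfl fun S hS ↦ by rw [if_pos ((dvd_iff S).2 hS), mul_one]]
    simp only [eq_top_iff]
    exact_mod_cast Finset.sum_powerset_neg_one_pow_card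
  rw [← sum_eq]
  exact hasSum_sum_of_ne_finset_zero fun S hS ↦ by rw [if_neg (mt (dvd_iff S).1 hS), mul_zero]

end PrimesProd

section DominatedSums

theorem exists_abs_le_mul_of_tendsto_div {f : ℝ → ℝ} {A : ℝ} (hf : Monotone f)
    (hf₀ : ∀ X < 1, f X = 0) (hA : Tendsto (fun X ↦ f X / X) atTop (𝓝 A)) :
    ∃ C, ∀ X > 0, |f X| ≤ C * X := by
  have f_nonneg (X) : 0 ≤ f X :=
    (hf₀ (min X 0) (min_lt_of_right_lt zero_lt_one)).symm.le.trans (hf (min_le_left _ _))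
  obtain ⟨Y, hY⟩ := eventually_atTop.1 (hA.eventually_lt_const (lt_add_one A))
  refine ⟨max (A + 1) (f Y), fun X hX ↦ ?_⟩
  rw [abs_of_nonneg (f_nonneg X)]
  rcases le_total Y X with hYX | hXY
  · exact ((div_lt_iff₀ hX).1 (hY X hYX)).le.trans
      (mul_le_mul_of_nonneg_right (le_max_left _ _) hX.le)
  rcases lt_or_ge X 1 with hX₁ | hX₁
  · rw [hf₀ X hX₁]
    exact mul_nonneg ((f_nonneg Y).trans (le_max_right _ _)) hX.le
  · calc f X ≤ f Y := hf hXY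
      _ ≤ max (A + 1) (f Y) := le_max_right _ _
      _ ≤ max (A + 1) (f Y) * X :=
        le_mul_of_one_le_right ((f_nonneg Y).trans (le_max_right _ _)) hX₁

theorem tendsto_tsum_mul_comp_mul_div {ι : Type*} {c r : ι → ℝ} (hc : ∀ i, |c i| ≤ 1)
    (hr : ∀ i, 0 < r i) (hr_summable : Summable r) {f : ℝ → ℝ} {A C : ℝ}
    (hA : Tendsto (fun X ↦ f X / X) atTop (𝓝 A)) (hC : ∀ X > 0, |f X| ≤ C * X) :
    Tendsto (fun X ↦ (∑' i, c i * f (X * r i)) / X) atTop (𝓝 (A * ∑' i, c i * r i)) := by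
  simp only [← tsum_mul_left, ← tsum_div_const]
  refine tendsto_tsum_of_dominated_convergence (hr_summable.mul_left C) (fun i ↦ ?_) ?_
  · have scaled := ((hA.comp (tendsto_id.atTop_mul_const (hr i))).mul_const (c i * r i))
    refine scaled.congr' ?_
    filter_upwards [eventually_gt_atTop 0] with X hX
    have := hr i
    simp only [Function.comp_apply, id]
    field_simp
  · filter_upwards [eventually_gt_atTop 0] with X hX i
    rw [Real.norm_eq_abs, abs_div, abs_mul, abs_of_pos hX, div_le_iff₀ hX]
    calc |c i| * |f (X * r i)| ≤ 1 * (C * (X * r i)) :=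
          mul_le_mul (hc i) (hC _ (mul_pos hX (hr i))) (abs_nonneg _) zero_le_one
      _ = C * r i * X := by ring

theorem ncard_eq_tsum_ncard_fiber {α ι : Type*} {P : Set (α × ι)} (hP : P.Finite) :
    (P.ncard : ℝ) = ∑' i, ({x | (x, i) ∈ P}.ncard : ℝ) := by
  let fiberEquiv : P ≃ Σ i, {x | (x, i) ∈ P} :=
    ⟨fun p ↦ ⟨p.1.2, p.1.1, p.2⟩, fun s ↦ ⟨(s.2, s.1), s.2.2⟩, fun _ ↦ rfl, fun _ ↦ rfl⟩
  have := hP.to_subtype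
  have := Finite.of_equiv _ fiberEquiv
  have finite_fiber (i) : Finite {x | (x, i) ∈ P} :=
    .of_injective (Sigma.mk (β := fun i ↦ {x | (x, i) ∈ P}) i) sigma_mk_injective
  calc (P.ncard : ℝ) = ∑' _ : Σ i, {x | (x, i) ∈ P}, (1 : ℝ) := by
        rw [tsum_const, nsmul_eq_mul, mul_one, ← Nat.card_congr fiberEquiv, Nat.card_coe_set_eq]
    _ = ∑' i, ∑' _ : {x | (x, i) ∈ P}, (1 : ℝ) :=
        Summable.tsum_sigma' (fun i ↦ .of_finite) .of_finite
    _ = ∑' i, ({x | (x, i) ∈ P}.ncard : ℝ) :=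
        tsum_congr fun i ↦ by rw [tsum_const, nsmul_eq_mul, mul_one, Nat.card_coe_set_eq]

end DominatedSums

section Sieve

open IsDedekindDomain

variable {K : Type*} [Field K] [NumberField K] {T : Type*} {δ : T → ℝ}

theorem absNorm_zpow_neg_two_pos {𝔪 : Ideal (𝓞 K)} (h𝔪 : 𝔪 ≠ ⊥) :
    0 < (Ideal.absNorm 𝔪 : ℝ) ^ (-2 : ℤ) :=
  zpow_pos (absNorm_pos_of_ne_bot h𝔪) _

theorem mul_sq_le_iff_le_mul_zpow_neg_two {x y X : ℝ} (hy : 0 < y) :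
    x * y ^ 2 ≤ X ↔ x ≤ X * y ^ (-2 : ℤ) := by
  rw [zpow_neg, ← div_eq_mul_inv, le_div_iff₀ (zpow_pos hy 2)]
  rfl

theorem ncard_sizedPairs_eq_tsum {X : ℝ} (hfin : (sizedPairs K δ X).Finite) :
    ((sizedPairs K δ X).ncard : ℝ) = ∑' 𝔣 : {𝔣 : Ideal (𝓞 K) // 𝔣 ≠ ⊥},
      ({t | δ t ≤ X * (Ideal.absNorm 𝔣.1 : ℝ) ^ (-2 : ℤ)}.ncard : ℝ) := by
  rw [ncard_eq_tsum_ncard_fiber hfin]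
  refine tsum_congr fun 𝔣 ↦ ?_
  simp only [← mul_sq_le_iff_le_mul_zpow_neg_two (absNorm_pos_of_ne_bot 𝔣.2)]
  rfl

theorem ncard_sizedPairs_dvd {𝔪 : Ideal (𝓞 K)} (h𝔪 : 𝔪 ≠ ⊥) (X : ℝ) :
    {p | p ∈ sizedPairs K δ X ∧ 𝔪 ∣ p.2.1}.ncard =
      (sizedPairs K δ (X * (Ideal.absNorm 𝔪 : ℝ) ^ (-2 : ℤ))).ncard := by
  let mulLeft (p : T × {𝔣 : Ideal (𝓞 K) // 𝔣 ≠ ⊥}) : T × {𝔣 : Ideal (𝓞 K) // 𝔣 ≠ ⊥} :=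
    (p.1, ⟨𝔪 * p.2.1, mul_ne_zero h𝔪 p.2.2⟩)
  have mulLeft_injective : Function.Injective mulLeft := fun p q hpq ↦
    Prod.ext (congrArg (fun p ↦ p.1) hpq :) (Subtype.ext (mul_left_cancel₀ h𝔪
      (congrArg (fun p ↦ p.2.1) hpq :)))
  have mulLeft_mem_iff (p) : mulLeft p ∈ sizedPairs K δ X ↔
      p ∈ sizedPairs K δ (X * (Ideal.absNorm 𝔪 : ℝ) ^ (-2 : ℤ)) := by
    simp only [sizedPairs, mulLeft, Set.mem_ofPred_eq, map_mul, Nat.cast_mul,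
      ← mul_sq_le_iff_le_mul_zpow_neg_two (absNorm_pos_of_ne_bot h𝔪), mul_pow, mul_assoc,
      mul_comm ((Ideal.absNorm 𝔪 : ℝ) ^ 2)]
  rw [← Set.ncard_image_of_injective (sizedPairs K δ _) mulLeft_injective]
  congr 1
  ext ⟨t, 𝔣, h𝔣⟩
  constructor
  · rintro ⟨hX, 𝔤, rfl⟩
    exact ⟨(t, ⟨𝔤, right_ne_zero_of_mul h𝔣⟩), (mulLeft_mem_iff _).1 hX, rfl⟩
  · rintro ⟨p, hp, h_eq⟩
    rw [← h_eq]
    exact ⟨(mulLeft_mem_iff p).2 hp, dvd_mul_right _ _⟩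

theorem ncard_sizedPairs_eq_top (X : ℝ) :
    {p | p ∈ sizedPairs K δ X ∧ p.2.1 = ⊤}.ncard = {t | δ t ≤ X}.ncard := by
  rw [← Set.ncard_image_of_injective {t | δ t ≤ X} (f := fun t ↦
    (t, (⟨⊤, top_ne_bot⟩ : {𝔣 : Ideal (𝓞 K) // 𝔣 ≠ ⊥}))) fun t t' h ↦ congrArg Prod.fst h]
  congr 1
  ext ⟨t, 𝔣, h𝔣⟩
  constructor
  · rintro ⟨hX, rfl⟩
    exact ⟨t, by simpa [sizedPairs] using hX, rfl⟩
  · rintro ⟨t, ht, h_eq⟩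
    rw [← h_eq]
    exact ⟨by simpa [sizedPairs] using ht, rfl⟩

open scoped Classical in
theorem ncard_sep_eq_sum_boole {α : Type*} {P : Set α} (hP : P.Finite) (Q : α → Prop) :
    ({x | x ∈ P ∧ Q x}.ncard : ℝ) = ∑ x ∈ hP.toFinset, if Q x then 1 else 0 := by
  rw [Finset.sum_boole, ← Set.ncard_coe_finset, Finset.coe_filter]
  simp only [Set.Finite.mem_toFinset]

/- Möbius inversion: `∑ (-1) ^ #S` over the sets `S` of primes dividing `𝔣` vanishes unless
`𝔣 = ⊤`. -/
theorem ncard_le_eq_tsum_ncard_sizedPairs {X : ℝ} (hfin : (sizedPairs K δ X).Finite) :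
    ({t | δ t ≤ X}.ncard : ℝ) = ∑' S : Finset (HeightOneSpectrum (𝓞 K)), (-1 : ℝ) ^ S.card *
      (sizedPairs K δ (X * (Ideal.absNorm (primesProd S) : ℝ) ^ (-2 : ℤ))).ncard := by
  classical
  have moebius := hasSum_sum (s := hfin.toFinset) fun p _ ↦
    hasSum_neg_one_pow_card_primesProd_dvd p.2.2
  simp only [← ncard_sizedPairs_dvd (primesProd_ne_bot _), ncard_sep_eq_sum_boole hfin,
    Finset.mul_sum, moebius.tsum_eq, ← ncard_sizedPairs_eq_top (K := K) X]
  exact Finset.sum_congr rfl fun _ _ ↦ if_congr Iff.rfl rfl rfl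

variable (K) in
theorem summable_absNorm_zpow_neg_two :
    Summable fun I : Ideal (𝓞 K) ↦ (Ideal.absNorm I : ℝ) ^ (-2 : ℤ) :=
  (summable_absNorm_rpow K one_lt_two).congr fun I ↦ by
    rw [← Real.rpow_intCast]
    norm_num

variable (K) in
theorem dedekindZetaTwo_pos : 0 < dedekindZetaTwo K :=
  ((summable_absNorm_zpow_neg_two K).comp_injective Subtype.val_injective).tsum_pos
    (fun I ↦ (absNorm_zpow_neg_two_pos I.2).le) ⟨⊤, top_ne_bot⟩
    (absNorm_zpow_neg_two_pos top_ne_bot)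

theorem one_le_of_mem_sizedPairs (hδ : ∀ t, 1 ≤ δ t) {X : ℝ}
    {p : T × {𝔣 : Ideal (𝓞 K) // 𝔣 ≠ ⊥}} (hp : p ∈ sizedPairs K δ X) : 1 ≤ X := by
  have one_le_absNorm : (1 : ℝ) ≤ Ideal.absNorm p.2.1 :=
    Nat.one_le_cast.2 (Nat.cast_pos.1 (absNorm_pos_of_ne_bot p.2.2))
  exact (one_le_mul_of_one_le_of_one_le (hδ p.1) (one_le_pow₀ one_le_absNorm)).trans hp

theorem exists_ncard_sizedPairs_le_mul (hδ : ∀ t, 1 ≤ δ t)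
    (hfin : ∀ X, (sizedPairs K δ X).Finite) {A : ℝ}
    (hA : Tendsto (fun X : ℝ ↦ ((sizedPairs K δ X).ncard : ℝ) / X) atTop (𝓝 A)) :
    ∃ C : ℝ, ∀ X > 0, |((sizedPairs K δ X).ncard : ℝ)| ≤ C * X := by
  refine exists_abs_le_mul_of_tendsto_div (fun X Y hXY ↦ ?_) (fun X hX ↦ ?_) hA
  · exact Nat.cast_le.2 (Set.ncard_le_ncard (fun p hp ↦ le_trans hp hXY) (hfin Y))
  · rw [Set.eq_empty_of_forall_notMem fun p hp ↦ (one_le_of_mem_sizedPairs hδ hp).not_gt hX,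
      Set.ncard_empty, Nat.cast_zero]

theorem tendsto_ncard_le_div_of_sizedPairs (hδ : ∀ t, 1 ≤ δ t)
    (hfin : ∀ X, (sizedPairs K δ X).Finite) {A : ℝ}
    (hA : Tendsto (fun X : ℝ ↦ ((sizedPairs K δ X).ncard : ℝ) / X) atTop (𝓝 A)) :
    Tendsto (fun X : ℝ ↦ ({t | δ t ≤ X}.ncard : ℝ) / X) atTop (𝓝 (A / dedekindZetaTwo K)) := by
  obtain ⟨C, hC⟩ := exists_ncard_sizedPairs_le_mul hδ hfin hA
  have ncard_le (X : ℝ) (hX : X > 0) : |({t | δ t ≤ X}.ncard : ℝ)| ≤ C * X := by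
    refine le_trans ?_ (hC X hX)
    rw [Nat.abs_cast, Nat.abs_cast, ← ncard_sizedPairs_eq_top (K := K)]
    exact Nat.cast_le.2 (Set.ncard_le_ncard (fun p hp ↦ hp.1) (hfin X))
  obtain ⟨B, hB⟩ : ∃ B, Tendsto (fun X : ℝ ↦ ({t | δ t ≤ X}.ncard : ℝ) / X) atTop (𝓝 B) :=
    ⟨_, (tendsto_tsum_mul_comp_mul_div (c := fun S : Finset (HeightOneSpectrum (𝓞 K)) ↦
        (-1 : ℝ) ^ S.card) (fun S ↦ by simp)
      (fun S ↦ absNorm_zpow_neg_two_pos (primesProd_ne_bot S))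
      ((summable_absNorm_zpow_neg_two K).comp_injective primesProd_injective) hA hC).congr
      fun X ↦ by rw [ncard_le_eq_tsum_ncard_sizedPairs (hfin X)]⟩
  -- Summing the limit just obtained over all `𝔣` recovers `A`, which determines `B`.
  have A_eq : A = B * dedekindZetaTwo K := by
    refine tendsto_nhds_unique hA ?_
    convert! tendsto_tsum_mul_comp_mul_div (c := fun _ : {𝔣 : Ideal (𝓞 K) // 𝔣 ≠ ⊥} ↦ 1)
      (fun _ ↦ abs_one.le) (fun 𝔣 ↦ absNorm_zpow_neg_two_pos 𝔣.2)
      ((summable_absNorm_zpow_neg_two K).comp_injective Subtype.val_injective) hB ncard_le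
      using 2 with X
    · simp only [ncard_sizedPairs_eq_tsum (hfin X), one_mul]
    · simp only [dedekindZetaTwo, one_mul]
  rwa [A_eq, mul_div_cancel_right₀ _ (dedekindZetaTwo_pos K).ne']

end Sieve

section LocalFactor

variable (K : Type*) [Field K] [NumberField K]

theorem gTwo_one_of_isPrime (h : (Ideal.span {(2 : 𝓞 K)}).IsPrime) : gTwo K 1 = 1 + 4⁻¹ := by
  rw [gTwo, if_pos h]
  norm_num [Real.rpow_neg]

theorem gTwo_one_of_not_isPrime (h : ¬(Ideal.span {(2 : 𝓞 K)}).IsPrime) :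
    gTwo K 1 = 1 + 2⁻¹ := by
  rw [gTwo, if_neg h]
  split_ifs <;> norm_num [Real.rpow_neg]

variable {K} [Algebra.IsQuadraticExtension ℚ K]

theorem gTwo_one_eq_one_add_inv_absNorm {𝔭 : Ideal (𝓞 K)} (h𝔭 : 𝔭.IsPrime) (h2 : 2 ∈ 𝔭) :
    gTwo K 1 = 1 + (Ideal.absNorm 𝔭 : ℝ)⁻¹ := by
  have le : Ideal.span {(2 : 𝓞 K)} ≤ 𝔭 := (Ideal.span_singleton_le_iff_mem _).2 h2
  have absNorm_two : Ideal.absNorm (Ideal.span {(2 : 𝓞 K)}) = 2 ^ 2 := absNorm_span_natCast_eq_sq 2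
  by_cases inert : (Ideal.span {(2 : 𝓞 K)}).IsPrime
  · have eq : Ideal.span {(2 : 𝓞 K)} = 𝔭 :=
      (inert.isMaximal (by simp)).eq_of_le h𝔭.ne_top le
    rw [gTwo_one_of_isPrime K inert, ← eq, absNorm_two]
    norm_num
  · obtain ⟨𝔮, h𝔮⟩ := Ideal.dvd_iff_le.2 le
    have norm_mul : Ideal.absNorm 𝔭 * Ideal.absNorm 𝔮 = 2 ^ 2 := by
      rw [← map_mul, ← h𝔮, absNorm_two]
    have norm_ne_one : Ideal.absNorm 𝔭 ≠ 1 := fun h ↦ h𝔭.ne_top (Ideal.absNorm_eq_one_iff.1 h)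
    have conorm_ne_one : Ideal.absNorm 𝔮 ≠ 1 := fun h ↦ inert <| by
      rwa [h𝔮, Ideal.absNorm_eq_one_iff.1 h, Ideal.mul_top]
    have norm_eq_two : Ideal.absNorm 𝔭 = 2 :=
      ((Nat.prime_two.mul_eq_prime_sq_iff norm_ne_one conorm_ne_one).1 norm_mul).1
    rw [gTwo_one_of_not_isPrime K inert, norm_eq_two, Nat.cast_ofNat]

end LocalFactor

section Main

variable (K : Type*) [Field K] [NumberField K]

theorem quadCount_eq_ncard (n : ℕ) :
    quadCount K n =
      {L : QuadraticSubextension K (AlgebraicClosure K) | L.absDiscr ≤ n}.ncard := by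
  rw [← Nat.card_coe_set_eq]
  have absDiscr_le_iff (L : QuadraticSubextension K (AlgebraicClosure K)) :
      L.absDiscr ≤ n ↔ |discr L.1| ≤ n := by
    rw [QuadraticSubextension.absDiscr, ← Int.cast_natCast n, Int.cast_le]
  exact Nat.card_congr ⟨fun L ↦ ⟨⟨L.1, L.2.1⟩, (absDiscr_le_iff _).2 L.2.2.choose_spec⟩,
    fun L ↦ ⟨L.1.1, L.1.2, inferInstance, (absDiscr_le_iff _).1 L.2⟩, fun _ ↦ rfl, fun _ ↦ rfl⟩

theorem isTotallyComplex_of_isEmpty_ringHom_real {K : Type*} [Field K] (h : IsEmpty (K →+* ℝ)) :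
    IsTotallyComplex K :=
  ⟨fun _ ↦ not_isReal_iff_isComplex.1 fun hw ↦ h.elim (embedding_of_isReal hw)⟩

theorem natAbs_discr_rpow :
    ((discr K).natAbs : ℝ) ^ (-(5 : ℝ) / 2) = ((discr K : ℝ) ^ 2 * √|discr K|)⁻¹ := by
  have abs_pos : 0 < |(discr K : ℝ)| := abs_pos.2 (Int.cast_ne_zero.2 (discr_ne_zero K))
  rw [Nat.cast_natAbs, Int.cast_abs, neg_div, Real.rpow_neg abs_pos.le,
    show (5 / 2 : ℝ) = (2 : ℕ) + 1 / 2 by norm_num, Real.rpow_add abs_pos, Real.rpow_natCast,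
    sq_abs, Real.sqrt_eq_rpow]

end Main

theorem quadratic_count_imaginary_oddClassNumber_general
    (K : Type*) [Field K] [NumberField K]
    (hdeg : Module.finrank ℚ K = 2) (himag : IsEmpty (K →+* ℝ)) :
    Tendsto (fun n : ℕ => (quadCount K n : ℝ) / (n : ℝ)) atTop
      (nhds ((((NumberField.discr K).natAbs : ℝ) ^ (-(5 : ℝ) / 2) * Real.pi *
            (NumberField.classNumber K : ℝ)) /
          ((rootsOfUnityCount K : ℝ) * dedekindZetaTwo K) *
        ∏ᶠ 𝔭 ∈ {𝔭 : Ideal (𝓞 K) | 𝔭.IsPrime ∧ (2 : 𝓞 K) ∈ 𝔭},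
          gTwo K 1 / (1 + ((Ideal.absNorm 𝔭 : ℝ))⁻¹))) := by
  have : Algebra.IsQuadraticExtension ℚ K := ⟨hdeg⟩
  have : IsTotallyComplex K := isTotallyComplex_of_isEmpty_ringHom_real himag
  have local_factor_eq_one (𝔭 : Ideal (𝓞 K)) (h𝔭 : 𝔭 ∈ {𝔭 | 𝔭.IsPrime ∧ 2 ∈ 𝔭}) :
      gTwo K 1 / (1 + (Ideal.absNorm 𝔭 : ℝ)⁻¹) = 1 := by
    rw [gTwo_one_eq_one_add_inv_absNorm h𝔭.1 h𝔭.2, div_self (by positivity)]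
  have key := (tendsto_ncard_le_div_of_sizedPairs QuadraticSubextension.one_le_absDiscr
    (finite_sizedPairs K (AlgebraicClosure K)) (tendsto_ncard_sizedPairs_div K _)).comp
      tendsto_natCast_atTop_atTop
  rw [finprod_mem_eq_one_of_forall_eq_one local_factor_eq_one, mul_one, natAbs_discr_rpow]
  convert! key using 2 with n
  · rw [quadCount_eq_ncard, Function.comp_apply]
  · field_simp

theorem quadratic_count_imaginary_oddClassNumber
    (K : Type*) [Field K] [NumberField K]
    (hdeg : Module.finrank ℚ K = 2) (himag : IsEmpty (K →+* ℝ))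
    (hodd : Odd (NumberField.classNumber K)) :
    Tendsto (fun n : ℕ => (quadCount K n : ℝ) / (n : ℝ)) atTop
      (nhds ((((NumberField.discr K).natAbs : ℝ) ^ (-(5 : ℝ) / 2) * Real.pi *
            (NumberField.classNumber K : ℝ)) /
          ((rootsOfUnityCount K : ℝ) * dedekindZetaTwo K) *
        ∏ᶠ 𝔭 ∈ {𝔭 : Ideal (𝓞 K) | 𝔭.IsPrime ∧ (2 : 𝓞 K) ∈ 𝔭},
          gTwo K 1 / (1 + ((Ideal.absNorm 𝔭 : ℝ))⁻¹))) :=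
  quadratic_count_imaginary_oddClassNumber_general K hdeg himag
end

section
/- Let K be an imaginary quadratic number field (degree 2 over ℚ, no real embeddings) with odd class number that contains no element x with x² = -1 and no element x with x² = -2 (i.e. K ≠ ℚ(i), ℚ(√-2)). Then there exists a prime number p with p ≡ 3 (mod 4) such that K contains an element x with x² = -p; that is, K = ℚ(√-p) for some prime p ≡ 3 (mod 4). -/
open NumberField

/-!
If `I ^ 2 = (p)` for a prime `p`, then odd class number makes `I = (x)` principal, so `p` is
`x ^ 2` up to a unit. The units of an imaginary quadratic field are roots of unity, and in the
absence of `√-1` each of them is plus or minus a square; hence `p` or `-p` is a square in `K`. It is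
`-p`, since `ℚ(√p)` has a real embedding and `K` has none.

Write `K = ℚ(√-d)` with `d` squarefree. Every prime `p ∣ d` ramifies, with `I = (p, √-d)`, so
`√-p ∈ K`. As `√-2 ∉ K`, such a `p` is odd; and `p ≡ 1 (mod 4)` is impossible, because then `2`
would ramify too, with `I = (2, 1 + √-p)`.
-/

open IntermediateField

section Ring

variable {R : Type*} [CommRing R]

theorem span_pair_sq_eq_span_singleton {a b c : R} (hb : b ^ 2 = a * c) (hac : IsCoprime a c) :
    Ideal.span {a, b} ^ 2 = Ideal.span {a} := by
  rw [sq, Ideal.span_pair_mul_span_pair]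
  apply le_antisymm
  · rw [Ideal.span_le]
    rintro _ (rfl | rfl | rfl | rfl) <;> rw [SetLike.mem_coe, Ideal.mem_span_singleton]
    · exact dvd_mul_right a a
    · exact dvd_mul_right a b
    · exact dvd_mul_left a b
    · exact ⟨c, by rw [← sq, hb]⟩
  · obtain ⟨r, s, hrs⟩ := hac
    have ha : r * (a * a) + s * (b * b) = a := by linear_combination a * hrs + s * hb
    have hmem : r * (a * a) + s * (b * b) ∈ Ideal.span {a * a, a * b, b * a, b * b} :=
      add_mem (Ideal.mul_mem_left _ _ (Ideal.subset_span (by simp)))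
        (Ideal.mul_mem_left _ _ (Ideal.subset_span (by simp)))
    rwa [ha, ← Ideal.span_singleton_le_iff_mem] at hmem

theorem exists_ideal_sq_eq_span_natCast_of_dvd {d m : ℕ} (hd : Squarefree d) (hmd : m ∣ d)
    (hsq : IsSquare (-(d : R))) : ∃ I : Ideal R, I ^ 2 = Ideal.span {(m : R)} := by
  obtain ⟨e, rfl⟩ := hmd
  obtain ⟨t, ht⟩ := hsq
  have hcop : IsCoprime (m : R) (-e : R) :=
    (Nat.coprime_of_squarefree_mul hd).cast.neg_right
  refine ⟨Ideal.span {(m : R), t}, span_pair_sq_eq_span_singleton ?_ hcop⟩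
  rw [sq, ← ht]
  push_cast
  ring

theorem exists_ideal_sq_eq_span_two {n : ℕ} (hn : n % 4 = 1) (hsq : IsSquare (-(n : R))) :
    ∃ I : Ideal R, I ^ 2 = Ideal.span {(2 : R)} := by
  obtain ⟨t, ht⟩ := hsq
  obtain ⟨k, rfl⟩ : ∃ k, n = 4 * k + 1 := ⟨n / 4, by omega⟩
  push_cast at ht
  have hcop : IsCoprime (2 : R) (t - 2 * k) :=
    ⟨-k * (2 + t), -t, by linear_combination ht⟩
  exact ⟨Ideal.span {2, 1 + t},
    span_pair_sq_eq_span_singleton (by linear_combination -ht) hcop⟩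

end Ring

theorem isSquare_of_pow_eq_one_of_odd {M : Type*} [Monoid M] {g : M} {n : ℕ} (hn : Odd n)
    (hg : g ^ n = 1) : IsSquare g := by
  obtain ⟨m, rfl⟩ := hn
  refine ⟨g ^ (m + 1), ?_⟩
  rw [← pow_add, show m + 1 + (m + 1) = 2 * m + 1 + 1 by ring, pow_succ, hg, one_mul]

theorem pow_eq_neg_one_of_orderOf_eq_two_mul {R : Type*} [CommRing R] [NoZeroDivisors R] {u : Rˣ}
    {m : ℕ} (hm : m ≠ 0) (hu : orderOf u = 2 * m) : u ^ m = -1 := by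
  have hsq : (u ^ m) ^ 2 = 1 ^ 2 := by rw [← pow_mul, mul_comm, ← hu, pow_orderOf_eq_one, one_pow]
  refine (Units.eq_or_eq_neg_of_sq_eq_sq _ _ hsq).resolve_left fun h ↦ ?_
  have hle : orderOf u ≤ m := orderOf_le_of_pow_eq_one (Nat.pos_of_ne_zero hm) h
  omega

theorem isSquare_or_isSquare_neg_of_isOfFinOrder {R : Type*} [CommRing R] [NoZeroDivisors R]
    (hneg : ¬IsSquare (-1 : R)) {u : Rˣ} (hu : IsOfFinOrder u) :
    IsSquare u ∨ IsSquare (-u) := by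
  rcases Nat.even_or_odd' (orderOf u) with ⟨m, heven | hodd⟩
  · right
    have hpow : u ^ m = -1 :=
      pow_eq_neg_one_of_orderOf_eq_two_mul (by have := hu.orderOf_pos; omega) heven
    have hm : Odd m := by
      refine Nat.not_even_iff_odd.1 fun hm ↦ hneg ?_
      simpa [hpow] using (hm.isSquare_pow u).map (Units.coeHom R)
    exact isSquare_of_pow_eq_one_of_odd hm (by rw [hm.neg_pow, hpow, neg_neg])
  · exact .inl (isSquare_of_pow_eq_one_of_odd ⟨m, hodd⟩ (pow_orderOf_eq_one u))

theorem isSquare_algebraMap_iff_s9 {R A : Type*} [CommRing R] [CommRing A] [Algebra R A]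
    [IsIntegrallyClosedIn R A] {a : R} : IsSquare (algebraMap R A a) ↔ IsSquare a := by
  refine ⟨fun ⟨x, hx⟩ ↦ ?_, fun h ↦ h.map (algebraMap R A)⟩
  have hint : IsIntegral R (x ^ 2) := by rw [sq, ← hx]; exact isIntegral_algebraMap
  obtain ⟨r, rfl⟩ := IsIntegrallyClosedIn.exists_algebraMap_eq_of_isIntegral_pow two_pos hint
  exact ⟨r, IsIntegralClosure.algebraMap_injective R R A (by rw [hx, map_mul])⟩

theorem isSquare_or_isSquare_neg_of_sq_eq_span_singleton {R : Type*} [CommRing R]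
    [IsDedekindDomain R] [Fintype (ClassGroup R)] (hodd : Odd (Fintype.card (ClassGroup R)))
    (hunits : ∀ u : Rˣ, IsSquare u ∨ IsSquare (-u)) {I : Ideal R} {a : R}
    (hI : I ^ 2 = Ideal.span {a}) : IsSquare a ∨ IsSquare (-a) := by
  have hprin : I.IsPrincipal :=
    Ideal.IsPrincipal.of_isPrincipal_pow_of_coprime (Nat.coprime_two_left.2 hodd) (hI ▸ ⟨a, rfl⟩)
  obtain ⟨x, rfl⟩ := hprin
  rw [Ideal.submodule_span_eq, Ideal.span_singleton_pow,
    Ideal.span_singleton_eq_span_singleton] at hI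
  obtain ⟨u, rfl⟩ := hI
  have hx : IsSquare (x ^ 2) := .sq x
  refine (hunits u).imp (fun h ↦ hx.mul (h.map (Units.coeHom R))) fun h ↦ ?_
  simpa using hx.mul (h.map (Units.coeHom R))

open Polynomial in
theorem nonempty_algHom_of_sq_eq_of_adjoin_eq_top {F E L : Type*} [Field F] [Field E] [Field L]
    [Algebra F E] [Algebra F L] {x : E} {a : F} (hx : x ^ 2 = algebraMap F E a)
    (htop : F⟮x⟯ = ⊤) (ha : IsSquare (algebraMap F L a)) : Nonempty (E →ₐ[F] L) := by
  obtain ⟨b, hb⟩ := ha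
  have hfactor : (X ^ 2 - C a).map (algebraMap F L) = (X - C b) * (X + C b) := by
    simp only [Polynomial.map_sub, Polynomial.map_pow, map_X, map_C, hb, C_mul]
    ring
  have hsplits : ((X ^ 2 - C a).map (algebraMap F L)).Splits :=
    hfactor ▸ (Splits.X_sub_C b).mul (Splits.X_add_C b)
  have hdvd : minpoly F x ∣ X ^ 2 - C a := minpoly.dvd F x (by simp [hx])
  have hne : X ^ 2 - C a ≠ 0 := X_pow_sub_C_ne_zero two_pos a
  refine nonempty_algHom_of_adjoin_splits (S := {x}) ?_ htop
  rintro _ rfl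
  exact ⟨.of_pow two_pos (hx ▸ isIntegral_algebraMap),
    hsplits.of_dvd (Polynomial.map_ne_zero hne) (Polynomial.map_dvd _ hdvd)⟩

theorem exists_squarefree_mul_sq_eq {q : ℚ} (hq : 0 < q) :
    ∃ d : ℕ, Squarefree d ∧ ∃ r : ℚ, r ≠ 0 ∧ d * r ^ 2 = q := by
  obtain ⟨n, hn⟩ := Int.eq_ofNat_of_zero_le (Rat.num_nonneg.2 hq.le)
  obtain ⟨d, b, hdb, hd⟩ := Nat.sq_mul_squarefree (n * q.den)
  have hden : (q.den : ℚ) ≠ 0 := by exact_mod_cast q.den_nz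
  have hqd : d * (b / q.den : ℚ) ^ 2 = q := by
    have hdb' : (b : ℚ) ^ 2 * d = n * q.den := by exact_mod_cast hdb
    have hnum : q * q.den = n := by rw [Rat.mul_den_eq_num, hn, Int.cast_natCast]
    field_simp
    linear_combination hdb' - q.den * hnum
  refine ⟨d, hd, b / q.den, ?_, hqd⟩
  intro h0
  simp [h0, hq.ne] at hqd

section NumberField

variable {K : Type*} [Field K]

theorem isTotallyComplex_of_isEmpty_ringHom_real_s9 (hK : IsEmpty (K →+* ℝ)) :
    IsTotallyComplex K where
  isComplex _ := InfinitePlace.not_isReal_iff_isComplex.1 fun hv ↦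
    hK.false (InfinitePlace.embedding_of_isReal hv)

theorem isSquare_neg_natCast_ringOfIntegers_iff [NumberField K] {n : ℕ} :
    IsSquare (-(n : 𝓞 K)) ↔ ∃ x : K, x ^ 2 = -(n : K) := by
  rw [← isSquare_algebraMap_iff_s9 (A := K), isSquare_iff_exists_sq]
  simp only [map_neg, map_natCast, eq_comm]

theorem neg_of_sq_eq_of_adjoin_eq_top [CharZero K] [IsTotallyComplex K] {x : K} {q : ℚ}
    (hx : x ^ 2 = algebraMap ℚ K q) (htop : ℚ⟮x⟯ = ⊤) : q < 0 := by
  by_contra! hq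
  have hsq : IsSquare (algebraMap ℚ ℝ q) := ⟨√q, by simp [hq]⟩
  obtain ⟨φ⟩ := nonempty_algHom_of_sq_eq_of_adjoin_eq_top hx htop hsq
  refine IsTotallyComplex.complexEmbedding_not_isReal (Complex.ofRealHom.comp φ.toRingHom) ?_
  rw [ComplexEmbedding.isReal_iff]
  ext
  simp

namespace ImaginaryQuadratic

variable [NumberField K] [Algebra.IsQuadraticExtension ℚ K] [IsTotallyComplex K]

theorem isSquare_of_isSquare_algebraMap_of_nonneg {q : ℚ} (hq : 0 ≤ q)
    (h : IsSquare (algebraMap ℚ K q)) : IsSquare q := by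
  obtain ⟨x, hx⟩ := h
  have := isSimpleOrder_of_finrank_prime ℚ K
    (Algebra.IsQuadraticExtension.finrank_eq_two ℚ K ▸ Nat.prime_two)
  have hbot : ℚ⟮x⟯ = ⊥ := (eq_bot_or_eq_top _).resolve_right fun htop ↦
    hq.not_gt (neg_of_sq_eq_of_adjoin_eq_top (by rw [hx, sq]) htop)
  obtain ⟨r, rfl⟩ := mem_bot.1 (adjoin_simple_eq_bot_iff.1 hbot)
  exact ⟨r, (algebraMap ℚ K).injective (by rw [hx, map_mul])⟩

variable (K) in
theorem exists_neg_isSquare_algebraMap : ∃ q : ℚ, q < 0 ∧ IsSquare (algebraMap ℚ K q) := by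
  have hdeg : Module.finrank ℚ K = 2 := Algebra.IsQuadraticExtension.finrank_eq_two ℚ K
  have hprim : (primitiveRoots (Module.finrank ℚ K) ℚ).Nonempty :=
    ⟨-1, by rw [hdeg, mem_primitiveRoots two_pos]; exact IsPrimitiveRoot.neg_one 0 (by norm_num)⟩
  obtain ⟨x, ⟨q, hq⟩, htop⟩ := exists_root_adjoin_eq_top_of_isCyclic ℚ K hprim
  rw [hdeg] at hq
  exact ⟨q, neg_of_sq_eq_of_adjoin_eq_top hq.symm htop, x, by rw [hq, sq]⟩

variable (K) in
theorem exists_squarefree_isSquare_neg_natCast : ∃ d : ℕ, Squarefree d ∧ IsSquare (-(d : 𝓞 K)) := by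
  obtain ⟨q, hq, hsq⟩ := exists_neg_isSquare_algebraMap K
  obtain ⟨d, hd, r, hr, hdr⟩ := exists_squarefree_mul_sq_eq (neg_pos.2 hq)
  refine ⟨d, hd, (isSquare_algebraMap_iff_s9 (A := K)).1 ?_⟩
  have hdq : -(d : ℚ) = q / r ^ 2 := by field_simp; linarith
  have hdK : algebraMap (𝓞 K) K (-d) = algebraMap ℚ K q / algebraMap ℚ K r ^ 2 := by
    rw [← map_pow, ← map_div₀, ← hdq]; simp
  rw [hdK]
  exact hsq.div (.sq _)

variable (K) in
theorem unitsRank_eq_zero : Units.rank K = 0 := by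
  have hplaces : 2 = 2 * InfinitePlace.nrComplexPlaces K := by
    rw [← IsTotallyComplex.finrank, Algebra.IsQuadraticExtension.finrank_eq_two]
  rw [Units.rank, InfinitePlace.card_eq_nrRealPlaces_add_nrComplexPlaces,
    IsTotallyComplex.nrRealPlaces_eq_zero]
  omega

theorem isOfFinOrder_units (u : (𝓞 K)ˣ) : IsOfFinOrder u := by
  have : IsEmpty (Fin (Units.rank K)) := by rw [unitsRank_eq_zero]; infer_instance
  have htors : Units.torsion K = ⊤ := by
    simpa [Set.range_eq_empty] using Units.closure_fundSystem_sup_torsion_eq_top K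
  have hu : u ∈ Units.torsion K := htors ▸ Subgroup.mem_top u
  exact (CommGroup.mem_torsion u).1 hu

theorem isSquare_neg_natCast_of_sq_eq_span_singleton (hodd : Odd (classNumber K))
    (hi : ¬IsSquare (-1 : 𝓞 K)) {n : ℕ} (hn : ¬IsSquare n) {I : Ideal (𝓞 K)}
    (hI : I ^ 2 = Ideal.span {(n : 𝓞 K)}) : IsSquare (-(n : 𝓞 K)) := by
  have hunits (u : (𝓞 K)ˣ) : IsSquare u ∨ IsSquare (-u) :=
    isSquare_or_isSquare_neg_of_isOfFinOrder hi (isOfFinOrder_units u)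
  have hsq := isSquare_or_isSquare_neg_of_sq_eq_span_singleton hodd hunits hI
  refine hsq.resolve_left fun h ↦ hn ?_
  rw [← Rat.isSquare_natCast_iff]
  refine isSquare_of_isSquare_algebraMap_of_nonneg (K := K) n.cast_nonneg ?_
  simpa using h.map (algebraMap (𝓞 K) K)

end ImaginaryQuadratic

end NumberField

/-- An imaginary quadratic number field with odd class number, other than `ℚ(i)` and
`ℚ(√-2)`, is `ℚ(√-p)` for some prime `p ≡ 3 (mod 4)`. -/
theorem imaginary_quadratic_oddClassNumber_eq_sqrt_neg_prime
    (K : Type*) [Field K] [NumberField K]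
    (hdeg : Module.finrank ℚ K = 2) (himag : IsEmpty (K →+* ℝ))
    (hodd : Odd (NumberField.classNumber K))
    (hi : ¬∃ x : K, x ^ 2 = -1) (h2 : ¬∃ x : K, x ^ 2 = -2) :
    ∃ p : ℕ, p.Prime ∧ p % 4 = 3 ∧ ∃ x : K, x ^ 2 = -(p : K) := by
  have : Algebra.IsQuadraticExtension ℚ K := ⟨hdeg⟩
  have : IsTotallyComplex K := isTotallyComplex_of_isEmpty_ringHom_real_s9 himag
  replace hi : ¬IsSquare (-1 : 𝓞 K) := by
    simpa using (isSquare_neg_natCast_ringOfIntegers_iff (n := 1)).not.2 (by simpa using hi)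
  replace h2 : ¬IsSquare (-((2 : ℕ) : 𝓞 K)) :=
    isSquare_neg_natCast_ringOfIntegers_iff.not.2 (by simpa using h2)
  have isSquare_neg_prime {q : ℕ} (hq : q.Prime)
      (hram : ∃ I : Ideal (𝓞 K), I ^ 2 = Ideal.span {(q : 𝓞 K)}) : IsSquare (-(q : 𝓞 K)) :=
    ImaginaryQuadratic.isSquare_neg_natCast_of_sq_eq_span_singleton hodd hi
      hq.prime.irreducible.not_isSquare hram.choose_spec
  obtain ⟨d, hd, hdsq⟩ := ImaginaryQuadratic.exists_squarefree_isSquare_neg_natCast K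
  have hd1 : d ≠ 1 := by rintro rfl; exact hi (by simpa using hdsq)
  obtain ⟨p, hp, hpd⟩ := Nat.exists_prime_and_dvd hd1
  have hpsq := isSquare_neg_prime hp (exists_ideal_sq_eq_span_natCast_of_dvd hd hpd hdsq)
  have hp2 : p ≠ 2 := by rintro rfl; exact h2 hpsq
  have hp1 : p % 4 ≠ 1 := fun h ↦
    h2 (isSquare_neg_prime Nat.prime_two (by exact_mod_cast exists_ideal_sq_eq_span_two h hpsq))
  have hp_odd := hp.eq_two_or_odd
  exact ⟨p, hp, by omega, isSquare_neg_natCast_ringOfIntegers_iff.1 hpsq⟩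
end

section
/- A real quadratic number field K (a number field of degree 2 over ℚ with two real embeddings) has odd class number, a unit of norm -1 in its ring of integers, and 2 unramified in K/ℚ if and only if K = ℚ(√p) for some prime number p with p ≡ 1 (mod 4); i.e. such fields K are exactly those containing an element x with x² = p for a prime p ≡ 1 (mod 4), and conversely for every prime p ≡ 1 (mod 4) the field ℚ(√p) has odd class number, a unit of norm -1, and 2 unramified. -/
open NumberField

/-!
Suppose the class number is odd, `2` is unramified and `u` is a unit of norm `-1` and trace `t`.
Then `(2u - t)² = t² + 4`, so `K = ℚ(√d)` with `d ∣ t² + 4` squarefree and `d ≠ 1`. A prime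
`p ∣ d` is ramified, `(p, √d)² = (p)`; hence `p ≠ 2`, and `p ≡ 1 (mod 4)` because `-4` is a square
modulo `p`. As the class number is odd, `(p, √d) = (α)` and `p ε = α²` for a unit `ε`, necessarily
of norm `1`. The discriminant `t² + 4` is positive, so `K` is real, its units are `± ηᵏ` with
`N η = -1`, and therefore `ε = ± v²`. The sign is `+` at a real place, which makes `p` a square.

Conversely let `p ≡ 1 (mod 4)` and `K = ℚ(√p)`. The discriminant of `(1 + √p) / 2` is `p`, so every
squarefree integer prime to `p`, in particular `2`, generates a squarefree ideal. The fundamental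
solution `x = 2r + 1`, `y = 2s` of Pell's equation satisfies `r (r + 1) = p s²`; minimality excludes
`p ∣ r`, and then `r = a²` and `r + 1 = p b²` give a unit `a + b √p` of norm `-1`. If `I²` is
principal, this unit lets us choose a generator `c` with `N c = m²`, `m` the absolute norm of `I`.
Now `(c + m)² = (Tr c + 2m) c` (an instance of Hilbert 90) moves `I` inside its class to an ideal
whose square is generated by a rational integer. Dividing such an ideal by rational integers and by
`√p` leaves the unit ideal, so it is principal, and the class group has no element of order `2`.
-/

section RankTwo

open Algebra

/-- Polarization of the Cayley–Hamilton identity `A² = (tr A) A - det A`. -/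
theorem matrix_mul_add_mul_fin_two {R : Type*} [CommRing R] (A B : Matrix (Fin 2) (Fin 2) R) :
    A * B + B * A =
      A.trace • B + B.trace • A + ((A * B).trace - A.trace * B.trace) • 1 := by
  ext i j
  fin_cases i <;> fin_cases j <;>
    simp [Matrix.mul_apply, Matrix.trace, Fin.sum_univ_two] <;> ring

variable {R S : Type*} [CommRing R] [CommRing S] [Algebra R S] [Module.Free R S]

section Nontrivial

variable [Nontrivial R]

theorem algebraMap_injective_of_finrank_eq_two (hrank : Module.finrank R S = 2) :
    Function.Injective (algebraMap R S) := by
  have : Nontrivial S := Module.nontrivial_of_finrank_pos (R := R) (by omega)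
  exact FaithfulSMul.algebraMap_injective R S

variable [Module.Finite R S]

theorem sq_eq_trace_mul_sub_norm (hrank : Module.finrank R S = 2) (y : S) :
    y ^ 2 = algebraMap R S (trace R S y) * y - algebraMap R S (norm R y) := by
  let b := Module.finBasisOfFinrankEq R S hrank
  have hcharpoly : Polynomial.aeval y (leftMulMatrix b y).charpoly = 0 :=
    leftMulMatrix_injective b <| by
      rw [← Polynomial.aeval_algHom_apply, Matrix.aeval_self_charpoly, map_zero]
  rw [Matrix.charpoly_fin_two, ← trace_eq_matrix_trace b, ← norm_eq_matrix_det b] at hcharpoly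
  simp only [map_add, map_sub, map_mul, map_pow, Polynomial.aeval_X, Polynomial.aeval_C]
    at hcharpoly
  linear_combination hcharpoly

theorem two_mul_sub_trace_mul (hrank : Module.finrank R S = 2) (w y : S) :
    (2 * w - algebraMap R S (trace R S w)) * y =
      algebraMap R S (trace R S (w * y)) -
        (algebraMap R S (trace R S w) - w) * algebraMap R S (trace R S y) := by
  let b := Module.finBasisOfFinrankEq R S hrank
  have hpolar : w * y + y * w = trace R S w • y + trace R S y • w +
      (trace R S (w * y) - trace R S w * trace R S y) • 1 := by
    apply leftMulMatrix_injective b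
    simpa only [map_add, map_mul, map_smul, map_one, trace_eq_matrix_trace b] using
      matrix_mul_add_mul_fin_two (leftMulMatrix b w) (leftMulMatrix b y)
  simp only [Algebra.smul_def, map_sub, map_mul, mul_one] at hpolar
  linear_combination hpolar

theorem trace_sq_eq (hrank : Module.finrank R S = 2) (y : S) :
    trace R S (y ^ 2) = trace R S y ^ 2 - 2 * norm R y := by
  rw [sq_eq_trace_mul_sub_norm hrank y, map_sub, ← Algebra.smul_def, map_smul, trace_algebraMap,
    hrank, smul_eq_mul, nsmul_eq_mul, Nat.cast_ofNat, sq]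

theorem dvd_trace_of_isRadical (hrank : Module.finrank R S = 2) {q : R} (hq : IsRadical q) {y : S}
    (hy : algebraMap R S q ∣ y ^ 2) : q ∣ trace R S y := by
  obtain ⟨z, hz⟩ := hy
  have hnorm : q ∣ norm R y := hq 2 _ <| by
    rw [← map_pow, hz, map_mul, Algebra.norm_algebraMap, hrank]
    exact (dvd_pow_self q two_ne_zero).mul_right _
  refine hq 2 _ ?_
  have htrace : trace R S y ^ 2 = q * trace R S z + 2 * norm R y := by
    rw [← smul_eq_mul q, ← map_smul, Algebra.smul_def, ← hz, trace_sq_eq hrank]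
    ring
  rw [htrace]
  exact dvd_add (dvd_mul_right _ _) (hnorm.mul_left _)

theorem isRadical_algebraMap_of_isCoprime (hrank : Module.finrank R S = 2) {q : R}
    (hq : IsRadical q) {w : S} (hw : IsCoprime q (trace R S w ^ 2 - 4 * norm R w)) :
    IsRadical (algebraMap R S q) := by
  refine (isRadical_iff_pow_one_lt 2 one_lt_two).mpr fun y hy ↦ ?_
  have htrace : algebraMap R S q ∣ algebraMap R S (trace R S y) :=
    map_dvd _ (dvd_trace_of_isRadical hrank hq hy)
  have htrace_mul : algebraMap R S q ∣ algebraMap R S (trace R S (w * y)) :=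
    map_dvd _ (dvd_trace_of_isRadical hrank hq (by rw [mul_pow]; exact hy.mul_left _))
  have hdiff : algebraMap R S q ∣ (2 * w - algebraMap R S (trace R S w)) * y := by
    rw [two_mul_sub_trace_mul hrank]
    exact dvd_sub htrace_mul (htrace.mul_left _)
  refine (hw.map (algebraMap R S)).dvd_of_dvd_mul_left ?_
  have hdiscr : algebraMap R S (trace R S w ^ 2 - 4 * norm R w) =
      (2 * w - algebraMap R S (trace R S w)) ^ 2 := by
    simp only [map_sub, map_pow, map_mul, map_ofNat]
    linear_combination -4 * sq_eq_trace_mul_sub_norm hrank w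
  rw [hdiscr, sq, mul_assoc]
  exact hdiff.mul_left _

theorem add_sq_eq_of_norm_eq_sq (hrank : Module.finrank R S = 2) {c : S} {m : R}
    (hc : norm R c = m ^ 2) :
    (c + algebraMap R S m) ^ 2 = algebraMap R S (trace R S c + 2 * m) * c := by
  have := sq_eq_trace_mul_sub_norm hrank c
  simp only [hc, map_pow] at this
  simp only [map_add, map_mul, map_ofNat]
  linear_combination this

end Nontrivial

theorem trace_eq_zero_of_sq_eq [IsDomain R] [IsIntegrallyClosed R] [Module.Finite R S]
    (hrank : Module.finrank R S = 2) {n : R} (hn : ¬IsSquare n) {x : S}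
    (hx : x ^ 2 = algebraMap R S n) : trace R S x = 0 := by
  have hquad := sq_eq_trace_mul_sub_norm hrank x
  have hsq : trace R S x ^ 2 * n = (n + norm R x) ^ 2 := by
    apply algebraMap_injective_of_finrank_eq_two hrank
    simp only [map_mul, map_pow, map_add, ← hx]
    linear_combination
      (-(x ^ 2 + algebraMap R S (norm R x)) - algebraMap R S (trace R S x) * x) * hquad
  by_contra htrace
  obtain ⟨r, hr⟩ : trace R S x ∣ n + norm R x :=
    (IsIntegrallyClosed.pow_dvd_pow_iff two_ne_zero).mp (Dvd.intro _ hsq)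
  refine hn ⟨r, mul_left_cancel₀ (pow_ne_zero 2 htrace) ?_⟩
  rw [hsq, hr]
  ring

theorem norm_add_mul_of_trace_eq_zero [Nontrivial R] [Module.Finite R S]
    (hrank : Module.finrank R S = 2) {n : R} {x : S} (hx : x ^ 2 = algebraMap R S n)
    (htrace : trace R S x = 0) (a b : R) :
    norm R (algebraMap R S a + algebraMap R S b * x) = a ^ 2 - n * b ^ 2 := by
  apply algebraMap_injective_of_finrank_eq_two hrank
  have hquad := sq_eq_trace_mul_sub_norm hrank (algebraMap R S a + algebraMap R S b * x)
  rw [map_add, ← Algebra.smul_def b, map_smul, htrace, smul_zero, add_zero, trace_algebraMap,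
    hrank, Algebra.smul_def b] at hquad
  simp only [nsmul_eq_mul, map_mul, Nat.cast_ofNat, map_ofNat] at hquad
  simp only [map_sub, map_pow, map_mul, ← hx]
  linear_combination hquad

theorem trace_sq_sub_four_mul_norm_eq [IsDomain R] [NeZero (2 : R)] [Module.Finite R S]
    (hrank : Module.finrank R S = 2) {n : R} {x w : S} (hx : x ^ 2 = algebraMap R S n)
    (htrace : trace R S x = 0) (hw : 2 * w = 1 + x) :
    trace R S w ^ 2 - 4 * norm R w = n := by
  have htrace_w : trace R S w = 1 := by
    have h2 : trace R S (2 * w) = 2 * trace R S w := by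
      rw [← map_ofNat (algebraMap R S) 2, ← Algebra.smul_def, map_smul, smul_eq_mul]
    have h1 : trace R S 1 = 2 := by
      rw [← map_one (algebraMap R S), trace_algebraMap, hrank, nsmul_one, Nat.cast_ofNat]
    rw [hw, map_add, h1, htrace, add_zero] at h2
    exact mul_left_cancel₀ two_ne_zero (h2.symm.trans (mul_one 2).symm)
  have hquad := sq_eq_trace_mul_sub_norm hrank w
  apply algebraMap_injective_of_finrank_eq_two hrank
  rw [htrace_w] at hquad ⊢
  simp only [map_sub, map_pow, map_mul, map_ofNat, map_one, ← hx] at hquad ⊢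
  linear_combination -4 * hquad + (2 * w - 1 + x) * hw

end RankTwo

section Ideals

theorem isPrincipal_of_mul_eq_span_singleton {R : Type*} [CommRing R] [IsDomain R]
    {I J : Ideal R} {b : R} (hb : b ≠ 0) (hIJ : I * J = Ideal.span {b}) (hJ : J.IsPrincipal) :
    I.IsPrincipal := by
  obtain ⟨g, hg⟩ := hJ.principal
  rw [Ideal.submodule_span_eq] at hg
  subst hg
  have hmem : b ∈ I * Ideal.span {g} := by rw [hIJ]; exact Ideal.mem_span_singleton_self b
  obtain ⟨a, rfl⟩ : g ∣ b := Ideal.mem_span_singleton.mp (Ideal.mul_le_right hmem)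
  refine ⟨⟨a, (Ideal.span_singleton_mul_right_inj (left_ne_zero_of_mul hb)).mp ?_⟩⟩
  rw [mul_comm, hIJ, Ideal.submodule_span_eq, Ideal.span_singleton_mul_span_singleton]

theorem span_pair_sq_eq_span_singleton_s10 {R : Type*} [CommRing R] {a e y : R} (hae : IsCoprime a e)
    (hy : y ^ 2 = a * e) : Ideal.span {a, y} ^ 2 = Ideal.span {a} := by
  obtain ⟨r, s, hrs⟩ := hae
  rw [sq, Ideal.span_pair_mul_span_pair]
  refine le_antisymm (Ideal.span_le.mpr ?_) ((Ideal.span_singleton_le_iff_mem _).mpr ?_)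
  · rintro z (rfl | rfl | rfl | rfl) <;> refine Ideal.mem_span_singleton.mpr ?_
    exacts [dvd_mul_right _ _, dvd_mul_right _ _, dvd_mul_left _ _, ⟨e, by rw [← hy, sq]⟩]
  · have hbezout : a = r * (a * a) + s * (y * y) := by
      linear_combination -a * hrs - s * hy
    rw [hbezout]
    exact add_mem (Ideal.mul_mem_left _ _ (Ideal.subset_span (by simp [← hbezout])))
      (Ideal.mul_mem_left _ _ (Ideal.subset_span (by simp)))

variable {R : Type*} [CommRing R]

theorem eq_top_of_sq_eq_of_squarefree {I J : Ideal R} (hJ : J ^ 2 = I) (hI : Squarefree I) :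
    J = ⊤ :=
  Ideal.isUnit_iff.mp (hI J (by rw [← hJ, sq]))

variable [IsDedekindDomain R]

theorem odd_card_classGroup_iff [Fintype (ClassGroup R)] :
    Odd (Fintype.card (ClassGroup R)) ↔ ∀ I : Ideal R, (I ^ 2).IsPrincipal → I.IsPrincipal := by
  refine ⟨fun hodd I hI ↦
    Ideal.IsPrincipal.of_isPrincipal_pow_of_coprime (Nat.coprime_two_left.mpr hodd) hI,
    fun hprincipal ↦ ?_⟩
  by_contra heven
  rw [Nat.not_odd_iff_even, even_iff_two_dvd] at heven
  obtain ⟨C, hC⟩ := exists_prime_orderOf_dvd_card 2 heven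
  obtain ⟨⟨I, hI⟩, rfl⟩ := ClassGroup.mk0_surjective C
  rw [orderOf_eq_prime_iff, ← map_pow, SubmonoidClass.mk_pow, Ne, ClassGroup.mk0_eq_one_iff,
    ClassGroup.mk0_eq_one_iff] at hC
  exact hC.2 (hprincipal I hC.1)

theorem squarefree_span_singleton {a : R} (ha0 : a ≠ 0) (ha : IsRadical a) :
    Squarefree (Ideal.span {a}) := by
  refine IsRadical.squarefree (by simpa using ha0) fun n J hJ ↦ ?_
  rw [Ideal.dvd_iff_le] at hJ ⊢
  exact fun y hy ↦ isRadical_iff_span_singleton.mp ha ⟨n, hJ (Ideal.pow_mem_pow hy n)⟩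

theorem exists_associated_sq_of_odd_card_classGroup [Fintype (ClassGroup R)]
    (hodd : Odd (Fintype.card (ClassGroup R))) {a e y : R} (hae : IsCoprime a e)
    (hy : y ^ 2 = a * e) : ∃ α : R, Associated a (α ^ 2) := by
  have hsq := span_pair_sq_eq_span_singleton_s10 hae hy
  obtain ⟨α, hα⟩ :=
    (odd_card_classGroup_iff.mp hodd (Ideal.span {a, y}) (by rw [hsq]; exact ⟨⟨a, rfl⟩⟩)).principal
  refine ⟨α, Ideal.span_singleton_eq_span_singleton.mp ?_⟩
  rw [← hsq, hα, Ideal.submodule_span_eq, Ideal.span_singleton_pow]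

theorem exists_eq_span_singleton_mul_of_sq_eq {a b : R} (ha : a ≠ 0) {J : Ideal R}
    (hJ : J ^ 2 = Ideal.span {a ^ 2 * b}) :
    ∃ J' : Ideal R, J = Ideal.span {a} * J' ∧ J' ^ 2 = Ideal.span {b} := by
  rw [← Ideal.span_singleton_mul_span_singleton, ← Ideal.span_singleton_pow] at hJ
  obtain ⟨J', rfl⟩ : Ideal.span {a} ∣ J :=
    (UniqueFactorizationMonoid.pow_dvd_pow_iff_dvd two_ne_zero).mp (Dvd.intro _ hJ.symm)
  refine ⟨J', rfl, mul_left_cancel₀ (pow_ne_zero 2 ?_) ((mul_pow _ _ _).symm.trans hJ)⟩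
  simpa using ha

theorem isPrincipal_of_sq_eq_span_natCast [CharZero R] {p : ℕ} (hp : p.Prime) {x : R}
    (hx : x ^ 2 = p)
    (hsqfree : ∀ k : ℕ, Squarefree k → k.Coprime p → Squarefree (Ideal.span {(k : R)}))
    {k : ℕ} (hk : k ≠ 0) {J : Ideal R} (hJ : J ^ 2 = Ideal.span {(k : R)}) : J.IsPrincipal := by
  obtain ⟨d, s, rfl, hd⟩ := Nat.sq_mul_squarefree k
  have hs0 : (s : R) ≠ 0 := Nat.cast_ne_zero.mpr (by rintro rfl; simp at hk)
  push_cast at hJ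
  obtain ⟨J', rfl, hJ'⟩ := exists_eq_span_singleton_mul_of_sq_eq hs0 hJ
  by_cases hpd : p ∣ d
  · obtain ⟨e, rfl⟩ := hpd
    have hx0 : x ≠ 0 := by
      rw [← pow_ne_zero_iff two_ne_zero, hx]
      exact Nat.cast_ne_zero.mpr hp.ne_zero
    rw [Nat.cast_mul, ← hx] at hJ'
    obtain ⟨J'', rfl, hJ''⟩ := exists_eq_span_singleton_mul_of_sq_eq hx0 hJ'
    have hcop : e.Coprime p := (Nat.coprime_of_squarefree_mul hd).symm
    rw [eq_top_of_sq_eq_of_squarefree hJ'' (hsqfree e hd.of_mul_right hcop), Ideal.mul_top,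
      Ideal.span_singleton_mul_span_singleton]
    exact ⟨⟨s * x, rfl⟩⟩
  · have hcop : d.Coprime p := (hp.coprime_iff_not_dvd.mpr hpd).symm
    rw [eq_top_of_sq_eq_of_squarefree hJ' (hsqfree d hd hcop), Ideal.mul_top]
    exact ⟨⟨s, rfl⟩⟩

end Ideals

section Pell

theorem odd_and_even_of_sq_sub_mul_sq_eq_one {d x y : ℤ} (hd : d % 4 = 1)
    (h : x ^ 2 - d * y ^ 2 = 1) : Odd x ∧ Even y := by
  have hmod : (x ^ 2 - y ^ 2) % 4 = 1 := by
    have : x ^ 2 - y ^ 2 = 1 + 4 * (d / 4 * y ^ 2) := by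
      linear_combination h - y ^ 2 * (Int.mul_ediv_add_emod d 4) + y ^ 2 * hd
    omega
  rcases Int.even_or_odd' x with ⟨i, rfl | rfl⟩ <;>
    rcases Int.even_or_odd' y with ⟨j, rfl | rfl⟩ <;>
    ring_nf at hmod <;> first | omega | exact ⟨odd_two_mul_add_one _, even_two_mul _⟩

theorem exists_eq_sq_of_isCoprime_of_mul_eq_sq {m n s : ℤ} (hm : 0 < m) (hmn : IsCoprime m n)
    (h : m * n = s ^ 2) : ∃ a, m = a ^ 2 := by
  obtain ⟨a, ha | ha⟩ := Int.sq_of_isCoprime hmn h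
  · exact ⟨a, ha⟩
  · nlinarith [sq_nonneg a]

theorem exists_eq_mul_sq_and_eq_sq {p m n s : ℤ} (hp : 0 < p) (hpm : p ∣ m)
    (hm : 0 < m) (hn : 0 < n) (hmn : IsCoprime m n) (h : m * n = p * s ^ 2) :
    ∃ a b, m = p * a ^ 2 ∧ n = b ^ 2 := by
  obtain ⟨m, rfl⟩ := hpm
  have hsq : m * n = s ^ 2 := mul_left_cancel₀ hp.ne' (by rw [← h, mul_assoc])
  have hcop : IsCoprime m n := hmn.of_mul_left_right
  obtain ⟨a, rfl⟩ := exists_eq_sq_of_isCoprime_of_mul_eq_sq (pos_of_mul_pos_right hm hp.le) hcop hsq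
  obtain ⟨b, rfl⟩ := exists_eq_sq_of_isCoprime_of_mul_eq_sq hn hcop.symm (by rw [mul_comm, hsq])
  exact ⟨a, b, rfl, rfl⟩

theorem not_eq_two_mul_add_one_of_isFundamental {d a b r : ℤ} {S : Pell.Solution₁ d}
    (hS : Pell.IsFundamental S) (hr : 0 < r) (ha : r = d * a ^ 2) (hb : r + 1 = b ^ 2) :
    S.x ≠ 2 * r + 1 := by
  intro hx
  have hab : |b| ^ 2 - d * a ^ 2 = 1 := by rw [sq_abs, ← hb, ← ha]; ring
  have hb_gt : 1 < |b| := by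
    rw [← one_lt_sq_iff_one_lt_abs, ← hb]
    omega
  obtain ⟨-, -, hminimal⟩ := hS
  have hle : S.x ≤ |b| := hminimal (b := Pell.Solution₁.mk _ _ hab) hb_gt
  nlinarith [sq_abs b]

theorem exists_sq_sub_mul_sq_eq_neg_one {p : ℕ} (hp : p.Prime) (hp4 : p % 4 = 1) :
    ∃ a b : ℤ, a ^ 2 - p * b ^ 2 = -1 := by
  have hpZ := Nat.prime_iff_prime_int.mp hp
  have hp0 : (0 : ℤ) < p := mod_cast hp.pos
  obtain ⟨S, hS⟩ := Pell.IsFundamental.exists_of_not_isSquare hp0 hpZ.irreducible.not_isSquare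
  obtain ⟨⟨r, hr⟩, ⟨s, hs⟩⟩ := odd_and_even_of_sq_sub_mul_sq_eq_one (by omega) S.prop
  have hr0 : 0 < r := by have := hS.1; omega
  have hrs : r * (r + 1) = p * s ^ 2 := by
    have := S.prop
    rw [hr, hs] at this
    linarith
  have hcop : IsCoprime r (r + 1) := ⟨-1, 1, by ring⟩
  rcases hpZ.dvd_or_dvd (Dvd.intro _ hrs.symm) with hdvd | hdvd
  · obtain ⟨a, b, ha, hb⟩ :=
      exists_eq_mul_sq_and_eq_sq hp0 hdvd hr0 (by omega) hcop hrs
    exact (not_eq_two_mul_add_one_of_isFundamental hS hr0 ha hb hr).elim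
  · obtain ⟨b, a, hb, ha⟩ :=
      exists_eq_mul_sq_and_eq_sq hp0 hdvd (by omega) hr0 hcop.symm (by rw [mul_comm, hrs])
    exact ⟨a, b, by rw [← ha, ← hb]; ring⟩

end Pell

section RankTwoIdeals

variable {R S : Type*} [CommRing R] [CommRing S] [IsDedekindDomain S] [Algebra R S]
  [Module.Free R S] [Module.Finite R S]

theorem squarefree_span_algebraMap [IsDomain R] [IsIntegrallyClosed R] [NeZero (2 : R)]
    (hrank : Module.finrank R S = 2) {n : R} (hn : ¬IsSquare n) {x w : S}
    (hx : x ^ 2 = algebraMap R S n) (hw : 2 * w = 1 + x) {k : R} (hk0 : k ≠ 0)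
    (hk : IsRadical k) (hkn : IsCoprime k n) : Squarefree (Ideal.span {algebraMap R S k}) := by
  have hdiscr := trace_sq_sub_four_mul_norm_eq hrank hx (trace_eq_zero_of_sq_eq hrank hn hx) hw
  refine squarefree_span_singleton ?_
    (isRadical_algebraMap_of_isCoprime hrank hk (w := w) (by rwa [hdiscr]))
  rwa [Ne, map_eq_zero_iff _ (algebraMap_injective_of_finrank_eq_two hrank)]

theorem exists_mul_eq_span_and_sq_eq_span [Nontrivial R] (hrank : Module.finrank R S = 2)
    {I : Ideal S} {c : S} (hI : I ^ 2 = Ideal.span {c}) {m : R} (hm : algebraMap R S m ∈ I)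
    (hc : Algebra.norm R c = m ^ 2) (hcm : c + algebraMap R S m ≠ 0) :
    ∃ (J : Ideal S) (k : R), k ≠ 0 ∧ I * J = Ideal.span {c + algebraMap R S m} ∧
      J ^ 2 = Ideal.span {algebraMap R S k} := by
  have hsq := add_sq_eq_of_norm_eq_sq hrank hc
  have hmul0 := hsq ▸ pow_ne_zero 2 hcm
  have hcI : c ∈ I := Ideal.pow_le_self two_ne_zero (hI ▸ Ideal.mem_span_singleton_self c)
  obtain ⟨J, hJ⟩ := Ideal.dvd_span_singleton.mpr (I.add_mem hcI hm)
  refine ⟨J, Algebra.trace R S c + 2 * m, fun hk ↦ left_ne_zero_of_mul hmul0 (by rw [hk, map_zero]),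
    hJ.symm, ?_⟩
  have hc0 : Ideal.span {c} ≠ 0 := by simpa using right_ne_zero_of_mul hmul0
  apply mul_left_cancel₀ hc0
  rw [← hI, ← mul_pow, ← hJ, Ideal.span_singleton_pow, hsq, hI,
    Ideal.span_singleton_mul_span_singleton, mul_comm]

end RankTwoIdeals

section SqrtPrime

variable {K : Type*} [Field K] [NumberField K]

theorem exists_sq_eq_and_two_mul_eq {n : ℤ} (hn : n % 4 = 1) {x : K} (hx : x ^ 2 = n) :
    ∃ X W : 𝓞 K, X ^ 2 = n ∧ 2 * W = 1 + X := by
  have hint_x : IsIntegral ℤ x := .of_pow two_pos (hx ▸ isIntegral_algebraMap (x := n))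
  have hint_w : IsIntegral ℤ ((1 + x) / 2) := by
    refine ⟨.X ^ 2 - .X - .C (n / 4), by monicity!, ?_⟩
    have hn4 : (n : K) = 4 * (n / 4 : ℤ) + 1 := by
      exact_mod_cast (hn ▸ Int.mul_ediv_add_emod n 4).symm
    rw [Polynomial.eval₂_sub, Polynomial.eval₂_sub, Polynomial.eval₂_X_pow, Polynomial.eval₂_X,
      Polynomial.eval₂_C, eq_intCast]
    linear_combination (hx + hn4) / 4
  obtain ⟨X, rfl⟩ := (IsIntegralClosure.isIntegral_iff (A := 𝓞 K)).mp hint_x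
  obtain ⟨W, hW⟩ := (IsIntegralClosure.isIntegral_iff (A := 𝓞 K)).mp hint_w
  refine ⟨X, W, RingOfIntegers.coe_injective ?_, RingOfIntegers.coe_injective ?_⟩
  · rw [map_pow, hx, map_intCast]
  · rw [map_mul, map_add, hW, map_ofNat, map_one, mul_div_cancel₀ _ two_ne_zero]

theorem not_exists_sq_eq_span_of_squarefree {q : ℕ} (hq : q ≠ 1)
    (hsqfree : Squarefree (Ideal.span {(q : 𝓞 K)})) :
    ¬∃ 𝔮 : Ideal (𝓞 K), 𝔮 ^ 2 = Ideal.span {(q : 𝓞 K)} := by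
  rintro ⟨𝔮, h𝔮⟩
  have habsNorm := congrArg Ideal.absNorm h𝔮
  rw [eq_top_of_sq_eq_of_squarefree h𝔮 hsqfree, map_pow, Ideal.absNorm_top, one_pow,
    Ideal.absNorm_span_natCast, eq_comm, Nat.pow_eq_one, RingOfIntegers.rank] at habsNorm
  exact habsNorm.elim hq Module.finrank_pos.ne'

theorem exists_unit_norm_eq_neg_one (hrank : Module.finrank ℤ (𝓞 K) = 2) {n a b : ℤ}
    (hn : ¬IsSquare n) {x : 𝓞 K} (hx : x ^ 2 = n) (hab : a ^ 2 - n * b ^ 2 = -1) :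
    ∃ u : (𝓞 K)ˣ, Algebra.norm ℤ (u : 𝓞 K) = -1 := by
  have hnorm : Algebra.norm ℤ ((a : 𝓞 K) + b * x) = -1 := by
    rw [← hab]
    exact norm_add_mul_of_trace_eq_zero hrank hx (trace_eq_zero_of_sq_eq hrank hn hx) a b
  have hunit : IsUnit ((a : 𝓞 K) + b * x) := by
    rw [← Ideal.span_singleton_eq_top, ← Ideal.absNorm_eq_one_iff, Ideal.absNorm_span_singleton,
      hnorm, Int.natAbs_neg, Int.natAbs_one]
  exact ⟨hunit.unit, hnorm⟩

theorem exists_sq_eq_span_and_norm_eq_sq {u : (𝓞 K)ˣ} (hu : Algebra.norm ℤ (u : 𝓞 K) = -1)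
    {I : Ideal (𝓞 K)} (hI : (I ^ 2).IsPrincipal) :
    ∃ c : 𝓞 K, I ^ 2 = Ideal.span {c} ∧ Algebra.norm ℤ c = (Ideal.absNorm I : ℤ) ^ 2 := by
  obtain ⟨c, hc⟩ := hI.principal
  rw [Ideal.submodule_span_eq] at hc
  have hnatAbs : (Algebra.norm ℤ c).natAbs = Ideal.absNorm I ^ 2 := by
    rw [← Ideal.absNorm_span_singleton, ← hc, map_pow]
  rcases Int.natAbs_eq (Algebra.norm ℤ c) with hpos | hneg
  · exact ⟨c, hc, by rw [hpos, hnatAbs, Nat.cast_pow]⟩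
  · refine ⟨c * u, by rw [hc, Ideal.span_singleton_mul_right_unit u.isUnit], ?_⟩
    rw [map_mul, hu, hneg, hnatAbs, Nat.cast_pow, neg_mul_neg, mul_one]

theorem odd_classNumber_of_norm_eq_neg_one (hrank : Module.finrank ℤ (𝓞 K) = 2)
    {u : (𝓞 K)ˣ} (hu : Algebra.norm ℤ (u : 𝓞 K) = -1)
    (hprincipal : ∀ k : ℕ, k ≠ 0 → ∀ J : Ideal (𝓞 K), J ^ 2 = Ideal.span {(k : 𝓞 K)} →
      J.IsPrincipal) : Odd (classNumber K) := by
  refine odd_card_classGroup_iff.mpr fun I hI ↦ ?_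
  rcases eq_or_ne I ⊥ with rfl | hI0
  · exact bot_isPrincipal
  obtain ⟨c, hc, hnorm⟩ := exists_sq_eq_span_and_norm_eq_sq hu hI
  by_cases hcm : c + (Ideal.absNorm I : 𝓞 K) = 0
  · refine hprincipal (Ideal.absNorm I) (Ideal.absNorm_eq_zero_iff.not.mpr hI0) I ?_
    rw [hc, eq_neg_of_add_eq_zero_left hcm, Ideal.span_singleton_neg]
  · obtain ⟨J, k, hk0, hIJ, hJ⟩ := exists_mul_eq_span_and_sq_eq_span hrank hc
      (m := (Ideal.absNorm I : ℤ)) (by simpa using Ideal.absNorm_mem I) hnorm (by simpa using hcm)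
    refine isPrincipal_of_mul_eq_span_singleton (by simpa using hcm) hIJ
      (hprincipal k.natAbs (by simpa using hk0) J ?_)
    rw [hJ, ← Int.cast_natCast k.natAbs, Ideal.span_singleton_eq_span_singleton]
    exact (Int.associated_natAbs k).map (algebraMap ℤ (𝓞 K))

theorem squarefree_span_natCast (hrank : Module.finrank ℤ (𝓞 K) = 2) {n : ℤ}
    (hn : ¬IsSquare n) {x w : 𝓞 K} (hx : x ^ 2 = n) (hw : 2 * w = 1 + x) {k : ℕ}
    (hk : Squarefree k) (hkn : IsCoprime (k : ℤ) n) : Squarefree (Ideal.span {(k : 𝓞 K)}) := by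
  simpa only [eq_intCast, Int.cast_natCast] using
    squarefree_span_algebraMap hrank hn hx hw (Int.natCast_ne_zero.mpr hk.ne_zero)
      (Int.squarefree_natCast.mpr hk).isRadical hkn

theorem odd_classNumber_and_unit_and_unramified_of_sq_eq_prime (hdeg : Module.finrank ℚ K = 2)
    {p : ℕ} (hp : p.Prime) (hp4 : p % 4 = 1) {x : K} (hx : x ^ 2 = p) :
    Odd (classNumber K) ∧ (∃ u : (𝓞 K)ˣ, Algebra.norm ℤ (u : 𝓞 K) = -1) ∧
      ¬∃ 𝔮 : Ideal (𝓞 K), 𝔮 ^ 2 = Ideal.span {(2 : 𝓞 K)} := by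
  have hrank : Module.finrank ℤ (𝓞 K) = 2 := (RingOfIntegers.rank K).trans hdeg
  have hnsq : ¬IsSquare (p : ℤ) := (Nat.prime_iff_prime_int.mp hp).irreducible.not_isSquare
  obtain ⟨X, W, hX, hW⟩ :=
    exists_sq_eq_and_two_mul_eq (K := K) (n := p) (by omega) (by rw [hx, Int.cast_natCast])
  have hsqfree (k : ℕ) (hk : Squarefree k) (hkp : k.Coprime p) :
      Squarefree (Ideal.span {(k : 𝓞 K)}) :=
    squarefree_span_natCast hrank hnsq hX hW hk (Nat.isCoprime_iff_coprime.mpr hkp)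
  obtain ⟨a, b, hab⟩ := exists_sq_sub_mul_sq_eq_neg_one hp hp4
  obtain ⟨u, hu⟩ := exists_unit_norm_eq_neg_one hrank hnsq hX hab
  refine ⟨odd_classNumber_of_norm_eq_neg_one hrank hu fun k hk J hJ ↦ ?_, ⟨u, hu⟩, ?_⟩
  · exact isPrincipal_of_sq_eq_span_natCast hp (by simpa using hX) hsqfree hk hJ
  · have hcop : Nat.Coprime 2 p := Nat.coprime_two_left.mpr (Nat.odd_iff.mpr (by omega))
    exact_mod_cast not_exists_sq_eq_span_of_squarefree (by decide)
      (hsqfree 2 Nat.prime_two.prime.squarefree hcop)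

end SqrtPrime

section RealEmbeddings

open ComplexConjugate

variable {K : Type*} [Field K] [NumberField K]

theorem conj_eq_self_of_sq_eq_ofReal {z : ℂ} {r : ℝ} (hr : 0 ≤ r) (hz : z ^ 2 = r) :
    conj z = z := by
  have hsqrt : z ^ 2 = (√r : ℂ) ^ 2 := by rw [hz, ← Complex.ofReal_pow, Real.sq_sqrt hr]
  rcases sq_eq_sq_iff_eq_or_eq_neg.mp hsqrt with rfl | rfl
  · exact Complex.conj_ofReal _
  · rw [map_neg, Complex.conj_ofReal]

theorem isReal_of_trace_sq_sub_four_mul_norm_pos (hdeg : Module.finrank ℚ K = 2) {w : K}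
    (hw : 0 < Algebra.trace ℚ K w ^ 2 - 4 * Algebra.norm ℚ w) (φ : K →+* ℂ) :
    ComplexEmbedding.IsReal φ := by
  set t := Algebra.trace ℚ K w
  set D := t ^ 2 - 4 * Algebra.norm ℚ w
  set z := φ (2 * w - algebraMap ℚ K t) with hz
  have hz_sq : z ^ 2 = ((D : ℝ) : ℂ) := by
    rw [← map_pow, Complex.ofReal_ratCast, ← map_ratCast φ, ← eq_ratCast (algebraMap ℚ K)]
    congr 1
    simp only [D, map_sub, map_pow, map_mul, map_ofNat]
    linear_combination 4 * sq_eq_trace_mul_sub_norm hdeg w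
  have hz_conj : conj z = z := conj_eq_self_of_sq_eq_ofReal (by exact_mod_cast hw.le) hz_sq
  have hz0 : z ≠ 0 := by
    rw [← pow_ne_zero_iff two_ne_zero, hz_sq]
    exact_mod_cast hw.ne'
  have hw_eq : φ w = (z + t) / 2 := by
    rw [hz, map_sub, map_mul, map_ofNat, eq_ratCast, map_ratCast]
    ring
  refine RingHom.ext fun y ↦ mul_left_cancel₀ hz0 ?_
  have hy : z * φ y = Algebra.trace ℚ K (w * y) - (t - φ w) * Algebra.trace ℚ K y := by
    rw [hz, ← map_mul, two_mul_sub_trace_mul hdeg w y]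
    simp only [map_sub, map_mul, eq_ratCast, map_ratCast, t]
  calc z * conj (φ y) = conj (z * φ y) := by rw [map_mul, hz_conj]
    _ = z * φ y := by
      simp only [hy, hw_eq, map_sub, map_mul, map_div₀, map_add, map_ofNat, map_ratCast, hz_conj]

theorem nonempty_ringHom_real_of_norm_neg (hdeg : Module.finrank ℚ K = 2) {w : K}
    (hw : Algebra.norm ℚ w < 0) : Nonempty (K →+* ℝ) := by
  have hdiscr : 0 < Algebra.trace ℚ K w ^ 2 - 4 * Algebra.norm ℚ w := by
    linarith [sq_nonneg (Algebra.trace ℚ K w)]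
  obtain ⟨φ⟩ : Nonempty (K →+* ℂ) := inferInstance
  exact ⟨(isReal_of_trace_sq_sub_four_mul_norm_pos hdeg hdiscr φ).embedding⟩

theorem eq_one_or_neg_one_of_mem_torsion (φ : K →+* ℝ) {ζ : (𝓞 K)ˣ}
    (hζ : ζ ∈ Units.torsion K) : ζ = 1 ∨ ζ = -1 := by
  have habs : |φ ζ| = 1 := by
    simpa [InfinitePlace.apply] using
      (Units.mem_torsion K).mp hζ (InfinitePlace.mk (Complex.ofRealHom.comp φ))
  refine (eq_or_eq_neg_of_abs_eq habs).imp (fun h ↦ ?_) fun h ↦ ?_ <;>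
    exact Units.ext (RingOfIntegers.coe_injective (φ.injective (by simpa using h)))

end RealEmbeddings

section Units

variable {K : Type*} [Field K] [NumberField K]

theorem exists_forall_eq_torsion_mul_zpow (hrank : Units.rank K ≤ 1) :
    ∃ η : (𝓞 K)ˣ, ∀ u : (𝓞 K)ˣ, ∃ ζ ∈ Units.torsion K, ∃ k : ℤ, u = ζ * η ^ k := by
  have hsub : Subsingleton (Fin (Units.rank K)) := Fin.subsingleton_iff_le_one.mpr hrank
  rcases isEmpty_or_nonempty (Fin (Units.rank K)) with hempty | ⟨⟨i⟩⟩
  · refine ⟨1, fun u ↦ ?_⟩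
    obtain ⟨⟨ζ, e⟩, hu, -⟩ := Units.exist_unique_eq_mul_prod K u
    exact ⟨ζ, ζ.2, 0, by simpa using hu⟩
  · refine ⟨Units.fundSystem K i, fun u ↦ ?_⟩
    obtain ⟨⟨ζ, e⟩, hu, -⟩ := Units.exist_unique_eq_mul_prod K u
    exact ⟨ζ, ζ.2, e i, by rw [hu, Fintype.prod_subsingleton _ i]⟩

theorem exists_eq_torsion_mul_sq (hrank : Units.rank K ≤ 1) (χ : (𝓞 K)ˣ →* ℤˣ)
    (hχ : ∀ ζ ∈ Units.torsion K, χ ζ = 1) {u ε : (𝓞 K)ˣ} (hu : χ u = -1) (hε : χ ε = 1) :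
    ∃ ζ ∈ Units.torsion K, ∃ v, ε = ζ * v ^ 2 := by
  obtain ⟨η, hη⟩ := exists_forall_eq_torsion_mul_zpow hrank
  have hχη : χ η = -1 := by
    obtain ⟨ζ, hζ, j, rfl⟩ := hη u
    refine (Int.units_eq_one_or (χ η)).resolve_left fun h ↦ ?_
    rw [map_mul, hχ ζ hζ, map_zpow, h, one_zpow, one_mul] at hu
    exact absurd hu (by decide)
  obtain ⟨ζ, hζ, k, rfl⟩ := hη ε
  rw [map_mul, hχ ζ hζ, map_zpow, hχη, one_mul] at hε
  have hk : Even k := by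
    by_contra hodd
    rw [(Int.not_even_iff_odd.mp hodd).neg_one_zpow] at hε
    exact absurd hε (by decide)
  obtain ⟨l, rfl⟩ := hk
  exact ⟨ζ, hζ, η ^ l, by rw [zpow_add, sq]⟩

theorem unitsRank_lt_finrank : Units.rank K < Module.finrank ℚ K := by
  have hdegree := InfinitePlace.card_add_two_mul_card_eq_rank K
  have hplaces := InfinitePlace.card_eq_nrRealPlaces_add_nrComplexPlaces K
  have hpos : 0 < Module.finrank ℚ K := Module.finrank_pos
  rw [Units.rank]
  omega

end Units

section UnitOfNormNegOne

theorem exists_squarefree_sq_eq_of_sq_eq_natCast {S : Type*} [CommRing S] [IsDomain S]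
    [IsIntegrallyClosed S] [CharZero S] {n : ℕ} (hn : n ≠ 0) {z : S} (hz : z ^ 2 = n) :
    ∃ d s : ℕ, Squarefree d ∧ s ^ 2 * d = n ∧ ∃ y : S, y ^ 2 = d ∧ z = s * y := by
  obtain ⟨d, s, rfl, hd⟩ := Nat.sq_mul_squarefree n
  have hs0 : (s : S) ≠ 0 := Nat.cast_ne_zero.mpr (by rintro rfl; simp at hn)
  rw [Nat.cast_mul, Nat.cast_pow] at hz
  obtain ⟨y, rfl⟩ : (s : S) ∣ z :=
    (IsIntegrallyClosed.pow_dvd_pow_iff two_ne_zero).mp (Dvd.intro _ hz.symm)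
  exact ⟨d, s, hd, rfl, y, mul_left_cancel₀ (pow_ne_zero 2 hs0) (by rw [← mul_pow, hz]), rfl⟩

theorem exists_squarefree_sq_eq_of_norm_eq_neg_one {S : Type*} [CommRing S] [IsDomain S]
    [IsIntegrallyClosed S] [Module.Free ℤ S] [Module.Finite ℤ S]
    (hrank : Module.finrank ℤ S = 2) {u : S} (hu : Algebra.norm ℤ u = -1) :
    ∃ d : ℕ, Squarefree d ∧ d ≠ 1 ∧ (d : ℤ) ∣ Algebra.trace ℤ S u ^ 2 + 4 ∧
      ∃ y : S, y ^ 2 = d := by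
  have : CharZero S :=
    charZero_of_injective_algebraMap (algebraMap_injective_of_finrank_eq_two hrank)
  set t := Algebra.trace ℤ S u
  have hnat : ((t.natAbs ^ 2 + 4 : ℕ) : ℤ) = t ^ 2 + 4 := by
    push_cast
    rw [sq_abs]
  have hz : (2 * u - (t : S)) ^ 2 = (t.natAbs ^ 2 + 4 : ℕ) := by
    have hquad := sq_eq_trace_mul_sub_norm hrank u
    rw [hu] at hquad
    rw [← Int.cast_natCast, hnat]
    push_cast at hquad ⊢
    linear_combination 4 * hquad
  obtain ⟨d, s, hd, hsd, y, hy, hzy⟩ :=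
    exists_squarefree_sq_eq_of_sq_eq_natCast (by positivity) hz
  refine ⟨d, hd, ?_, hnat ▸ Int.natCast_dvd_natCast.mpr (Dvd.intro_left _ hsd), y, hy⟩
  rintro rfl
  obtain ⟨r, hr⟩ : ∃ r : ℤ, algebraMap ℤ S 2 * u = algebraMap ℤ S r := by
    rw [Nat.cast_one, sq_eq_one_iff] at hy
    rw [map_ofNat]
    rcases hy with rfl | rfl
    · exact ⟨t + s, by push_cast; linear_combination hzy⟩
    · exact ⟨t - s, by push_cast; linear_combination hzy⟩
  have hnorm := congrArg (Algebra.norm ℤ) hr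
  rw [map_mul, Algebra.norm_algebraMap, Algebra.norm_algebraMap, hrank, hu] at hnorm
  nlinarith [sq_nonneg r]

theorem mod_four_eq_one_of_dvd_sq_add_four {p : ℕ} (hp : p.Prime) (hp2 : p ≠ 2) {t : ℤ}
    (hdvd : (p : ℤ) ∣ t ^ 2 + 4) : p % 4 = 1 := by
  have : Fact p.Prime := ⟨hp⟩
  have hsq : (t : ZMod p) ^ 2 = -2 ^ 2 := by
    have hzero := (ZMod.intCast_zmod_eq_zero_iff_dvd _ p).mpr hdvd
    push_cast at hzero
    linear_combination hzero
  have htwo : (2 : ZMod p) ≠ 0 := Ring.two_ne_zero (by rwa [ZMod.ringChar_zmod_n])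
  have hmod := ZMod.mod_four_ne_three_of_sq_eq_neg_sq' htwo hsq
  have hodd := hp.eq_two_or_odd
  omega

variable {K : Type*} [Field K] [NumberField K]

theorem norm_eq_one_of_natCast_mul_eq_sq (heven : Even (Module.finrank ℤ (𝓞 K))) {n : ℕ}
    (hn : n ≠ 0) {ε : (𝓞 K)ˣ} {α : 𝓞 K} (hα : (n : 𝓞 K) * ε = α ^ 2) :
    Units.map (Algebra.norm ℤ) ε = 1 := by
  refine (Int.units_eq_one_or _).resolve_right fun hneg ↦ ?_
  have hnorm : (n : ℤ) ^ Module.finrank ℤ (𝓞 K) * Algebra.norm ℤ (ε : 𝓞 K) =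
      Algebra.norm ℤ α ^ 2 := by
    rw [← map_pow, ← hα, map_mul, ← Algebra.norm_algebraMap, map_natCast]
  have hε : Algebra.norm ℤ (ε : 𝓞 K) = -1 := congrArg Units.val hneg
  rw [hε] at hnorm
  have hpow : 0 < (n : ℤ) ^ Module.finrank ℤ (𝓞 K) := heven.pow_pos (by exact_mod_cast hn)
  nlinarith [sq_nonneg (Algebra.norm ℤ α)]

theorem exists_sq_eq_of_associated_sq (hdeg : Module.finrank ℚ K = 2) (φ : K →+* ℝ)
    {u : (𝓞 K)ˣ} (hu : Algebra.norm ℤ (u : 𝓞 K) = -1) {n : ℕ} (hn : n ≠ 0) {α : 𝓞 K}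
    (hα : Associated (n : 𝓞 K) (α ^ 2)) : ∃ x : 𝓞 K, x ^ 2 = n := by
  have hrank : Module.finrank ℤ (𝓞 K) = 2 := (RingOfIntegers.rank K).trans hdeg
  obtain ⟨ε, hε⟩ := hα
  have hχ : ∀ ζ ∈ Units.torsion K, Units.map (Algebra.norm ℤ) ζ = 1 := by
    intro ζ hζ
    rcases eq_one_or_neg_one_of_mem_torsion φ hζ with rfl | rfl
    · exact map_one _
    · refine Units.ext ?_
      simpa [hrank] using Algebra.norm_algebraMap (S := 𝓞 K) (-1 : ℤ)
  obtain ⟨ζ, hζ, v, rfl⟩ := exists_eq_torsion_mul_sq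
    (Nat.le_of_lt_succ (unitsRank_lt_finrank.trans_eq hdeg)) (Units.map (Algebra.norm ℤ)) hχ
    (Units.ext hu) (norm_eq_one_of_natCast_mul_eq_sq (hrank ▸ even_two) hn hε)
  have hx : (α * ↑v⁻¹) ^ 2 = n * (ζ : 𝓞 K) := by
    rw [mul_pow, ← hε, Units.val_mul, Units.val_pow_eq_pow_val, mul_assoc, mul_assoc, ← mul_pow,
      Units.mul_inv, one_pow, mul_one]
  refine ⟨α * ↑v⁻¹, ?_⟩
  rcases eq_one_or_neg_one_of_mem_torsion φ hζ with rfl | rfl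
  · simpa using hx
  · have hφ := congrArg (fun a : 𝓞 K ↦ φ a) hx
    simp only [map_pow, map_mul, map_natCast, Units.val_neg, Units.val_one, map_neg, map_one] at hφ
    have hn_pos : (0 : ℝ) < n := by exact_mod_cast Nat.pos_of_ne_zero hn
    nlinarith [sq_nonneg (φ α * φ ↑(↑v⁻¹ : 𝓞 K))]

theorem exists_prime_sq_eq_of_odd_classNumber (hdeg : Module.finrank ℚ K = 2)
    (hodd : Odd (classNumber K)) {u : (𝓞 K)ˣ} (hu : Algebra.norm ℤ (u : 𝓞 K) = -1)
    (hunram : ¬∃ 𝔮 : Ideal (𝓞 K), 𝔮 ^ 2 = Ideal.span {(2 : 𝓞 K)}) :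
    ∃ p : ℕ, p.Prime ∧ p % 4 = 1 ∧ ∃ x : 𝓞 K, x ^ 2 = p := by
  have hrank : Module.finrank ℤ (𝓞 K) = 2 := (RingOfIntegers.rank K).trans hdeg
  obtain ⟨d, hd, hd1, hdvd, y, hy⟩ := exists_squarefree_sq_eq_of_norm_eq_neg_one hrank hu
  obtain ⟨p, hp, e, rfl⟩ := Nat.exists_prime_and_dvd hd1
  have hcop : IsCoprime (p : 𝓞 K) e := (Nat.coprime_of_squarefree_mul hd).cast
  rw [Nat.cast_mul] at hy
  have hp2 : p ≠ 2 := by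
    rintro rfl
    exact hunram ⟨_, span_pair_sq_eq_span_singleton_s10 hcop hy⟩
  obtain ⟨φ⟩ : Nonempty (K →+* ℝ) :=
    nonempty_ringHom_real_of_norm_neg hdeg (w := u) (by rw [← Algebra.coe_norm_int, hu]; norm_num)
  obtain ⟨α, hα⟩ := exists_associated_sq_of_odd_card_classGroup hodd hcop hy
  rw [Nat.cast_mul] at hdvd
  exact ⟨p, hp, mod_four_eq_one_of_dvd_sq_add_four hp hp2 (dvd_of_mul_right_dvd hdvd),
    exists_sq_eq_of_associated_sq hdeg φ hu hp.ne_zero hα⟩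

end UnitOfNormNegOne

theorem real_quadratic_oddClassNumber_unit_norm_neg_one_iff_general
    (K : Type*) [Field K] [NumberField K] (hdeg : Module.finrank ℚ K = 2) :
    (Odd (NumberField.classNumber K) ∧
      (∃ u : (𝓞 K)ˣ, Algebra.norm ℚ ((u : 𝓞 K) : K) = -1) ∧
      ¬∃ 𝔮 : Ideal (𝓞 K), 𝔮 ^ 2 = Ideal.span {(2 : 𝓞 K)}) ↔
    ∃ p : ℕ, p.Prime ∧ p % 4 = 1 ∧ ∃ x : K, x ^ 2 = (p : K) := by
  have hnorm (u : (𝓞 K)ˣ) :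
      Algebra.norm ℚ ((u : 𝓞 K) : K) = -1 ↔ Algebra.norm ℤ (u : 𝓞 K) = -1 := by
    rw [← Algebra.coe_norm_int]
    norm_cast
  simp only [hnorm]
  constructor
  · rintro ⟨hodd, ⟨u, hu⟩, hunram⟩
    obtain ⟨p, hp, hp4, x, hx⟩ := exists_prime_sq_eq_of_odd_classNumber hdeg hodd hu hunram
    exact ⟨p, hp, hp4, x, by rw [← map_pow, hx, map_natCast]⟩
  · rintro ⟨p, hp, hp4, x, hx⟩
    exact odd_classNumber_and_unit_and_unramified_of_sq_eq_prime hdeg hp hp4 hx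

/-- A real quadratic number field has odd class number, a unit of norm `-1`, and 2
unramified, if and only if it is `ℚ(√p)` for a prime `p ≡ 1 (mod 4)`. -/
theorem real_quadratic_oddClassNumber_unit_norm_neg_one_iff
    (K : Type*) [Field K] [NumberField K]
    (hdeg : Module.finrank ℚ K = 2) (hreal : Nat.card (K →+* ℝ) = 2) :
    (Odd (NumberField.classNumber K) ∧
      (∃ u : (𝓞 K)ˣ, Algebra.norm ℚ ((u : 𝓞 K) : K) = -1) ∧
      ¬∃ 𝔮 : Ideal (𝓞 K), 𝔮 ^ 2 = Ideal.span {(2 : 𝓞 K)}) ↔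
    ∃ p : ℕ, p.Prime ∧ p % 4 = 1 ∧ ∃ x : K, x ^ 2 = (p : K) :=
  real_quadratic_oddClassNumber_unit_norm_neg_one_iff_general K hdeg
end
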